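/- arXiv:1104.0034 — 2 statements merged into one kernel-verified Lean document; each statement's English description precedes it below -/
import Mathlib

section
/- Let f ∈ B_ℝ and σ ∈ Σ₀(f). Then the following are equivalent: (i) f satisfies the sector condition at σ∞; (ii) for every compact set K ⊂ ℂ there exist ϑ > 0 and R > 0 such that f⁻¹(K) ∩ S_{σ,ϑ,R} = ∅; (iii) there exists a point w in the unbounded connected component of ℂ∖S(f) and ϑ′ > 0, R′ > 0 such that f⁻¹(w) ∩ S_{σ,ϑ′,R′} = ∅. Here S_{σ,ϑ,R} := {σx + iy ∈ ℂ : x > R, y ∈ ℝ, |y| < ϑx} denotes a truncated sector. -/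
/-!
Formalization of: "Absence of wandering domains for functions in class B whose
singular values escape uniformly, under a thickness condition along an invariant set A."
-/

open Set Metric Filter Topology

/-- The chordal (spherical) distance between two finite points of the Riemann sphere. -/
noncomputable def sphericalDist (z w : ℂ) : ℝ :=
  2 * dist z w / (Real.sqrt (1 + ‖z‖ ^ 2) * Real.sqrt (1 + ‖w‖ ^ 2))

/-- A transcendental entire function: entire and not a polynomial. -/
def TranscendentalEntire (f : ℂ → ℂ) : Prop :=
  Differentiable ℂ f ∧ ¬∃ p : Polynomial ℂ, ∀ z : ℂ, f z = p.eval z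

/-- `S` is the set of singular values of `f`: the smallest closed set `S ⊆ ℂ` such that
`f : ℂ ∖ f⁻¹(S) → ℂ ∖ S` is a covering map. -/
def IsSingularValueSet (f : ℂ → ℂ) (S : Set ℂ) : Prop :=
  IsClosed S ∧ IsCoveringMapOn f Sᶜ ∧
    ∀ T : Set ℂ, IsClosed T → IsCoveringMapOn f Tᶜ → S ⊆ T

/-- The Fatou set of an entire function: points having a neighbourhood on which the family of
iterates is equicontinuous with respect to the spherical metric. -/
def FatouSet (f : ℂ → ℂ) : Set ℂ :=
  {z : ℂ | ∃ N : Set ℂ, IsOpen N ∧ z ∈ N ∧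
    ∀ x ∈ N, ∀ ε > (0 : ℝ), ∃ δ > (0 : ℝ), ∀ y ∈ N, dist y x < δ →
      ∀ n : ℕ, sphericalDist (f^[n] y) (f^[n] x) < ε}

/-- A wandering domain: a connected component `W` of the Fatou set whose forward images are
pairwise disjoint. -/
def IsWanderingDomain (f : ℂ → ℂ) (W : Set ℂ) : Prop :=
  (∃ z ∈ FatouSet f, W = connectedComponentIn (FatouSet f) z) ∧
    ∀ m n : ℕ, m ≠ n → f^[m] '' W ∩ f^[n] '' W = ∅


/-- `f` satisfies the (real) sector condition at `σ∞`: for all sufficiently large `R > 0`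
there are `ϑ > 0` and `R' > 0` with `|f(σx + y)| > R` whenever `x > R'` and `|y| < ϑx`. -/
def SectorCondAt (f : ℂ → ℂ) (σ : ℝ) : Prop :=
  ∃ R₀ > (0 : ℝ), ∀ R ≥ R₀, ∃ ϑ > (0 : ℝ), ∃ R' > (0 : ℝ), ∀ x : ℝ, R' < x →
    ∀ y : ℂ, ‖y‖ < ϑ * x → R < ‖f ((σ * x : ℝ) + y)‖

/-- The truncated sector `S_{σ,ϑ,R} = {σx + iy : x > R, |y| < ϑx}`. -/
def TruncSector (σ ϑ R : ℝ) : Set ℂ :=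
  {z : ℂ | R < σ * z.re ∧ |z.im| < ϑ * (σ * z.re)}

/-!
Both the sector condition and its formulation by compact sets say that `f → ∞` along the filter of
truncated sectors about the ray `σ[0,∞)`.

Suppose that a regular value `v₀` is a cluster value of `f` along this filter, and let `g` be the
branch of `f⁻¹` near `v₀` sending `f z` to `z`, for `z` in a thin sector far out. Since `|f|` is
large on the ray `σ[x₀,∞)`, the branch `g` omits that ray, so `√(x₀ - σ g)` maps a fixed ball into
the right half-plane. The Borel–Carathéodory estimate for this root at `f z`, whose real part is
small when `z` is close to the ray, gives `|g(v) - z| ≤ 6 |Im z|` after squaring. Displacements of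
order `|Im z|` do not leave the family of sectors, so all values near `v₀` are assumed in every
sector. The cluster set is therefore clopen in the regular values, and if it misses one point of
the unbounded component it misses all large circles. A sector is connected and `f → ∞` on its axis,
so `|f| ≠ N` on a sector forces `|f| > N` there.
-/

section SectorFilter

variable {σ : ℝ}

/-- The filter of neighbourhoods of `σ∞` generated by the truncated sectors about the ray `σ[0,∞)`.
Convergence along it is what the paper expresses by shrinking the opening `ϑ` and enlarging the
radius `R`. -/
def sectorFilter (σ : ℝ) : Filter ℂ :=
  ⨅ (p : ℝ × ℝ) (_ : 0 < p.1 ∧ 0 < p.2), 𝓟 (TruncSector σ p.1 p.2)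

lemma truncSector_subset_truncSector {ϑ ϑ' R R' : ℝ} (hϑ : ϑ ≤ ϑ') (hR' : 0 ≤ R') (hR : R' ≤ R) :
    TruncSector σ ϑ R ⊆ TruncSector σ ϑ' R' := fun z ⟨hre, him⟩ =>
  ⟨hR.trans_lt hre, him.trans_le (mul_le_mul_of_nonneg_right hϑ (by linarith))⟩

lemma convex_truncSector (σ ϑ R : ℝ) : Convex ℝ (TruncSector σ ϑ R) := by
  refine convex_iff_forall_pos.2 fun z ⟨hzre, hzim⟩ w ⟨hwre, hwim⟩ a b ha hb hab => ?_
  rw [abs_lt] at hzim hwim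
  simp only [TruncSector, mem_ofPred_eq, Complex.add_re, Complex.smul_re, Complex.add_im,
    Complex.smul_im, smul_eq_mul, abs_lt]
  obtain rfl : b = 1 - a := by linarith
  refine ⟨?_, ?_, ?_⟩ <;> nlinarith

lemma hasBasis_sectorFilter (σ : ℝ) :
    (sectorFilter σ).HasBasis (fun p : ℝ × ℝ => 0 < p.1 ∧ 0 < p.2)
      fun p => TruncSector σ p.1 p.2 :=
  hasBasis_biInf_principal'
    (fun p hp q hq => ⟨(min p.1 q.1, max p.2 q.2), ⟨lt_min hp.1 hq.1, lt_max_of_lt_left hp.2⟩,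
      truncSector_subset_truncSector (min_le_left _ _) hp.2.le (le_max_left _ _),
      truncSector_subset_truncSector (min_le_right _ _) hq.2.le (le_max_right _ _)⟩)
    ⟨(1, 1), one_pos, one_pos⟩

lemma eventually_sectorFilter {p : ℂ → Prop} :
    (∀ᶠ z in sectorFilter σ, p z) ↔ ∃ ϑ > 0, ∃ R > 0, ∀ z ∈ TruncSector σ ϑ R, p z := by
  simp only [(hasBasis_sectorFilter σ).eventually_iff, Prod.exists, and_assoc, exists_and_left,
    gt_iff_lt]

lemma exists_preimage_inter_truncSector_eq_empty_iff {f : ℂ → ℂ} {K : Set ℂ} :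
    (∃ ϑ > (0 : ℝ), ∃ R > (0 : ℝ), f ⁻¹' K ∩ TruncSector σ ϑ R = ∅) ↔
      ∀ᶠ z in sectorFilter σ, f z ∉ K := by
  simp only [eventually_sectorFilter, ← disjoint_iff_inter_eq_empty, disjoint_right, mem_preimage]

lemma mul_self_mul_of_abs_eq_one (hσ : |σ| = 1) (x : ℝ) : σ * (σ * x) = x := by
  rw [← mul_assoc, ← abs_mul_abs_self, hσ, one_mul, one_mul]

lemma add_mem_truncSector (hσ : |σ| = 1) {ϑ R x : ℝ} {y : ℂ} (hϑ : 0 < ϑ) (hR : 2 * R ≤ x)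
    (hy : ‖y‖ < x / 2) (hyϑ : ‖y‖ ≤ ϑ * (x / 2)) : ((σ * x : ℝ) : ℂ) + y ∈ TruncSector σ ϑ R := by
  have hyre : |σ * y.re| ≤ ‖y‖ := by
    rw [abs_mul, hσ, one_mul]
    exact Complex.abs_re_le_norm y
  have hre : x / 2 < σ * (((σ * x : ℝ) : ℂ) + y).re := by
    rw [Complex.add_re, Complex.ofReal_re, mul_add, mul_self_mul_of_abs_eq_one hσ]
    linarith [neg_le_of_abs_le hyre]
  refine ⟨by linarith, ?_⟩
  calc |(((σ * x : ℝ) : ℂ) + y).im| = |y.im| := by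
        rw [Complex.add_im, Complex.ofReal_im, zero_add]
    _ ≤ ϑ * (x / 2) := (Complex.abs_im_le_norm y).trans hyϑ
    _ < ϑ * (σ * (((σ * x : ℝ) : ℂ) + y).re) := by gcongr

lemma eventually_sectorFilter_iff_forall_add (hσ : |σ| = 1) {p : ℂ → Prop} :
    (∀ᶠ z in sectorFilter σ, p z) ↔
      ∃ ϑ > 0, ∃ R > 0, ∀ x : ℝ, R < x → ∀ y : ℂ, ‖y‖ < ϑ * x → p ((σ * x : ℝ) + y) := by
  rw [eventually_sectorFilter]
  constructor
  · rintro ⟨ϑ, hϑ, R, hR, h⟩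
    refine ⟨min 1 ϑ / 2, by positivity, 2 * R, by positivity, fun x hx y hy => h _ ?_⟩
    have hx0 : 0 < x := by linarith
    refine add_mem_truncSector hσ hϑ hx.le ?_ ?_
    · calc ‖y‖ < min 1 ϑ / 2 * x := hy
        _ ≤ 1 / 2 * x := by gcongr; exact min_le_left _ _
        _ = x / 2 := by ring
    · calc ‖y‖ ≤ min 1 ϑ / 2 * x := hy.le
        _ ≤ ϑ / 2 * x := by gcongr; exact min_le_right _ _
        _ = ϑ * (x / 2) := by ring
  · rintro ⟨ϑ, hϑ, R, hR, h⟩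
    refine ⟨ϑ, hϑ, R, hR, fun z hz => ?_⟩
    have := h (σ * z.re) hz.1 (z.im * Complex.I) (by simpa using hz.2)
    rwa [mul_self_mul_of_abs_eq_one hσ, Complex.re_add_im] at this

lemma eventually_sectorFilter_forall_norm_sub_le (hσ : |σ| = 1) {p : ℂ → Prop} {C : ℝ}
    (hC : 0 ≤ C) (h : ∀ᶠ z in sectorFilter σ, p z) :
    ∀ᶠ z in sectorFilter σ, ∀ w, ‖w - z‖ ≤ C * |z.im| → p w := by
  obtain ⟨ϑ, hϑ, R, hR, h⟩ := (eventually_sectorFilter_iff_forall_add hσ).1 h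
  refine eventually_sectorFilter.2 ⟨ϑ / (C + 1), by positivity, R, hR, fun z ⟨hre, him⟩ w hw => ?_⟩
  have hwre : ‖w - z.re‖ < ϑ * (σ * z.re) := by
    calc ‖w - z.re‖ = ‖(w - z) + z.im * Complex.I‖ := by
          congr 1
          linear_combination -Complex.re_add_im z
      _ ≤ ‖w - z‖ + ‖(z.im : ℂ) * Complex.I‖ := norm_add_le _ _
      _ ≤ C * |z.im| + |z.im| := by gcongr; simp
      _ = (C + 1) * |z.im| := by ring
      _ < (C + 1) * (ϑ / (C + 1) * (σ * z.re)) := by gcongr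
      _ = ϑ * (σ * z.re) := by field_simp
  simpa [mul_self_mul_of_abs_eq_one hσ] using h (σ * z.re) hre (w - z.re) hwre

lemma eventually_le_mul_re_sectorFilter (σ x₀ : ℝ) : ∀ᶠ z in sectorFilter σ, x₀ ≤ σ * z.re :=
  eventually_sectorFilter.2 ⟨1, one_pos, max x₀ 1, by positivity,
    fun _ hz => (le_max_left _ _).trans hz.1.le⟩

lemma sectorCondAt_iff_tendsto {f : ℂ → ℂ} (hσ : |σ| = 1) :
    SectorCondAt f σ ↔ Tendsto f (sectorFilter σ) (cocompact ℂ) := by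
  have hsector (R : ℝ) := eventually_sectorFilter_iff_forall_add hσ (p := fun z => R < ‖f z‖)
  simp only [← cobounded_eq_cocompact, ← tendsto_norm_atTop_iff_cobounded, SectorCondAt, ← hsector]
  constructor
  · rintro ⟨R₀, -, h⟩
    exact (atTop_basis_Ioi' R₀).tendsto_right_iff.2 fun R hR => h R hR.le
  · exact fun h => ⟨1, one_pos, fun R _ => h.eventually_gt_atTop R⟩

lemma eventually_lt_norm_of_eventually_norm_ne {f : ℂ → ℂ} (hf : Continuous f) (hσ : |σ| = 1)
    (hσ₀ : Tendsto (fun x : ℝ => ‖f ((σ * x : ℝ) : ℂ)‖) atTop atTop) {N : ℝ}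
    (h : ∀ᶠ z in sectorFilter σ, ‖f z‖ ≠ N) : ∀ᶠ z in sectorFilter σ, N < ‖f z‖ := by
  obtain ⟨ϑ, hϑ, R, hR, h⟩ := eventually_sectorFilter.1 h
  obtain ⟨x, hNx, hRx⟩ := ((hσ₀.eventually_gt_atTop N).and (eventually_gt_atTop R)).exists
  have hx : ((σ * x : ℝ) : ℂ) ∈ TruncSector σ ϑ R := by
    simp [TruncSector, mul_self_mul_of_abs_eq_one hσ, hRx, mul_pos hϑ (hR.trans hRx)]
  refine eventually_sectorFilter.2 ⟨ϑ, hϑ, R, hR, fun z hz => ?_⟩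
  by_contra! hzN
  obtain ⟨w, hw, hwN⟩ := (convex_truncSector σ ϑ R).isPreconnected.intermediate_value hz hx
    hf.norm.continuousOn ⟨hzN, hNx.le⟩
  exact h w hw hwN

end SectorFilter

section LocalSection

lemma exists_continuousOn_section_of_isEvenlyCovered {E X I : Type*} [TopologicalSpace E]
    [TopologicalSpace X] [TopologicalSpace I] {f : E → X} {x : X} (h : IsEvenlyCovered f x I) :
    ∃ U ∈ 𝓝 x, ∀ e, f e ∈ U → ∃ g : X → E, ContinuousOn g U ∧ RightInvOn g f U ∧ g (f e) = e := by
  rcases isEmpty_or_nonempty I with hI | hI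
  · obtain ⟨-, U, hxU, hU, -, H, -⟩ := h
    exact ⟨U, hU.mem_nhds hxU, fun e he => (hI.false (H ⟨e, he⟩).2).elim⟩
  · let t := h.toTrivialization'
    refine ⟨t.baseSet, t.open_baseSet.mem_nhds h.2.choose_spec.1, fun e he =>
      ⟨fun v => t.invFun (v, (t e).2), ?_, fun v hv => t.proj_symm_apply' hv,
        t.symm_apply_mk_proj (t.mem_source.2 he)⟩⟩
    exact t.continuousOn_invFun.comp (by fun_prop) fun v hv => t.mem_target.2 hv

lemma eventually_eq_of_eventually_deriv_eq_zero {f : ℂ → ℂ} {z : ℂ} (hf : AnalyticAt ℂ f z)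
    (hderiv : ∀ᶠ w in 𝓝 z, deriv f w = 0) : ∀ᶠ w in 𝓝 z, f w = f z := by
  obtain ⟨r, hr, h⟩ := Metric.eventually_nhds_iff_ball.1 (hf.eventually_analyticAt.and hderiv)
  filter_upwards [ball_mem_nhds z hr] with w hw
  exact isOpen_ball.is_const_of_deriv_eq_zero (convex_ball z r).isPreconnected
    (fun v hv => (h v hv).1.differentiableAt.differentiableWithinAt) (fun v hv => (h v hv).2) hw
    (mem_ball_self hr)

lemma differentiableAt_of_rightInverse_of_analyticAt {f g : ℂ → ℂ} {c : ℂ}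
    (hf : AnalyticAt ℂ f (g c)) (hg : ∀ᶠ v in 𝓝 c, ContinuousAt g v)
    (hfg : ∀ᶠ v in 𝓝 c, f (g v) = v) : DifferentiableAt ℂ g c := by
  have hgc := hg.self_of_nhds
  have hne : ∀ᶠ v in 𝓝[≠] c, f (g v) ≠ f (g c) := by
    filter_upwards [self_mem_nhdsWithin, nhdsWithin_le_nhds hfg] with v hvc hv
    rwa [hv, hfg.self_of_nhds]
  have hderiv : ∀ᶠ v in 𝓝[≠] c, deriv f (g v) ≠ 0 := by
    rcases hf.deriv.eventually_eq_zero_or_eventually_ne_zero with hzero | hnonzero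
    · have hconst := hgc.eventually (eventually_eq_of_eventually_deriv_eq_zero hf hzero)
      filter_upwards [hne, nhdsWithin_le_nhds hconst] with v hv hv' using absurd hv' hv
    · have hg_ne : ∀ᶠ v in 𝓝[≠] c, g v ≠ g c := hne.mono fun v hv hgv => hv (congrArg f hgv)
      exact (tendsto_nhdsWithin_iff.2
        ⟨hgc.tendsto.mono_left nhdsWithin_le_nhds, hg_ne⟩).eventually hnonzero
  refine (Complex.analyticAt_of_differentiable_on_punctured_nhds_of_continuousAt ?_
    hgc).differentiableAt
  filter_upwards [hderiv, nhdsWithin_le_nhds hg, nhdsWithin_le_nhds hfg.eventually_nhds,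
    nhdsWithin_le_nhds (hgc.eventually hf.eventually_analyticAt)] with v hv hgv hfgv hfv
  exact (HasDerivAt.of_local_left_inverse hgv hfv.differentiableAt.hasDerivAt hv
    hfgv).differentiableAt

end LocalSection

section RayAvoidance

lemma norm_sub_le_of_re_pos {q : ℂ → ℂ} {c z : ℂ} {r : ℝ}
    (hq : DifferentiableOn ℂ q (ball c r)) (hpos : ∀ v ∈ ball c r, 0 < (q v).re)
    (hz : z ∈ ball c r) :
    ‖q z - q c‖ ≤ 2 * (q c).re * ‖z - c‖ / (r - ‖z - c‖) := by
  have hr : 0 < r := nonempty_ball.1 ⟨z, hz⟩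
  have hmaps : MapsTo (fun u => c + u) (ball 0 r) (ball c r) := fun u hu => by
    simpa using hu
  have := Complex.borelCaratheodory_zero (f := fun u => q c - q (c + u)) (z := z - c)
    (hpos c (mem_ball_self hr)) ((hq.comp (by fun_prop) hmaps).const_sub _)
    (fun u hu => by simpa using (hpos _ (hmaps hu)).le) hr (by simpa [dist_eq_norm] using hz)
    (by simp)
  simpa [norm_sub_rev] using this

lemma re_sqrt_pos_of_mem_slitPlane {z : ℂ} (hz : z ∈ Complex.slitPlane) : 0 < z.sqrt.re := by
  rw [Complex.sqrt, Complex.cpow_inv_two_re, Real.sqrt_pos]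
  rcases Complex.mem_slitPlane_iff.1 hz with hre | him
  · positivity
  · linarith [neg_lt_of_abs_lt (Complex.abs_re_lt_norm.2 him)]

lemma norm_sq_sub_sq_le {a b : ℂ} (hb : 0 ≤ b.re) (hb2 : (b ^ 2).re ≤ 0)
    (hab : ‖a - b‖ ≤ 2 * b.re) : ‖a ^ 2 - b ^ 2‖ ≤ 6 * |(b ^ 2).im| := by
  have hre : b.re ≤ |b.im| := by
    rw [sq, Complex.mul_re, sub_nonpos, ← sq, ← sq, sq_le_sq, abs_of_nonneg hb] at hb2
    exact hb2
  have him : |(b ^ 2).im| = 2 * (b.re * |b.im|) := by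
    rw [sq, Complex.mul_im, mul_comm b.im, ← two_mul, abs_mul, abs_mul, abs_of_nonneg hb, abs_two]
  have hb_norm : ‖b‖ ≤ b.re + |b.im| := by
    simpa only [abs_of_nonneg hb] using Complex.norm_le_abs_re_add_abs_im b
  have hab_add : ‖(a - b) + 2 * b‖ ≤ 6 * |b.im| :=
    calc ‖(a - b) + 2 * b‖ ≤ ‖a - b‖ + ‖2 * b‖ := norm_add_le _ _
      _ = ‖a - b‖ + 2 * ‖b‖ := by rw [norm_mul, Complex.norm_ofNat]
      _ ≤ 6 * |b.im| := by linarith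
  calc ‖a ^ 2 - b ^ 2‖ = ‖a - b‖ * ‖(a - b) + 2 * b‖ := by
        rw [← norm_mul]
        ring_nf
    _ ≤ 2 * b.re * (6 * |b.im|) := by gcongr
    _ = 6 * |(b ^ 2).im| := by
        rw [him]
        ring

lemma norm_sub_le_of_mapsTo_slitPlane {h : ℂ → ℂ} {c z : ℂ} {r : ℝ}
    (hh : DifferentiableOn ℂ h (ball c r)) (hmaps : MapsTo h (ball c r) Complex.slitPlane)
    (hc : (h c).re ≤ 0) (hz : z ∈ ball c (r / 2)) : ‖h z - h c‖ ≤ 6 * |(h c).im| := by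
  have hr : 0 < r / 2 := nonempty_ball.1 ⟨z, hz⟩
  have hcr : c ∈ ball c r := mem_ball_self (by linarith)
  have hzr : z ∈ ball c r := ball_subset_ball (by linarith) hz
  have hsq (w : ℂ) : w.sqrt ^ 2 = w := Complex.cpow_ofNat_inv_pow w 2
  have hpos : ∀ v ∈ ball c r, 0 < (h v).sqrt.re := fun v hv =>
    re_sqrt_pos_of_mem_slitPlane (hmaps hv)
  have hsqrt : ‖(h z).sqrt - (h c).sqrt‖ ≤ 2 * (h c).sqrt.re := by
    refine (norm_sub_le_of_re_pos (Complex.differentiableOn_sqrt.comp hh hmaps) hpos hzr).trans ?_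
    have hzc : ‖z - c‖ < r / 2 := by simpa [dist_eq_norm] using hz
    rw [div_le_iff₀ (by linarith)]
    exact mul_le_mul_of_nonneg_left (by linarith) (mul_pos two_pos (hpos c hcr)).le
  simpa only [hsq] using norm_sq_sub_sq_le (hpos c hcr).le (by rwa [hsq]) hsqrt

lemma norm_sub_le_of_forall_ne_ray {g : ℂ → ℂ} {c z : ℂ} {r σ x₀ : ℝ} (hσ : |σ| = 1)
    (hg : DifferentiableOn ℂ g (ball c r))
    (hray : ∀ v ∈ ball c r, ∀ x ≥ x₀, g v ≠ (σ * x : ℝ)) (hc : x₀ ≤ σ * (g c).re)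
    (hz : z ∈ ball c (r / 2)) : ‖g z - g c‖ ≤ 6 * |(g c).im| := by
  have hmaps : MapsTo (fun u => x₀ - σ * g u) (ball c r) Complex.slitPlane := by
    intro v hv
    rw [Complex.mem_slitPlane_iff]
    by_contra! hcon
    obtain ⟨hre, him⟩ : x₀ ≤ σ * (g v).re ∧ σ * (g v).im = 0 := by simpa using hcon
    refine hray v hv _ hre (Complex.ext ?_ ?_)
    · rw [mul_self_mul_of_abs_eq_one hσ, Complex.ofReal_re]
    · rw [Complex.ofReal_im, ← mul_self_mul_of_abs_eq_one hσ (g v).im, him, mul_zero]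
  have hσ_norm : ‖(σ : ℂ)‖ = 1 := by rwa [Complex.norm_real]
  have := norm_sub_le_of_mapsTo_slitPlane ((hg.const_mul _).const_sub _) hmaps
    (by simpa using hc) hz
  simpa [← mul_sub, hσ_norm, hσ, norm_sub_rev, abs_mul] using this

end RayAvoidance

section ClusterValues

variable {f : ℂ → ℂ} {σ : ℝ}

lemma exists_nhds_forall_exists_preimage_norm_sub_le (hf : Differentiable ℂ f) (hσ : |σ| = 1)
    (hσ₀ : Tendsto (fun x : ℝ => ‖f ((σ * x : ℝ) : ℂ)‖) atTop atTop)
    {v₀ : ℂ} {I : Type*} [TopologicalSpace I] (h : IsEvenlyCovered f v₀ I) :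
    ∃ B ∈ 𝓝 v₀, ∀ᶠ z in sectorFilter σ, f z ∈ B →
      ∀ v ∈ B, ∃ z', f z' = v ∧ ‖z' - z‖ ≤ 6 * |z.im| := by
  obtain ⟨U, hU, hsec⟩ := exists_continuousOn_section_of_isEvenlyCovered h
  obtain ⟨r, hr, hrU⟩ := Metric.mem_nhds_iff.1 hU
  obtain ⟨x₀, hx₀⟩ := eventually_atTop.1 (hσ₀.eventually_ge_atTop (‖v₀‖ + r))
  -- For `f z` within `r / 5` of `v₀`, the ball of radius `4 * r / 5` about `f z` lies in
  -- `ball v₀ r`, and its concentric half still contains `ball v₀ (r / 5)`.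
  refine ⟨ball v₀ (r / 5), ball_mem_nhds _ (by positivity), ?_⟩
  filter_upwards [eventually_le_mul_re_sectorFilter σ x₀] with z hz hzB v hv
  have hball : ball (f z) (4 * r / 5) ⊆ ball v₀ r :=
    ball_subset_ball' (by linarith [mem_ball.1 hzB])
  obtain ⟨g, hg, hfg, hgz⟩ := hsec z (hrU (hball (mem_ball_self (by positivity))))
  have hg_diff : DifferentiableOn ℂ g (ball (f z) (4 * r / 5)) := fun u hu => by
    have hUu : ∀ᶠ u' in 𝓝 u, u' ∈ ball v₀ r := isOpen_ball.mem_nhds (hball hu)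
    refine (differentiableAt_of_rightInverse_of_analyticAt (hf.analyticAt _) ?_
      (hUu.mono fun u' hu' => hfg (hrU hu'))).differentiableWithinAt
    exact hUu.mono fun u' hu' => (hg.mono hrU).continuousAt (isOpen_ball.mem_nhds hu')
  have hray : ∀ u ∈ ball (f z) (4 * r / 5), ∀ x ≥ x₀, g u ≠ (σ * x : ℝ) := by
    intro u hu x hx hgu
    have hfx := hx₀ x hx
    rw [← hgu, hfg (hrU (hball hu))] at hfx
    linarith [mem_ball_iff_norm.1 (hball hu), norm_le_norm_add_norm_sub' u v₀]
  have hvz : v ∈ ball (f z) (4 * r / 5 / 2) := by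
    rw [mem_ball] at hv hzB ⊢
    linarith [dist_triangle_right v (f z) v₀]
  have hclose := norm_sub_le_of_forall_ne_ray hσ hg_diff hray (by rwa [hgz]) hvz
  rw [hgz] at hclose
  exact ⟨g v, hfg (hrU (ball_subset_ball (by linarith) hv)), hclose⟩

lemma eventually_frequently_eq_of_mapClusterPt (hf : Differentiable ℂ f) (hσ : |σ| = 1)
    (hσ₀ : Tendsto (fun x : ℝ => ‖f ((σ * x : ℝ) : ℂ)‖) atTop atTop)
    {v₀ : ℂ} {I : Type*} [TopologicalSpace I] (h : IsEvenlyCovered f v₀ I)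
    (hcluster : MapClusterPt v₀ (sectorFilter σ) f) :
    ∀ᶠ v in 𝓝 v₀, ∃ᶠ z in sectorFilter σ, f z = v := by
  obtain ⟨B, hB, hlift⟩ := exists_nhds_forall_exists_preimage_norm_sub_le hf hσ hσ₀ h
  filter_upwards [hB] with v hv hne
  obtain ⟨z, hzB, hz, hne'⟩ := ((hcluster.frequently hB).and_eventually
    (hlift.and (eventually_sectorFilter_forall_norm_sub_le hσ (C := 6) (by norm_num) hne))).exists
  obtain ⟨z', hz', hdist⟩ := hz hzB v hv
  exact hne' z' hdist hz'

lemma not_mapClusterPt_of_isPreconnected (hf : Differentiable ℂ f) (hσ : |σ| = 1)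
    (hσ₀ : Tendsto (fun x : ℝ => ‖f ((σ * x : ℝ) : ℂ)‖) atTop atTop) {C : Set ℂ}
    (hC : IsPreconnected C) (hcov : IsCoveringMapOn f C) {w v : ℂ} (hw : w ∈ C) (hv : v ∈ C)
    (hwf : ∀ᶠ z in sectorFilter σ, f z ≠ w) : ¬MapClusterPt v (sectorFilter σ) f := by
  have hcluster {u : ℂ} (hu : u ∈ C) :=
    eventually_frequently_eq_of_mapClusterPt hf hσ hσ₀ (hcov u hu)
  have hclopen : ∀ u ∈ C, ∀ᶠ u' in 𝓝 u,
      (MapClusterPt u (sectorFilter σ) f ↔ MapClusterPt u' (sectorFilter σ) f) := by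
    intro u hu
    by_cases h : MapClusterPt u (sectorFilter σ) f
    · filter_upwards [hcluster hu h] with u' hu'
      exact iff_of_true h (mapClusterPt_iff_frequently.2 fun s hs =>
        hu'.mono fun z hz => hz ▸ mem_of_mem_nhds hs)
    · filter_upwards [isClosed_setOfPred_clusterPt.isOpen_compl.mem_nhds h] with u' hu'
      exact iff_of_false h hu'
  have hvw : MapClusterPt v (sectorFilter σ) f → MapClusterPt w (sectorFilter σ) f :=
    hC.induction₂ (fun u u' => MapClusterPt u (sectorFilter σ) f ↔
        MapClusterPt u' (sectorFilter σ) f) (fun u hu => nhdsWithin_le_nhds (hclopen u hu))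
      (fun _ _ _ _ _ _ => Iff.trans) (fun _ _ _ _ => Iff.symm) hv hw |>.1
  exact fun hv => (hcluster hw (hvw hv)).self_of_nhds hwf

lemma eventually_lt_norm_of_sphere_subset (hf : Differentiable ℂ f) (hσ : |σ| = 1)
    (hσ₀ : Tendsto (fun x : ℝ => ‖f ((σ * x : ℝ) : ℂ)‖) atTop atTop) {C : Set ℂ}
    (hC : IsPreconnected C) (hcov : IsCoveringMapOn f C) {w : ℂ} (hw : w ∈ C)
    (hwf : ∀ᶠ z in sectorFilter σ, f z ≠ w) {N : ℝ} (hN : sphere 0 N ⊆ C) :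
    ∀ᶠ z in sectorFilter σ, N < ‖f z‖ := by
  refine eventually_lt_norm_of_eventually_norm_ne hf.continuous hσ hσ₀ ?_
  by_contra hfreq
  obtain ⟨v, hv, hcluster⟩ := (isCompact_sphere (0 : ℂ) N).exists_mapClusterPt_of_frequently
    (by simpa using hfreq)
  exact not_mapClusterPt_of_isPreconnected hf hσ hσ₀ hC hcov hw (hN hv) hwf hcluster

end ClusterValues

section UnboundedComponent

variable {E : Type*} [NormedAddCommGroup E] [NormedSpace ℝ E]

lemma isPreconnected_compl_closedBall (hE : 1 < Module.rank ℝ E) (x : E) {M : ℝ} (hM : 0 ≤ M) :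
    IsPreconnected (closedBall x M)ᶜ := by
  have hpolar : (closedBall x M)ᶜ = (fun p : ℝ × E => x + p.1 • p.2) '' (Ioi M ×ˢ sphere 0 1) := by
    ext y
    simp only [mem_compl_iff, mem_closedBall, not_le, dist_eq_norm, mem_image, Prod.exists,
      mem_prod, mem_Ioi, mem_sphere_zero_iff_norm]
    constructor
    · intro hy
      have hy0 : ‖y - x‖ ≠ 0 := (hM.trans_lt hy).ne'
      exact ⟨‖y - x‖, ‖y - x‖⁻¹ • (y - x), ⟨hy, by simp [norm_smul, hy0]⟩, by simp [hy0]⟩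
    · rintro ⟨t, u, ⟨ht, hu⟩, rfl⟩
      simpa [norm_smul, hu] using ht.trans_le (le_abs_self t)
  rw [hpolar]
  exact (isPreconnected_Ioi.prod (isPreconnected_sphere hE 0 1)).image _ (by fun_prop)

lemma not_isBounded_connectedComponentIn_compl_iff (hE : 1 < Module.rank ℝ E) {S : Set E} {x w : E}
    {M : ℝ} (hM : 0 ≤ M) (hS : S ⊆ closedBall x M) :
    ¬Bornology.IsBounded (connectedComponentIn Sᶜ w) ↔
      (closedBall x M)ᶜ ⊆ connectedComponentIn Sᶜ w := by
  constructor
  · intro hw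
    obtain ⟨p, hp, hpM⟩ : ∃ p ∈ connectedComponentIn Sᶜ w, p ∉ closedBall x M :=
      not_subset.1 fun hsub => hw (isBounded_closedBall.subset hsub)
    rw [connectedComponentIn_eq hp]
    exact (isPreconnected_compl_closedBall hE x hM).subset_connectedComponentIn hpM
      (compl_subset_compl.2 hS)
  · intro hsub hw
    have : Nontrivial E := rank_pos_iff_nontrivial.1 (zero_lt_one.trans hE)
    refine NormedSpace.unbounded_univ ℝ E ?_
    rw [← union_compl_self (closedBall x M)]
    exact isBounded_closedBall.union (hw.subset hsub)

end UnboundedComponent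

theorem sector_condition_tfae_general {f : ℂ → ℂ} {S : Set ℂ} (hf : Differentiable ℂ f)
    (hcov : IsCoveringMapOn f Sᶜ) (hS : Bornology.IsBounded S) {σ : ℝ} (hσ : |σ| = 1)
    (hσ₀ : Tendsto (fun x : ℝ => ‖f ((σ * x : ℝ) : ℂ)‖) atTop atTop) :
    List.TFAE [SectorCondAt f σ,
      ∀ K : Set ℂ, IsCompact K → ∃ ϑ > (0 : ℝ), ∃ R > (0 : ℝ), f ⁻¹' K ∩ TruncSector σ ϑ R = ∅,
      ∃ w : ℂ, w ∉ S ∧ ¬Bornology.IsBounded (connectedComponentIn Sᶜ w) ∧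
        ∃ ϑ' > (0 : ℝ), ∃ R' > (0 : ℝ), f ⁻¹' {w} ∩ TruncSector σ ϑ' R' = ∅] := by
  simp only [exists_preimage_inter_truncSector_eq_empty_iff, sectorCondAt_iff_tendsto hσ]
  obtain ⟨M, hM, hSM⟩ := hS.subset_closedBall_lt 0 0
  have hrank : 1 < Module.rank ℝ ℂ := by simp [Complex.rank_real_complex]
  have hunbdd {w : ℂ} :=
    not_isBounded_connectedComponentIn_compl_iff (w := w) hrank hM.le hSM
  tfae_have 1 ↔ 2 := hasBasis_cocompact.tendsto_right_iff
  tfae_have 2 → 3 := by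
    intro h
    obtain ⟨w, hw⟩ : (closedBall (0 : ℂ) M)ᶜ.Nonempty :=
      nonempty_compl.2 fun huniv => NormedSpace.unbounded_univ ℝ ℂ (huniv ▸ isBounded_closedBall)
    exact ⟨w, fun hwS => hw (hSM hwS), hunbdd.2
      ((isPreconnected_compl_closedBall hrank 0 hM.le).subset_connectedComponentIn hw
        (compl_subset_compl.2 hSM)), h {w} isCompact_singleton⟩
  tfae_have 3 → 1 := by
    rintro ⟨w, hwS, hw, hwf⟩
    rw [← cobounded_eq_cocompact, ← tendsto_norm_atTop_iff_cobounded]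
    refine (atTop_basis_Ioi' M).tendsto_right_iff.2 fun N hN =>
      eventually_lt_norm_of_sphere_subset hf hσ hσ₀ isPreconnected_connectedComponentIn
        (hcov.mono (connectedComponentIn_subset _ _)) (mem_connectedComponentIn hwS)
        (by simpa using hwf) (Subset.trans ?_ (hunbdd.1 hw))
    exact fun v hv => by simpa [mem_sphere_zero_iff_norm.1 hv] using hN
  tfae_finish

/-- **Theorem (Statement 15).** For `f ∈ B_ℝ` and `σ ∈ Σ₀(f)`, the following are equivalent:
(i) the sector condition at `σ∞`; (ii) every compact set has preimage omitting a truncated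
sector; (iii) some point of the unbounded component of `ℂ ∖ S(f)` has preimage omitting a
truncated sector. -/
theorem sector_condition_tfae
    (f : ℂ → ℂ) (S : Set ℂ)
    (hf : TranscendentalEntire f)
    (hS : IsSingularValueSet f S)
    (hSbdd : Bornology.IsBounded S)
    (hreal : f '' {z : ℂ | z.im = 0} ⊆ {z : ℂ | z.im = 0})
    (σ : ℝ) (hσ : σ = 1 ∨ σ = -1)
    (hσ₀ : Tendsto (fun x : ℝ => ‖f ((σ * x : ℝ) : ℂ)‖) atTop atTop) :
    (SectorCondAt f σ ↔
      ∀ K : Set ℂ, IsCompact K → ∃ ϑ > (0 : ℝ), ∃ R > (0 : ℝ),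
        f ⁻¹' K ∩ TruncSector σ ϑ R = ∅) ∧
    (SectorCondAt f σ ↔
      ∃ w : ℂ, w ∉ S ∧ ¬Bornology.IsBounded (connectedComponentIn Sᶜ w) ∧
        ∃ ϑ' > (0 : ℝ), ∃ R' > (0 : ℝ), f ⁻¹' {w} ∩ TruncSector σ ϑ' R' = ∅) := by
  have h := sector_condition_tfae_general hf.1 hS.2.1 hSbdd ((abs_eq zero_le_one).2 hσ) hσ₀
  exact ⟨h.out 0 1, h.out 0 2⟩
end

section
/- Let U′ ⊂ U ⊂ ℂ be hyperbolic open sets and let f:U′→U be a holomorphic covering map. Let 𝒲 be the set of all points of U′ that have an open neighborhood W with fⁿ(W) ⊂ U′ for all n ≥ 0. Then: (1) for every w ∈ 𝒲, d_U(fⁿ(w), U∖𝒲) → ∞ as n → ∞. (2) If W is the connected component of 𝒲 containing w, and f^{n_k}|_W → z₀ locally uniformly for some sequence n_k → ∞ and some z₀ ∈ ℂ, then z₀ ∈ ℂ∖U; moreover, if z₀ is an isolated point of ℂ∖U, then for all sufficiently large k the set f^{n_k}(W) ∪ {z₀} is simply connected, and there exists p ≥ 1 such that f^p extends holomorphically to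 z₀ with f^p(z₀) = z₀ and (f^p)′(z₀) = 0. -/
open Set Metric Filter Topology

open scoped ENNReal

/-- `π` is a holomorphic covering map from the unit disc onto `C ⊆ ℂ`. -/
def IsDiscCovering (π : ℂ → ℂ) (C : Set ℂ) : Prop :=
  DifferentiableOn ℂ π (ball (0 : ℂ) 1) ∧ π '' ball (0 : ℂ) 1 = C ∧
    ∃ h : MapsTo π (ball (0 : ℂ) 1) C,
      IsCoveringMap (MapsTo.restrict π (ball (0 : ℂ) 1) C h)

/-- `ρ` is the density of the hyperbolic metric of the open set `U ⊆ ℂ`: on each connected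
component it is the pushforward of the Poincaré density `2/(1 − |ζ|²)` of the unit disc under
a holomorphic universal covering map. -/
def IsHypDensity (U : Set ℂ) (ρ : ℂ → ℝ) : Prop :=
  ∀ z ∈ U, ∃ π : ℂ → ℂ, IsDiscCovering π (connectedComponentIn U z) ∧
    ∀ ζ ∈ ball (0 : ℂ) 1, ρ (π ζ) * ‖deriv π ζ‖ = 2 / (1 - ‖ζ‖ ^ 2)

/-- The length of a curve `γ : [0,1] → ℂ` with respect to the conformal density `ρ`. -/
noncomputable def hypLength (ρ : ℂ → ℝ) (γ : ℝ → ℂ) : ℝ :=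
  ∫ t in (0 : ℝ)..1, ρ (γ t) * ‖deriv γ t‖

/-- The hyperbolic distance in `U` with density `ρ`: the infimum of hyperbolic lengths of
(C¹-smooth) curves joining `z` and `w` within `U` (`∞` if there is no such curve). -/
noncomputable def hypDist (U : Set ℂ) (ρ : ℂ → ℝ) (z w : ℂ) : ℝ≥0∞ :=
  ⨅ (γ : ℝ → ℂ) (_ : ContDiffOn ℝ 1 γ (Icc (0 : ℝ) 1) ∧
      (∀ t ∈ Icc (0 : ℝ) 1, γ t ∈ U) ∧ γ 0 = z ∧ γ 1 = w),
    ENNReal.ofReal (hypLength ρ γ)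

/-- The hyperbolic distance from a point to a set: `d_U(z, ∅) = ∞`. -/
noncomputable def hypDistToSet (U : Set ℂ) (ρ : ℂ → ℝ) (z : ℂ) (E : Set ℂ) : ℝ≥0∞ :=
  ⨅ e ∈ E, hypDist U ρ z e

/-- A hyperbolic open subset of `ℂ`: each connected component omits at least two points. -/
def HyperbolicOpen (U : Set ℂ) : Prop :=
  IsOpen U ∧ ∀ z ∈ U, Set.Nontrivial (connectedComponentIn U z)ᶜ

/-!
Let `U n` be the domain of `f^[n]`, so that `f^[n] : U n → U` is a covering and a local isometry of
hyperbolic metrics. At a point `w` of the interior of `⋂ n, U n` the hyperbolic metrics of the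
decreasing domains `U n` converge to a positive limit, so the inclusions `U (m + n) ⊆ U m` are
almost isometric near `w` for large `m`, hence so are the inclusions `U n ⊆ U` near `f^[m] w`. By
the Schwarz lemma a large hyperbolic disc around `f^[m] w` then lies in every `U n`; this is (1).

Suppose `f^[n k] → z₀` on `W`. If `z₀` were in `U`, a fixed disc around `z₀` would lift through
`f^[n k]` to maps into `U` based at `w` whose derivatives are unbounded, against the Schwarz lemma.
If `z₀` is an isolated point of `ℂ ∖ U`, circles around `z₀` are hyperbolically short, so that
`f^[n k]` takes a fixed compact neighborhood of `w` over a circle around `z₀`. Therefore some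
`f^[m]` maps such a circle `C` into the disc of half its radius. Lifting punctured discs through
`f^[m]` and counting windings of the lifts, one finds that `f^[m]` extends to the disc bounded by
`C` as a branched covering of discs, totally ramified at `z₀ ↦ z₀`. This extension `G` contracts,
so its orbits near `z₀` stay in `U`. If `G' z₀ ≠ 0`, then `(G^[j])' z` is comparable to
`G^[j] z - z₀`, whereas the hyperbolic density `1 / (|z - z₀| log (1 / |z - z₀|))` of the
punctured disc and the expansion of `f` force it to be larger by a factor of order `j`. Finally,
every compact subset of the filled component lies in the preimage, under an iterate, of a small disc
around `z₀`, and this preimage is again a disc.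
-/

/-! ### Lifting through holomorphic coverings -/

section CoveringMap

variable {E α β : Type*} [TopologicalSpace E] [TopologicalSpace α] [TopologicalSpace β]
  {F : α → β} {X : Set α} {Y : Set β} {h : MapsTo F X Y} {S : Set E}

theorem exists_continuousOn_lift_of_convex [AddCommGroup E] [Module ℝ E]
    [IsTopologicalAddGroup E] [ContinuousSMul ℝ E] [LocallyConvexSpace ℝ E]
    (hF : IsCoveringMap (MapsTo.restrict F X Y h)) (hS : Convex ℝ S) {g : E → β}
    (hg : ContinuousOn g S) (hgY : MapsTo g S Y) {s : E} (hs : s ∈ S) {x : α} (hx : x ∈ X)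
    (hxs : F x = g s) :
    ∃ G : E → α, ContinuousOn G S ∧ MapsTo G S X ∧ G s = x ∧ EqOn (F ∘ G) g S := by
  classical
  have : ContractibleSpace S := hS.contractibleSpace ⟨s, hs⟩
  have : LocallyPathConnectedSpace S := hS.locallyPathConnectedSpace
  obtain ⟨G, ⟨hGs, hFG⟩, -⟩ := hF.existsUnique_continuousMap_lifts
    ⟨MapsTo.restrict g S Y hgY, hg.mapsToRestrict hgY⟩ ⟨s, hs⟩ ⟨x, hx⟩ (Subtype.ext hxs)
  refine ⟨fun t ↦ if ht : t ∈ S then G ⟨t, ht⟩ else x, ?_, fun t ht ↦ ?_, ?_, fun t ht ↦ ?_⟩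
  · rw [continuousOn_iff_continuous_domRestrict]
    convert continuous_subtype_val.comp G.continuous using 1
    ext t
    simp
  · simp [ht]
  · simp [hs, hGs]
  · simpa [ht] using congrArg Subtype.val (congrFun hFG ⟨t, ht⟩)

theorem eqOn_of_isCoveringMap (hF : IsCoveringMap (MapsTo.restrict F X Y h))
    (hS : IsPreconnected S) {G₁ G₂ : E → α} (hG₁ : ContinuousOn G₁ S) (hG₂ : ContinuousOn G₂ S)
    (hX₁ : MapsTo G₁ S X) (hX₂ : MapsTo G₂ S X) (heq : EqOn (F ∘ G₁) (F ∘ G₂) S) {s : E}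
    (hs : s ∈ S) (hGs : G₁ s = G₂ s) : EqOn G₁ G₂ S := by
  have : PreconnectedSpace S := Subtype.preconnectedSpace hS
  have hres := hF.eq_of_comp_eq (hG₁.mapsToRestrict hX₁) (hG₂.mapsToRestrict hX₂)
    (by ext t; exact heq t.2) ⟨s, hs⟩ (Subtype.ext hGs)
  exact fun t ht ↦ congrArg Subtype.val (congrFun hres ⟨t, ht⟩)

end CoveringMap

section LocalInverse

variable {F G : ℂ → ℂ} {x : ℂ}

theorem deriv_mul_deriv_of_comp_eventuallyEq {g : ℂ → ℂ} {t : ℂ}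
    (hF : DifferentiableAt ℂ F (G t)) (hG : DifferentiableAt ℂ G t) (h : F ∘ G =ᶠ[𝓝 t] g) :
    deriv F (G t) * deriv G t = deriv g t := by
  rw [← deriv_comp t hF hG, h.deriv_eq]

theorem eventually_eq_or_eventually_deriv_ne_zero (hF : AnalyticAt ℂ F x) :
    (∀ᶠ z in 𝓝 x, F z = F x) ∨ ∀ᶠ z in 𝓝[≠] x, deriv F z ≠ 0 := by
  refine hF.deriv.eventually_eq_zero_or_eventually_ne_zero.imp_left fun hzero ↦ ?_
  obtain ⟨δ, hδ, hball⟩ := eventually_nhds_iff_ball.1 (hzero.and hF.eventually_analyticAt)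
  filter_upwards [ball_mem_nhds x hδ] with y hy
  exact isOpen_ball.is_const_of_deriv_eq_zero (convex_ball x δ).isPreconnected
    (fun z hz ↦ (hball z hz).2.differentiableAt.differentiableWithinAt)
    (fun z hz ↦ (hball z hz).1) hy (mem_ball_self hδ)

theorem differentiableAt_of_continuous_rightInverse (hF : AnalyticAt ℂ F x) (hGx : G (F x) = x)
    (hG : ∀ᶠ t in 𝓝 (F x), ContinuousAt G t) (hFG : ∀ᶠ t in 𝓝 (F x), F (G t) = t) :
    DifferentiableAt ℂ G (F x) := by
  have hGc : ContinuousAt G (F x) := hG.self_of_nhds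
  have hGt : Tendsto G (𝓝 (F x)) (𝓝 x) := by simpa [hGx] using hGc.tendsto
  have hGt' : Tendsto G (𝓝[≠] (F x)) (𝓝[≠] x) := by
    refine tendsto_nhdsWithin_iff.2 ⟨hGt.mono_left nhdsWithin_le_nhds, ?_⟩
    filter_upwards [nhdsWithin_le_nhds hFG, self_mem_nhdsWithin] with t ht htne htx
    rw [mem_singleton_iff.1 htx] at ht
    exact htne ht.symm
  rcases eventually_eq_or_eventually_deriv_ne_zero hF with hconst | hderiv
  · have hfalse : ∀ᶠ _ in 𝓝[≠] (F x), False := by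
      filter_upwards [nhdsWithin_le_nhds hFG, self_mem_nhdsWithin,
        nhdsWithin_le_nhds (hGt.eventually hconst)] with _ ht htne htc
      exact htne (ht.symm.trans htc)
    exact hfalse.exists.choose_spec.elim
  · refine (Complex.analyticAt_of_differentiable_on_punctured_nhds_of_continuousAt ?_
      hGc).differentiableAt
    filter_upwards [nhdsWithin_le_nhds hG, nhdsWithin_le_nhds hFG.eventually_nhds,
      hGt'.eventually hderiv, nhdsWithin_le_nhds (hGt.eventually hF.eventually_analyticAt)]
      with t htc htFG htd hta
    exact (HasDerivAt.of_comp_left htc hta.differentiableAt.hasDerivAt (hasDerivAt_id t) htd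
      htFG).differentiableAt

theorem deriv_ne_zero_of_continuous_rightInverse (hF : AnalyticAt ℂ F x) (hGx : G (F x) = x)
    (hG : ∀ᶠ t in 𝓝 (F x), ContinuousAt G t) (hFG : ∀ᶠ t in 𝓝 (F x), F (G t) = t) :
    deriv F x ≠ 0 := by
  have hmul := deriv_mul_deriv_of_comp_eventuallyEq (hGx.symm ▸ hF.differentiableAt)
    (differentiableAt_of_continuous_rightInverse hF hGx hG hFG) (g := id) hFG
  rw [hGx, deriv_id] at hmul
  exact left_ne_zero_of_mul_eq_one hmul

theorem differentiableOn_of_comp_eqOn {S : Set ℂ} {g : ℂ → ℂ} (hS : IsOpen S)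
    (hG : ContinuousOn G S) (hg : DifferentiableOn ℂ g S)
    (hF : ∀ t ∈ S, DifferentiableAt ℂ F (G t)) (hF' : ∀ t ∈ S, deriv F (G t) ≠ 0)
    (heq : EqOn (F ∘ G) g S) : DifferentiableOn ℂ G S := fun t ht ↦
  (HasDerivAt.of_comp_left (hG.continuousAt (hS.mem_nhds ht)) (hF t ht).hasDerivAt
    (hg.differentiableAt (hS.mem_nhds ht)).hasDerivAt (hF' t ht)
    (heq.eventuallyEq_of_mem (hS.mem_nhds ht))).differentiableAt.differentiableWithinAt

theorem isOpen_image_of_deriv_ne_zero {X : Set ℂ} (hX : IsOpen X) (hF : DifferentiableOn ℂ F X)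
    (hF' : ∀ x ∈ X, deriv F x ≠ 0) : IsOpen (F '' X) := by
  refine isOpen_iff_mem_nhds.2 ?_
  rintro _ ⟨x, hx, rfl⟩
  have hstrict := (hF.analyticAt (hX.mem_nhds hx)).hasStrictDerivAt
  rw [← hstrict.map_nhds_eq (hF' x hx)]
  exact image_mem_map (hX.mem_nhds hx)

end LocalInverse

/-- A holomorphic map `F : X → Y` between open subsets of the plane through which continuous maps
from convex sets lift uniquely. Holomorphic coverings have this property, and unlike the property
of being a covering it is immediate that it passes to compositions and restrictions, hence to
the iterates of a partially defined map. -/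
structure HasConvexLifts (F : ℂ → ℂ) (X Y : Set ℂ) : Prop where
  isOpen_source : IsOpen X
  isOpen_target : IsOpen Y
  mapsTo : MapsTo F X Y
  differentiableOn : DifferentiableOn ℂ F X
  exists_continuousOn_lift : ∀ ⦃S : Set ℂ⦄, Convex ℝ S → ∀ ⦃g : ℂ → ℂ⦄, ContinuousOn g S →
    MapsTo g S Y → ∀ ⦃s⦄, s ∈ S → ∀ ⦃x⦄, x ∈ X → F x = g s →
    ∃ G : ℂ → ℂ, ContinuousOn G S ∧ MapsTo G S X ∧ G s = x ∧ EqOn (F ∘ G) g S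
  eqOn_of_comp_eqOn : ∀ ⦃S : Set ℂ⦄, IsPreconnected S → ∀ ⦃G₁ G₂ : ℂ → ℂ⦄, ContinuousOn G₁ S →
    ContinuousOn G₂ S → MapsTo G₁ S X → MapsTo G₂ S X → EqOn (F ∘ G₁) (F ∘ G₂) S →
    ∀ ⦃s⦄, s ∈ S → G₁ s = G₂ s → EqOn G₁ G₂ S

theorem hasConvexLifts_of_isCoveringMap {F : ℂ → ℂ} {X Y : Set ℂ} (hX : IsOpen X) (hY : IsOpen Y)
    (hF : DifferentiableOn ℂ F X) {h : MapsTo F X Y}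
    (hc : IsCoveringMap (MapsTo.restrict F X Y h)) : HasConvexLifts F X Y where
  isOpen_source := hX
  isOpen_target := hY
  mapsTo := h
  differentiableOn := hF
  exists_continuousOn_lift _ hS _ hg hgY _ hs _ hx hxs :=
    exists_continuousOn_lift_of_convex hc hS hg hgY hs hx hxs
  eqOn_of_comp_eqOn _ hS _ _ hG₁ hG₂ hX₁ hX₂ heq _ hs hGs :=
    eqOn_of_isCoveringMap hc hS hG₁ hG₂ hX₁ hX₂ heq hs hGs

namespace HasConvexLifts

variable {F K g : ℂ → ℂ} {X Y Z S : Set ℂ} {s x : ℂ}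

theorem differentiableAt (hF : HasConvexLifts F X Y) (hx : x ∈ X) : DifferentiableAt ℂ F x :=
  hF.differentiableOn.differentiableAt (hF.isOpen_source.mem_nhds hx)

theorem deriv_ne_zero (hF : HasConvexLifts F X Y) (hx : x ∈ X) : deriv F x ≠ 0 := by
  obtain ⟨ε, hε, hball⟩ := isOpen_iff.1 hF.isOpen_target (F x) (hF.mapsTo hx)
  obtain ⟨G, hG, -, hGx, hFG⟩ := hF.exists_continuousOn_lift (convex_ball (F x) ε)
    continuousOn_id hball (mem_ball_self hε) hx rfl
  have hmem : ball (F x) ε ∈ 𝓝 (F x) := ball_mem_nhds _ hε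
  refine deriv_ne_zero_of_continuous_rightInverse
    (hF.differentiableOn.analyticAt (hF.isOpen_source.mem_nhds hx)) hGx ?_
    (eventually_of_mem hmem hFG)
  filter_upwards [eventually_mem_nhds_iff.2 hmem] with t ht using hG.continuousAt ht

theorem exists_differentiableOn_lift (hF : HasConvexLifts F X Y) (hS : Convex ℝ S)
    (hSo : IsOpen S) (hg : DifferentiableOn ℂ g S) (hgY : MapsTo g S Y) (hs : s ∈ S) (hx : x ∈ X)
    (hxs : F x = g s) :
    ∃ G : ℂ → ℂ, DifferentiableOn ℂ G S ∧ MapsTo G S X ∧ G s = x ∧ EqOn (F ∘ G) g S := by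
  obtain ⟨G, hG, hGX, hGs, hFG⟩ :=
    hF.exists_continuousOn_lift hS hg.continuousOn hgY hs hx hxs
  exact ⟨G, differentiableOn_of_comp_eqOn hSo hG hg (fun t ht ↦ hF.differentiableAt (hGX ht))
    (fun t ht ↦ hF.deriv_ne_zero (hGX ht)) hFG, hGX, hGs, hFG⟩

theorem isOpen_image (hF : HasConvexLifts F X Y) {V : Set ℂ} (hV : IsOpen V) (hVX : V ⊆ X) :
    IsOpen (F '' V) :=
  isOpen_image_of_deriv_ne_zero hV (hF.differentiableOn.mono hVX)
    fun _ hx ↦ hF.deriv_ne_zero (hVX hx)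

theorem restrict (hF : HasConvexLifts F X Y) {Y' : Set ℂ} (hY' : IsOpen Y') (hsub : Y' ⊆ Y) :
    HasConvexLifts F (X ∩ F ⁻¹' Y') Y' where
  isOpen_source := hF.differentiableOn.continuousOn.isOpen_inter_preimage hF.isOpen_source hY'
  isOpen_target := hY'
  mapsTo _ hx := hx.2
  differentiableOn := hF.differentiableOn.mono inter_subset_left
  exists_continuousOn_lift S hS g hg hgY s hs x hx hxs := by
    obtain ⟨G, hG, hGX, hGs, hFG⟩ :=
      hF.exists_continuousOn_lift hS hg (hgY.mono_right hsub) hs hx.1 hxs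
    refine ⟨G, hG, fun t ht ↦ ⟨hGX ht, ?_⟩, hGs, hFG⟩
    have hFGt : F (G t) = g t := hFG ht
    exact (congrArg (· ∈ Y') hFGt).mpr (hgY ht)
  eqOn_of_comp_eqOn S hS G₁ G₂ hG₁ hG₂ hX₁ hX₂ := hF.eqOn_of_comp_eqOn hS hG₁ hG₂
    (hX₁.mono_right inter_subset_left) (hX₂.mono_right inter_subset_left)

theorem comp (hK : HasConvexLifts K Y Z) (hF : HasConvexLifts F X Y) :
    HasConvexLifts (K ∘ F) X Z where
  isOpen_source := hF.isOpen_source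
  isOpen_target := hK.isOpen_target
  mapsTo := hK.mapsTo.comp hF.mapsTo
  differentiableOn := hK.differentiableOn.comp hF.differentiableOn hF.mapsTo
  exists_continuousOn_lift S hS g hg hgZ s hs x hx hxs := by
    obtain ⟨G, hG, hGY, hGs, hKG⟩ :=
      hK.exists_continuousOn_lift hS hg hgZ hs (hF.mapsTo hx) hxs
    obtain ⟨H, hH, hHX, hHs, hFH⟩ := hF.exists_continuousOn_lift hS hG hGY hs hx hGs.symm
    exact ⟨H, hH, hHX, hHs, fun t ht ↦ (congrArg K (hFH ht)).trans (hKG ht)⟩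
  eqOn_of_comp_eqOn S hS G₁ G₂ hG₁ hG₂ hX₁ hX₂ heq s hs hGs :=
    hF.eqOn_of_comp_eqOn hS hG₁ hG₂ hX₁ hX₂
      (hK.eqOn_of_comp_eqOn hS (hF.differentiableOn.continuousOn.comp hG₁ hX₁)
        (hF.differentiableOn.continuousOn.comp hG₂ hX₂) (hF.mapsTo.comp hX₁)
        (hF.mapsTo.comp hX₂) heq hs (congrArg F hGs)) hs hGs

theorem of_comp {P Q : ℂ → ℂ} (hF : HasConvexLifts F Y Z) (hQ : HasConvexLifts Q X Z)
    (hP : DifferentiableOn ℂ P X) (hPY : MapsTo P X Y) (hFP : EqOn (F ∘ P) Q X) :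
    HasConvexLifts P X Y where
  isOpen_source := hQ.isOpen_source
  isOpen_target := hF.isOpen_source
  mapsTo := hPY
  differentiableOn := hP
  exists_continuousOn_lift S hS g hg hgY s hs x hx hxs := by
    obtain ⟨G, hG, hGX, hGs, hQG⟩ := hQ.exists_continuousOn_lift hS
      (hF.differentiableOn.continuousOn.comp hg hgY) (hF.mapsTo.comp hgY) hs hx
      ((hFP hx).symm.trans (congrArg F hxs))
    exact ⟨G, hG, hGX, hGs, hF.eqOn_of_comp_eqOn hS.isPreconnected
      (hP.continuousOn.comp hG hGX) hg (hPY.comp hGX) hgY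
      (fun t ht ↦ (hFP (hGX ht)).trans (hQG ht)) hs ((congrArg P hGs).trans hxs)⟩
  eqOn_of_comp_eqOn S hS G₁ G₂ hG₁ hG₂ hX₁ hX₂ heq :=
    hQ.eqOn_of_comp_eqOn hS hG₁ hG₂ hX₁ hX₂ fun t ht ↦
      (hFP (hX₁ ht)).symm.trans ((congrArg F (heq ht)).trans (hFP (hX₂ ht)))

theorem extend_target (hF : HasConvexLifts F X Y) {Y' : Set ℂ} (hY' : IsOpen Y') (hsub : Y ⊆ Y')
    (hpre : ∀ S : Set ℂ, IsPreconnected S → S ⊆ Y' → (S ∩ Y).Nonempty → S ⊆ Y) :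
    HasConvexLifts F X Y' where
  isOpen_source := hF.isOpen_source
  isOpen_target := hY'
  mapsTo := hF.mapsTo.mono_right hsub
  differentiableOn := hF.differentiableOn
  exists_continuousOn_lift _ hS g hg hgY s hs _ hx hxs :=
    hF.exists_continuousOn_lift hS hg (mapsTo_iff_image_subset.2 <|
      hpre _ (hS.isPreconnected.image g hg) hgY.image_subset
        ⟨g s, mem_image_of_mem g hs, hxs ▸ hF.mapsTo hx⟩) hs hx hxs
  eqOn_of_comp_eqOn := hF.eqOn_of_comp_eqOn

theorem of_leftInvOn {T : ℂ → ℂ} (hX : IsOpen X) (hY : IsOpen Y) (hF : DifferentiableOn ℂ F X)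
    (hT : ContinuousOn T Y) (hXY : MapsTo F X Y) (hYX : MapsTo T Y X) (hleft : LeftInvOn T F X)
    (hright : RightInvOn T F Y) : HasConvexLifts F X Y where
  isOpen_source := hX
  isOpen_target := hY
  mapsTo := hXY
  differentiableOn := hF
  exists_continuousOn_lift _ _ g hg hgY _ _ _ hx hxs :=
    ⟨T ∘ g, hT.comp hg hgY, hYX.comp hgY, (congrArg T hxs).symm.trans (hleft hx),
      fun t ht ↦ hright (hgY ht)⟩
  eqOn_of_comp_eqOn _ _ _ _ _ _ hX₁ hX₂ heq _ _ _ t ht := by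
    rw [← hleft (hX₁ ht), ← hleft (hX₂ ht)]
    exact congrArg T (heq ht)

protected theorem id (hX : IsOpen X) : HasConvexLifts id X X :=
  of_leftInvOn hX hX differentiableOn_id continuousOn_id (mapsTo_id X) (mapsTo_id X)
    (fun _ _ ↦ rfl) fun _ _ ↦ rfl

protected theorem exp : HasConvexLifts Complex.exp univ {0}ᶜ :=
  hasConvexLifts_of_isCoveringMap (h := fun z _ ↦ Complex.exp_ne_zero z) isOpen_univ
    isOpen_compl_singleton Complex.differentiable_exp.differentiableOn
    (Complex.isCoveringMap_exp.comp_homeomorph (Homeomorph.Set.univ ℂ))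

end HasConvexLifts

theorem exists_differentiableOn_exp_eqOn {S : Set ℂ} (hS : Convex ℝ S) (hSo : IsOpen S)
    {g : ℂ → ℂ} (hg : DifferentiableOn ℂ g S) (hg₀ : ∀ z ∈ S, g z ≠ 0) :
    ∃ L : ℂ → ℂ, DifferentiableOn ℂ L S ∧ EqOn (Complex.exp ∘ L) g S := by
  rcases S.eq_empty_or_nonempty with rfl | ⟨s, hs⟩
  · exact ⟨0, differentiableOn_empty, eqOn_empty _ _⟩
  · obtain ⟨L, hL, -, -, hexp⟩ := HasConvexLifts.exp.exists_differentiableOn_lift hS hSo hg hg₀ hs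
      (mem_univ (Complex.log (g s))) (Complex.exp_log (hg₀ s hs))
    exact ⟨L, hL, hexp⟩

theorem exists_differentiableOn_sq_eqOn {S : Set ℂ} (hS : Convex ℝ S) (hSo : IsOpen S)
    {g : ℂ → ℂ} (hg : DifferentiableOn ℂ g S) (hg₀ : ∀ z ∈ S, g z ≠ 0) :
    ∃ h : ℂ → ℂ, DifferentiableOn ℂ h S ∧ ∀ z ∈ S, h z ^ 2 = g z := by
  obtain ⟨L, hL, hexp⟩ := exists_differentiableOn_exp_eqOn hS hSo hg hg₀
  refine ⟨fun z ↦ Complex.exp (L z / 2), (hL.div_const 2).cexp, fun z hz ↦ ?_⟩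
  rw [← Complex.exp_nat_mul, ← hexp hz, Function.comp_apply]
  congr 1
  push_cast
  ring

theorem HasConvexLifts.exists_path_lift {F : ℂ → ℂ} {X Y : Set ℂ} (hF : HasConvexLifts F X Y)
    {γ : ℝ → ℂ} (hγ : ContinuousOn γ (Icc 0 1)) (hγY : MapsTo γ (Icc 0 1) Y) {x : ℂ} (hx : x ∈ X)
    (hxγ : F x = γ 0) :
    ∃ Γ : ℝ → ℂ, ContinuousOn Γ (Icc 0 1) ∧ MapsTo Γ (Icc 0 1) X ∧ Γ 0 = x ∧
      EqOn (F ∘ Γ) γ (Icc 0 1) := by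
  have hconv : Convex ℝ (Complex.ofReal '' Icc 0 1) :=
    (convex_Icc (0 : ℝ) 1).is_linear_image Complex.ofRealCLM.isLinear
  have hre : MapsTo Complex.re (Complex.ofReal '' Icc 0 1) (Icc 0 1) := by
    rintro _ ⟨t, ht, rfl⟩
    exact ht
  obtain ⟨G, hG, hGX, hG0, hFG⟩ := hF.exists_continuousOn_lift hconv
    (hγ.comp Complex.continuous_re.continuousOn hre) (hγY.comp hre)
    (mem_image_of_mem _ (left_mem_Icc.2 zero_le_one)) hx hxγ
  exact ⟨G ∘ Complex.ofReal, hG.comp Complex.continuous_ofReal.continuousOn (mapsTo_image _ _),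
    hGX.comp (mapsTo_image _ _), hG0, fun t ht ↦ hFG (mem_image_of_mem _ ht)⟩

/-! ### The hyperbolic disc -/

theorem one_sub_sq_norm_pos {E : Type*} [SeminormedAddCommGroup E] {ζ : E}
    (hζ : ζ ∈ ball (0 : E) 1) : 0 < 1 - ‖ζ‖ ^ 2 := by
  nlinarith [norm_nonneg ζ, mem_ball_zero_iff.1 hζ]

/-- The holomorphic involution of the unit disc exchanging `0` and `a`, for `‖a‖ < 1`. -/
noncomputable def discInvolution (a ζ : ℂ) : ℂ := (a - ζ) / (1 - (starRingEnd ℂ) a * ζ)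

section DiscInvolution

variable {a ζ : ℂ}

theorem discInvolution_zero : discInvolution a 0 = a := by simp [discInvolution]

theorem discInvolution_self : discInvolution a a = 0 := by simp [discInvolution]

theorem one_sub_conj_mul_ne_zero (ha : a ∈ ball (0 : ℂ) 1) (hζ : ζ ∈ ball (0 : ℂ) 1) :
    1 - (starRingEnd ℂ) a * ζ ≠ 0 := by
  rw [mem_ball_zero_iff] at ha hζ
  intro h
  have hnorm : ‖a‖ * ‖ζ‖ = 1 := by
    rw [← RCLike.norm_conj a, ← norm_mul, ← sub_eq_zero.1 h, norm_one]
  nlinarith [norm_nonneg a, norm_nonneg ζ]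

theorem one_sub_sq_norm_discInvolution (ha : a ∈ ball (0 : ℂ) 1) (hζ : ζ ∈ ball (0 : ℂ) 1) :
    1 - ‖discInvolution a ζ‖ ^ 2 =
      (1 - ‖a‖ ^ 2) * (1 - ‖ζ‖ ^ 2) / ‖1 - (starRingEnd ℂ) a * ζ‖ ^ 2 := by
  have hne : ‖1 - (starRingEnd ℂ) a * ζ‖ ^ 2 ≠ 0 := by
    simpa using one_sub_conj_mul_ne_zero ha hζ
  rw [discInvolution, norm_div, div_pow, eq_div_iff hne, sub_mul, div_mul_cancel₀ _ hne]
  simp only [← Complex.normSq_eq_norm_sq, Complex.normSq_apply]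
  simp
  ring

theorem mapsTo_discInvolution (ha : a ∈ ball (0 : ℂ) 1) :
    MapsTo (discInvolution a) (ball 0 1) (ball 0 1) := by
  intro ζ hζ
  have hpos : 0 < 1 - ‖discInvolution a ζ‖ ^ 2 := by
    rw [one_sub_sq_norm_discInvolution ha hζ]
    exact div_pos (mul_pos (one_sub_sq_norm_pos ha) (one_sub_sq_norm_pos hζ))
      (by simpa [sq_pos_iff] using one_sub_conj_mul_ne_zero ha hζ)
  rw [mem_ball_zero_iff]
  nlinarith [norm_nonneg (discInvolution a ζ)]

theorem leftInvOn_discInvolution (ha : a ∈ ball (0 : ℂ) 1) :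
    LeftInvOn (discInvolution a) (discInvolution a) (ball 0 1) := by
  intro ζ hζ
  have hmul : discInvolution a ζ * (1 - (starRingEnd ℂ) a * ζ) = a - ζ :=
    div_mul_cancel₀ _ (one_sub_conj_mul_ne_zero ha hζ)
  rw [discInvolution, div_eq_iff (one_sub_conj_mul_ne_zero ha (mapsTo_discInvolution ha hζ))]
  linear_combination -hmul

theorem hasDerivAt_discInvolution (ha : a ∈ ball (0 : ℂ) 1) (hζ : ζ ∈ ball (0 : ℂ) 1) :
    HasDerivAt (discInvolution a)
      (-(1 - (starRingEnd ℂ) a * a) / (1 - (starRingEnd ℂ) a * ζ) ^ 2) ζ := by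
  have hdiv := ((hasDerivAt_id ζ).const_sub a).fun_div
    (((hasDerivAt_id ζ).const_mul ((starRingEnd ℂ) a)).const_sub 1)
    (one_sub_conj_mul_ne_zero ha hζ)
  refine hdiv.congr_deriv ?_
  simp only [id]
  ring

theorem differentiableOn_discInvolution (ha : a ∈ ball (0 : ℂ) 1) :
    DifferentiableOn ℂ (discInvolution a) (ball 0 1) := fun _ hζ ↦
  (hasDerivAt_discInvolution ha hζ).differentiableAt.differentiableWithinAt

theorem hasConvexLifts_discInvolution (ha : a ∈ ball (0 : ℂ) 1) :
    HasConvexLifts (discInvolution a) (ball 0 1) (ball 0 1) :=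
  .of_leftInvOn isOpen_ball isOpen_ball (differentiableOn_discInvolution ha)
    (differentiableOn_discInvolution ha).continuousOn (mapsTo_discInvolution ha)
    (mapsTo_discInvolution ha) (leftInvOn_discInvolution ha) (leftInvOn_discInvolution ha)

theorem norm_deriv_discInvolution (ha : a ∈ ball (0 : ℂ) 1) (hζ : ζ ∈ ball (0 : ℂ) 1) :
    ‖deriv (discInvolution a) ζ‖ * (1 - ‖ζ‖ ^ 2) = 1 - ‖discInvolution a ζ‖ ^ 2 := by
  have hnorm : ‖1 - (starRingEnd ℂ) a * a‖ = 1 - ‖a‖ ^ 2 := by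
    rw [Complex.conj_mul', ← Complex.ofReal_pow, ← Complex.ofReal_one, ← Complex.ofReal_sub,
      Complex.norm_real, Real.norm_of_nonneg (one_sub_sq_norm_pos ha).le]
  rw [(hasDerivAt_discInvolution ha hζ).deriv, one_sub_sq_norm_discInvolution ha hζ, norm_div,
    norm_neg, norm_pow, hnorm]
  ring

end DiscInvolution

section SchwarzPick

variable {g : ℂ → ℂ}

theorem norm_deriv_zero_le_one_sub_sq (hg : DifferentiableOn ℂ g (ball 0 1))
    (hmaps : MapsTo g (ball 0 1) (ball 0 1)) : ‖deriv g 0‖ ≤ 1 - ‖g 0‖ ^ 2 := by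
  have hg0 : g 0 ∈ ball (0 : ℂ) 1 := hmaps (mem_ball_self one_pos)
  have hpos := one_sub_sq_norm_pos hg0
  have hschwarz : ‖deriv (discInvolution (g 0) ∘ g) 0‖ ≤ 1 / 1 := by
    refine Complex.norm_deriv_le_div_of_mapsTo_ball
      ((differentiableOn_discInvolution hg0).comp hg hmaps) ?_ one_pos
    rw [Function.comp_apply, discInvolution_self]
    exact ((mapsTo_discInvolution hg0).comp hmaps).mono_right ball_subset_closedBall
  have hderiv := norm_deriv_discInvolution hg0 hg0
  rw [discInvolution_self, norm_zero, zero_pow two_ne_zero, sub_zero] at hderiv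
  rw [deriv_comp 0 (hasDerivAt_discInvolution hg0 hg0).differentiableAt
    (hg.differentiableAt (ball_mem_nhds 0 one_pos)), norm_mul, eq_div_of_mul_eq hpos.ne' hderiv,
    div_one, one_div_mul_eq_div, div_le_one hpos] at hschwarz
  exact hschwarz

theorem norm_deriv_zero_le_of_forall_ne_zero (hg : DifferentiableOn ℂ g (ball 0 1))
    (hmaps : MapsTo g (ball 0 1) (ball 0 1)) (hne : ∀ z ∈ ball (0 : ℂ) 1, g z ≠ 0) :
    ‖deriv g 0‖ ≤ 2 * √‖g 0‖ * (1 - ‖g 0‖) := by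
  -- Apply Schwarz–Pick to a square root of `g`.
  obtain ⟨s, hs, hsq⟩ :=
    exists_differentiableOn_sq_eqOn (convex_ball (0 : ℂ) 1) isOpen_ball hg hne
  have hball : ball (0 : ℂ) 1 ∈ 𝓝 (0 : ℂ) := ball_mem_nhds 0 one_pos
  have hsmaps : MapsTo s (ball 0 1) (ball 0 1) := fun z hz ↦ by
    have := hmaps hz
    rwa [← hsq z hz, mem_ball_zero_iff, norm_pow,
      pow_lt_one_iff_of_nonneg (norm_nonneg _) two_ne_zero, ← mem_ball_zero_iff] at this
  have hnorm : ‖s 0‖ ^ 2 = ‖g 0‖ := by rw [← norm_pow, hsq 0 (mem_ball_self one_pos)]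
  have hderiv : deriv g 0 = 2 * s 0 * deriv s 0 := by
    have hpow := (hs.differentiableAt hball).hasDerivAt.fun_pow 2
    have heq : (fun z ↦ s z ^ 2) =ᶠ[𝓝 0] g := eventually_of_mem hball hsq
    rw [← heq.deriv_eq, hpow.deriv]
    norm_num
  rw [hderiv, ← hnorm, Real.sqrt_sq (norm_nonneg _), norm_mul, norm_mul, Complex.norm_two]
  gcongr
  exact norm_deriv_zero_le_one_sub_sq hs hsmaps

theorem norm_deriv_zero_mul_le_of_notMem_image (hg : DifferentiableOn ℂ g (ball 0 1))
    (hmaps : MapsTo g (ball 0 1) (ball 0 1)) (hg0 : g 0 = 0) {a : ℂ} (ha : a ∈ ball (0 : ℂ) 1)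
    (hag : a ∉ g '' ball 0 1) : ‖deriv g 0‖ * (1 + ‖a‖) ≤ 2 * √‖a‖ := by
  have h0 : (0 : ℂ) ∈ ball (0 : ℂ) 1 := mem_ball_self one_pos
  have hne : ∀ z ∈ ball (0 : ℂ) 1, discInvolution a (g z) ≠ 0 := fun z hz hzero ↦ by
    have hleft := leftInvOn_discInvolution ha (hmaps hz)
    rw [hzero, discInvolution_zero] at hleft
    exact hag ⟨z, hz, hleft.symm⟩
  have hle := norm_deriv_zero_le_of_forall_ne_zero ((differentiableOn_discInvolution ha).comp hg
    hmaps) ((mapsTo_discInvolution ha).comp hmaps) hne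
  have hderiv := norm_deriv_discInvolution ha h0
  rw [discInvolution_zero, norm_zero, zero_pow two_ne_zero, sub_zero, mul_one] at hderiv
  rw [deriv_comp 0 (by rw [hg0]; exact (hasDerivAt_discInvolution ha h0).differentiableAt)
    (hg.differentiableAt (ball_mem_nhds 0 one_pos)), norm_mul, Function.comp_apply, hg0, hderiv,
    discInvolution_zero] at hle
  have hpos : 0 < 1 - ‖a‖ := sub_pos.2 (mem_ball_zero_iff.1 ha)
  refine le_of_mul_le_mul_left ?_ hpos
  linarith

theorem strictMonoOn_two_mul_sqrt_div_one_add :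
    StrictMonoOn (fun x : ℝ ↦ 2 * √x / (1 + x)) (Icc 0 1) := by
  intro x hx y hy hxy
  have hsqrt : √x < √y := Real.sqrt_lt_sqrt hx.1 hxy
  have hmul : √x * √y < 1 := by
    nlinarith [Real.sqrt_nonneg x, Real.sqrt_le_one.2 hy.2]
  simp only
  rw [div_lt_div_iff₀ (by linarith [hx.1]) (by linarith [hy.1])]
  nlinarith [mul_pos (sub_pos.2 hsqrt) (sub_pos.2 hmul), Real.sq_sqrt hx.1, Real.sq_sqrt hy.1]

theorem ball_subset_image_of_le_norm_deriv_zero (hg : DifferentiableOn ℂ g (ball 0 1))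
    (hmaps : MapsTo g (ball 0 1) (ball 0 1)) (hg0 : g 0 = 0) {R : ℝ} (hR : R < 1)
    (hderiv : 2 * √R / (1 + R) ≤ ‖deriv g 0‖) : ball 0 R ⊆ g '' ball 0 1 := by
  intro a ha
  by_contra hag
  have haR : ‖a‖ < R := mem_ball_zero_iff.1 ha
  have hle := norm_deriv_zero_mul_le_of_notMem_image hg hmaps hg0 (ball_subset_ball hR.le ha) hag
  rw [← le_div_iff₀ (by positivity)] at hle
  exact (hderiv.trans hle).not_gt (strictMonoOn_two_mul_sqrt_div_one_add
    ⟨norm_nonneg a, (haR.trans hR).le⟩ ⟨(norm_nonneg a).trans haR.le, hR.le⟩ haR)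

end SchwarzPick

/-- A holomorphic universal covering, by the unit disc, of the component of `U` containing `z`,
with the centre of the disc lying over `z`. -/
structure DiscCover (U : Set ℂ) (z : ℂ) (ψ : ℂ → ℂ) : Prop where
  apply_zero : ψ 0 = z
  lifts : HasConvexLifts ψ (ball 0 1) U

theorem hasConvexLifts_of_isDiscCovering {U : Set ℂ} (hU : IsOpen U) {z : ℂ} {π : ℂ → ℂ}
    (hπ : IsDiscCovering π (connectedComponentIn U z)) : HasConvexLifts π (ball 0 1) U := by
  obtain ⟨hdiff, -, _, hcov⟩ := hπ
  refine (hasConvexLifts_of_isCoveringMap isOpen_ball hU.connectedComponentIn hdiff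
    hcov).extend_target hU (connectedComponentIn_subset U z) ?_
  rintro S hS hSU ⟨x, hxS, hx⟩
  rw [connectedComponentIn_eq hx]
  exact hS.subset_connectedComponentIn hxS hSU

theorem exists_discCover {U : Set ℂ} (hU : IsOpen U) {ρ : ℂ → ℝ} (hρ : IsHypDensity U ρ) {z : ℂ}
    (hz : z ∈ U) :
    ∃ ψ, DiscCover U z ψ ∧
      ∀ ζ ∈ ball (0 : ℂ) 1, ρ (ψ ζ) * ‖deriv ψ ζ‖ = 2 / (1 - ‖ζ‖ ^ 2) := by
  obtain ⟨π, hπ, hdens⟩ := hρ z hz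
  obtain ⟨a, ha, haz⟩ : z ∈ π '' ball 0 1 := hπ.2.1.symm ▸ mem_connectedComponentIn hz
  refine ⟨π ∘ discInvolution a, ⟨by rw [Function.comp_apply, discInvolution_zero, haz],
    (hasConvexLifts_of_isDiscCovering hU hπ).comp (hasConvexLifts_discInvolution ha)⟩,
    fun ζ hζ ↦ ?_⟩
  have haζ := mapsTo_discInvolution ha hζ
  rw [deriv_comp ζ (hπ.1.differentiableAt (isOpen_ball.mem_nhds haζ))
    (hasDerivAt_discInvolution ha hζ).differentiableAt, norm_mul, ← mul_assoc,
    Function.comp_apply, hdens _ haζ, eq_div_iff (one_sub_sq_norm_pos hζ).ne', mul_assoc,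
    norm_deriv_discInvolution ha hζ, div_mul_cancel₀ _ (one_sub_sq_norm_pos haζ).ne']

namespace DiscCover

variable {U X Y : Set ℂ} {F ψ g : ℂ → ℂ} {w x z : ℂ} {r R : ℝ}

theorem exists_differentiableOn_lift (hψ : DiscCover U w ψ) {S : Set ℂ} (hS : Convex ℝ S)
    (hSo : IsOpen S) (hg : DifferentiableOn ℂ g S) (hgU : MapsTo g S U) (hx : x ∈ S)
    (hgx : g x = w) :
    ∃ φ : ℂ → ℂ, DifferentiableOn ℂ φ S ∧ MapsTo φ S (ball 0 1) ∧ φ x = 0 ∧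
      EqOn (ψ ∘ φ) g S ∧ deriv ψ 0 * deriv φ x = deriv g x := by
  have h0 : (0 : ℂ) ∈ ball (0 : ℂ) 1 := mem_ball_self one_pos
  obtain ⟨φ, hφ, hφmaps, hφx, hψφ⟩ := hψ.lifts.exists_differentiableOn_lift hS hSo hg hgU hx h0
    (hψ.apply_zero.trans hgx.symm)
  refine ⟨φ, hφ, hφmaps, hφx, hψφ, ?_⟩
  rw [← hφx]
  exact deriv_mul_deriv_of_comp_eventuallyEq (hψ.lifts.differentiableAt (hφmaps hx))
    (hφ.differentiableAt (hSo.mem_nhds hx)) (hψφ.eventuallyEq_of_mem (hSo.mem_nhds hx))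

theorem norm_deriv_le (hψ : DiscCover U w ψ) (hr : 0 < r) (hg : DifferentiableOn ℂ g (ball x r))
    (hgU : MapsTo g (ball x r) U) (hgx : g x = w) : ‖deriv g x‖ ≤ ‖deriv ψ 0‖ / r := by
  obtain ⟨φ, hφ, hφmaps, hφx, -, hderiv⟩ := hψ.exists_differentiableOn_lift (convex_ball x r)
    isOpen_ball hg hgU (mem_ball_self hr) hgx
  have hschwarz : ‖deriv φ x‖ ≤ 1 / r := Complex.norm_deriv_le_div_of_mapsTo_ball hφ
    (by rw [hφx]; exact hφmaps.mono_right ball_subset_closedBall) hr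
  rw [← hderiv, norm_mul, ← mul_one_div]
  gcongr

theorem le_norm_deriv_zero (hψ : DiscCover U w ψ) (hr : 0 < r) (hball : ball w r ⊆ U) :
    r ≤ ‖deriv ψ 0‖ := by
  have := hψ.norm_deriv_le hr differentiableOn_id hball rfl
  rwa [deriv_id, norm_one, one_le_div hr] at this

theorem norm_deriv_zero_le (hψ : DiscCover U w ψ) (hg : DifferentiableOn ℂ g (ball 0 1))
    (hgU : MapsTo g (ball 0 1) U) (hg0 : g 0 = w) : ‖deriv g 0‖ ≤ ‖deriv ψ 0‖ := by
  simpa using hψ.norm_deriv_le one_pos hg hgU hg0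

theorem image_ball_subset_image (hψ : DiscCover U w ψ) (hg : DifferentiableOn ℂ g (ball 0 1))
    (hgU : MapsTo g (ball 0 1) U) (hg0 : g 0 = w) (hR : R < 1)
    (hderiv : 2 * √R / (1 + R) * ‖deriv ψ 0‖ ≤ ‖deriv g 0‖) :
    ψ '' ball 0 R ⊆ g '' ball 0 1 := by
  have h0 : (0 : ℂ) ∈ ball (0 : ℂ) 1 := mem_ball_self one_pos
  obtain ⟨φ, hφ, hφmaps, hφ0, hψφ, hφ'⟩ := hψ.exists_differentiableOn_lift (convex_ball 0 1)
    isOpen_ball hg hgU h0 hg0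
  rw [← hφ', norm_mul, mul_comm] at hderiv
  have hle := le_of_mul_le_mul_left hderiv (norm_pos_iff.2 (hψ.lifts.deriv_ne_zero h0))
  calc ψ '' ball 0 R ⊆ ψ '' (φ '' ball 0 1) :=
        image_mono (ball_subset_image_of_le_norm_deriv_zero hφ hφmaps hφ0 hR hle)
    _ = g '' ball 0 1 := by rw [← image_comp, hψφ.image_eq]

theorem exists_lift (hψ : DiscCover Y (F x) ψ) (hF : HasConvexLifts F X Y) (hx : x ∈ X) :
    ∃ π, DiscCover X x π ∧ EqOn (F ∘ π) ψ (ball 0 1) := by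
  obtain ⟨π, hπ, hπX, hπ0, hFπ⟩ := hF.exists_differentiableOn_lift (convex_ball 0 1) isOpen_ball
    hψ.lifts.differentiableOn hψ.lifts.mapsTo (mem_ball_self one_pos) hx hψ.apply_zero.symm
  exact ⟨π, ⟨hπ0, hF.of_comp hψ.lifts hπ hπX hFπ⟩, hFπ⟩

/-- The conformal radii `‖deriv (π n) 0‖` decrease to a positive limit, so the inclusions between
late `X n` are almost isometric at `w`. -/
theorem eventually_image_ball_subset {X : ℕ → Set ℂ} (hX : Antitone X) {π : ℕ → ℂ → ℂ}
    (hπ : ∀ n, DiscCover (X n) w (π n)) (hr : 0 < r) (hball : ∀ n, ball w r ⊆ X n) (hR0 : 0 < R)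
    (hR : R < 1) : ∀ᶠ n in atTop, ∀ᶠ m in atTop, π n '' ball 0 R ⊆ X m := by
  have hmaps {n m : ℕ} (hnm : n ≤ m) : MapsTo (π m) (ball 0 1) (X n) :=
    (hπ m).lifts.mapsTo.mono_right (hX hnm)
  have hanti : Antitone fun n ↦ ‖deriv (π n) 0‖ := fun n m hnm ↦ (hπ n).norm_deriv_zero_le
    (hπ m).lifts.differentiableOn (hmaps hnm) (hπ m).apply_zero
  have hlow (n : ℕ) : r ≤ ‖deriv (π n) 0‖ := (hπ n).le_norm_deriv_zero hr (hball n)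
  have hbdd : BddBelow (range fun n ↦ ‖deriv (π n) 0‖) := ⟨r, forall_mem_range.2 hlow⟩
  have hratio : 2 * √R / (1 + R) < 1 := by
    simpa [one_add_one_eq_two] using
      strictMonoOn_two_mul_sqrt_div_one_add ⟨hR0.le, hR.le⟩ (right_mem_Icc.2 zero_le_one) hR
  have hlt : 2 * √R / (1 + R) * (⨅ n, ‖deriv (π n) 0‖) < ⨅ n, ‖deriv (π n) 0‖ :=
    mul_lt_of_lt_one_left (hr.trans_le (le_ciInf hlow)) hratio
  filter_upwards [((tendsto_atTop_ciInf hanti hbdd).const_mul _).eventually_lt_const hlt] with n hn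
  filter_upwards [eventually_ge_atTop n] with m hnm
  exact ((hπ n).image_ball_subset_image (hπ m).lifts.differentiableOn (hmaps hnm)
    (hπ m).apply_zero hR (hn.le.trans (ciInf_le hbdd m))).trans (hπ m).lifts.mapsTo.image_subset

end DiscCover

section PathLength

theorem hasDerivAt_of_comp_eventuallyEq {F : ℂ → ℂ} {γ Γ : ℝ → ℂ} {t : ℝ} {v : ℂ}
    (hF : DifferentiableAt ℂ F (Γ t)) (hF' : deriv F (Γ t) ≠ 0) (hΓ : ContinuousAt Γ t)
    (hγ : HasDerivAt γ v t) (hFΓ : F ∘ Γ =ᶠ[𝓝 t] γ) : HasDerivAt Γ (v / deriv F (Γ t)) t := by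
  have hΓ' := (hF.hasDerivAt.hasFDerivAt.restrictScalars ℝ).of_comp_of_leftInverse hΓ
    hγ.hasFDerivAt hFΓ
    (f'symm := (ContinuousLinearMap.toSpanSingleton ℂ (deriv F (Γ t))⁻¹).restrictScalars ℝ)
    (fun x ↦ by simp [hF'])
  exact hΓ'.hasDerivAt.congr_deriv (by simp [div_eq_mul_inv])

/-- `-log (1 - ‖ζ‖ ^ 2)` vanishes at `0` and its gradient is at most the Poincaré density. -/
theorem neg_log_one_sub_sq_norm_le_integral {E : Type*} [NormedAddCommGroup E]
    [InnerProductSpace ℝ E] {Γ v : ℝ → E} (hΓ : ContinuousOn Γ (Icc 0 1))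
    (hΓmaps : MapsTo Γ (Icc 0 1) (ball 0 1)) (hΓ0 : Γ 0 = 0)
    (hderiv : ∀ t ∈ Ioo (0 : ℝ) 1, HasDerivAt Γ (v t) t)
    (hint : MeasureTheory.IntegrableOn (fun t ↦ 2 / (1 - ‖Γ t‖ ^ 2) * ‖v t‖) (Icc 0 1)) :
    -Real.log (1 - ‖Γ 1‖ ^ 2) ≤ ∫ t in (0 : ℝ)..1, 2 / (1 - ‖Γ t‖ ^ 2) * ‖v t‖ := by
  have hpos (t : ℝ) (ht : t ∈ Icc (0 : ℝ) 1) := one_sub_sq_norm_pos (hΓmaps ht)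
  have hcont : ContinuousOn (fun t ↦ -Real.log (1 - ‖Γ t‖ ^ 2)) (Icc 0 1) :=
    ((continuousOn_const.sub (hΓ.norm.pow 2)).log fun t ht ↦ (hpos t ht).ne').neg
  have hle := intervalIntegral.sub_le_integral_of_hasDeriv_right_of_le zero_le_one hcont
    (g' := fun t ↦ 2 * inner ℝ (Γ t) (v t) / (1 - ‖Γ t‖ ^ 2)) (fun t ht ↦ ?_) hint
    fun t ht ↦ ?_
  · simpa [hΓ0] using hle
  · have hlog := (((hderiv t ht).norm_sq.const_sub 1).log
      (hpos t (Ioo_subset_Icc_self ht)).ne').neg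
    exact (hlog.congr_deriv (by ring)).hasDerivWithinAt
  · have ht' := Ioo_subset_Icc_self ht
    have hinner : inner ℝ (Γ t) (v t) ≤ ‖v t‖ := (real_inner_le_norm _ _).trans
      (mul_le_of_le_one_left (norm_nonneg _) (mem_ball_zero_iff.1 (hΓmaps ht')).le)
    have := hpos t ht'
    calc 2 * inner ℝ (Γ t) (v t) / (1 - ‖Γ t‖ ^ 2) ≤ 2 * ‖v t‖ / (1 - ‖Γ t‖ ^ 2) := by gcongr
      _ = 2 / (1 - ‖Γ t‖ ^ 2) * ‖v t‖ := by ring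

theorem DiscCover.exists_neg_log_le_hypLength {U : Set ℂ} {ρ : ℂ → ℝ} {z : ℂ} {ψ : ℂ → ℂ}
    (hψ : DiscCover U z ψ)
    (hdens : ∀ ζ ∈ ball (0 : ℂ) 1, ρ (ψ ζ) * ‖deriv ψ ζ‖ = 2 / (1 - ‖ζ‖ ^ 2)) {γ : ℝ → ℂ}
    (hγ : ContDiffOn ℝ 1 γ (Icc 0 1)) (hγU : MapsTo γ (Icc 0 1) U) (hγ0 : γ 0 = z) :
    ∃ ζ ∈ ball (0 : ℂ) 1, ψ ζ = γ 1 ∧ -Real.log (1 - ‖ζ‖ ^ 2) ≤ hypLength ρ γ := by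
  obtain ⟨Γ, hΓ, hΓmaps, hΓ0, hψΓ⟩ := hψ.lifts.exists_path_lift hγ.continuousOn hγU
    (mem_ball_self one_pos) (hψ.apply_zero.trans hγ0.symm)
  refine ⟨Γ 1, hΓmaps (right_mem_Icc.2 zero_le_one), hψΓ (right_mem_Icc.2 zero_le_one), ?_⟩
  have hψ' (t : ℝ) (ht : t ∈ Icc (0 : ℝ) 1) : deriv ψ (Γ t) ≠ 0 :=
    hψ.lifts.deriv_ne_zero (hΓmaps ht)
  set v : ℝ → ℂ := fun t ↦ derivWithin γ (Icc 0 1) t / deriv ψ (Γ t)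
  have hv : ContinuousOn v (Icc 0 1) :=
    (hγ.continuousOn_derivWithin (uniqueDiffOn_Icc zero_lt_one) le_rfl).div
      ((hψ.lifts.differentiableOn.deriv isOpen_ball).continuousOn.comp hΓ hΓmaps) hψ'
  have hint : MeasureTheory.IntegrableOn (fun t ↦ 2 / (1 - ‖Γ t‖ ^ 2) * ‖v t‖) (Icc 0 1) :=
    ((continuousOn_const.div (continuousOn_const.sub (hΓ.norm.pow 2))
      fun t ht ↦ (one_sub_sq_norm_pos (hΓmaps ht)).ne').mul hv.norm).integrableOn_Icc
  have hderiv (t : ℝ) (ht : t ∈ Ioo (0 : ℝ) 1) : HasDerivAt Γ (v t) t := by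
    have hmem : Icc (0 : ℝ) 1 ∈ 𝓝 t := Icc_mem_nhds ht.1 ht.2
    have ht' := Ioo_subset_Icc_self ht
    exact hasDerivAt_of_comp_eventuallyEq (hψ.lifts.differentiableAt (hΓmaps ht')) (hψ' t ht')
      (hΓ.continuousAt hmem)
      ((hγ.differentiableOn one_ne_zero t ht').hasDerivWithinAt.hasDerivAt hmem)
      (hψΓ.eventuallyEq_of_mem hmem)
  refine (neg_log_one_sub_sq_norm_le_integral hΓ hΓmaps hΓ0 hderiv hint).trans_eq ?_
  refine intervalIntegral.integral_congr_Ioo_of_le zero_le_one fun t ht ↦ ?_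
  have ht' := Ioo_subset_Icc_self ht
  have hγt : ψ (Γ t) = γ t := hψΓ ht'
  simp only [v, norm_div]
  rw [← hdens _ (hΓmaps ht'), hγt, derivWithin_of_mem_nhds (Icc_mem_nhds ht.1 ht.2), mul_assoc,
    mul_div_cancel₀ _ (norm_ne_zero_iff.2 (hψ' t ht'))]

end PathLength

/-! ### Iterates of an expanding covering -/

/-- The set of points of `U` whose first `n` iterates under `f : U' → U` are defined. -/
def iterDomain (f : ℂ → ℂ) (U' U : Set ℂ) (n : ℕ) : Set ℂ :=
  {z ∈ U | ∀ i < n, f^[i] z ∈ U'}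

/-- The set `𝒲` of points of `U'` with a neighborhood all of whose iterates stay in `U'`. -/
def stableSet (f : ℂ → ℂ) (U' : Set ℂ) : Set ℂ :=
  {z : ℂ | z ∈ U' ∧ ∃ N : Set ℂ, IsOpen N ∧ z ∈ N ∧ ∀ n : ℕ, f^[n] '' N ⊆ U'}

section IterDomain

variable {f : ℂ → ℂ} {U' U : Set ℂ}

theorem iterDomain_subset (n : ℕ) : iterDomain f U' U n ⊆ U := sep_subset _ _

theorem iterDomain_zero : iterDomain f U' U 0 = U := by simp [iterDomain]

theorem iterDomain_succ (n : ℕ) :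
    iterDomain f U' U (n + 1) = iterDomain f U' U n ∩ f^[n] ⁻¹' U' := by
  ext z
  simp only [iterDomain, mem_inter_iff, mem_ofPred_eq, mem_preimage, Nat.forall_lt_succ_right,
    and_assoc]

theorem antitone_iterDomain : Antitone (iterDomain f U' U) :=
  fun _ _ hmn _ hz ↦ ⟨hz.1, fun i hi ↦ hz.2 i (hi.trans_le hmn)⟩

theorem isOpen_stableSet : IsOpen (stableSet f U') := by
  refine isOpen_iff_mem_nhds.2 ?_
  rintro z ⟨-, N, hN, hzN, hNU⟩
  filter_upwards [hN.mem_nhds hzN] with x hx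
  exact ⟨hNU 0 ⟨x, hx, rfl⟩, N, hN, hx, hNU⟩

theorem subset_stableSet {N : Set ℂ} (hN : IsOpen N)
    (hdom : ∀ᶠ n in atTop, N ⊆ iterDomain f U' U n) : N ⊆ stableSet f U' := by
  have horbit (n : ℕ) : f^[n] '' N ⊆ U' := by
    obtain ⟨m, hm, hnm⟩ := (hdom.and (eventually_gt_atTop n)).exists
    rintro _ ⟨z, hz, rfl⟩
    exact (hm hz).2 n hnm
  exact fun z hz ↦ ⟨horbit 0 ⟨z, hz, rfl⟩, N, hN, hz, horbit⟩

end IterDomain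

/-- A holomorphic covering `f : U' → U` with `U' ⊆ U`, which does not contract the hyperbolic
metric of `U`. Only the lifting property of coverings is recorded. -/
structure ExpandingCovering (f : ℂ → ℂ) (U' U : Set ℂ) : Prop where
  subset : U' ⊆ U
  lifts : HasConvexLifts f U' U

namespace ExpandingCovering

variable {f : ℂ → ℂ} {U' U : Set ℂ} (hf : ExpandingCovering f U' U)
include hf

theorem hasConvexLifts_iterate (n : ℕ) : HasConvexLifts f^[n] (iterDomain f U' U n) U := by
  induction n with
  | zero =>
    rw [iterDomain_zero]
    exact HasConvexLifts.id hf.lifts.isOpen_target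
  | succ n ih =>
    rw [Function.iterate_succ', iterDomain_succ]
    exact hf.lifts.comp (ih.restrict hf.lifts.isOpen_source hf.subset)

theorem iterDomain_add (n m : ℕ) :
    iterDomain f U' U (n + m) = iterDomain f U' U n ∩ f^[n] ⁻¹' iterDomain f U' U m := by
  induction m with
  | zero =>
    rw [iterDomain_zero, add_zero,
      inter_eq_left.2 (hf.hasConvexLifts_iterate n).mapsTo.subset_preimage]
  | succ m ih =>
    rw [← add_assoc, iterDomain_succ, ih, iterDomain_succ, preimage_inter, ← preimage_comp,
      ← Function.iterate_add, inter_assoc, add_comm m]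

theorem stableSet_subset_iterDomain (n : ℕ) : stableSet f U' ⊆ iterDomain f U' U n := by
  rintro z ⟨hz, N, -, hzN, hNU⟩
  exact ⟨hf.subset hz, fun i _ ↦ hNU i ⟨z, hzN, rfl⟩⟩

theorem stableSet_subset : stableSet f U' ⊆ U :=
  (hf.stableSet_subset_iterDomain 0).trans (iterDomain_subset 0)

theorem mapsTo_iterate_stableSet (n : ℕ) : MapsTo f^[n] (stableSet f U') (stableSet f U') := by
  have hopen := (hf.hasConvexLifts_iterate n).isOpen_image isOpen_stableSet
    (hf.stableSet_subset_iterDomain n)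
  refine mapsTo_iff_image_subset.2 (subset_stableSet (U := U) hopen (.of_forall fun m ↦ ?_))
  have hdom := hf.stableSet_subset_iterDomain (n + m)
  rw [hf.iterDomain_add] at hdom
  exact image_subset_iff.2 (hdom.trans inter_subset_right)

theorem mem_stableSet_of_iterate {n : ℕ} {z : ℂ} (hz : z ∈ iterDomain f U' U n)
    (hfz : f^[n] z ∈ stableSet f U') : z ∈ stableSet f U' := by
  have hopen := ((hf.hasConvexLifts_iterate n).restrict isOpen_stableSet
    hf.stableSet_subset).isOpen_source
  refine subset_stableSet (U := U) hopen (.of_forall fun m ↦ ?_) ⟨hz, hfz⟩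
  refine (inter_subset_inter_right _ (preimage_mono (hf.stableSet_subset_iterDomain m))).trans ?_
  rw [← hf.iterDomain_add]
  exact antitone_iterDomain (Nat.le_add_left m n)

theorem eventually_image_ball_subset {w : ℂ} (hw : w ∈ stableSet f U') {R : ℝ} (hR0 : 0 < R)
    (hR : R < 1) {ψ : ℕ → ℂ → ℂ} (hψ : ∀ n, DiscCover U (f^[n] w) (ψ n)) :
    ∀ᶠ n in atTop, ψ n '' ball 0 R ⊆ stableSet f U' := by
  choose π hπ hfπ using fun n ↦
    (hψ n).exists_lift (hf.hasConvexLifts_iterate n) (hf.stableSet_subset_iterDomain n hw)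
  obtain ⟨r, hr, hball⟩ := isOpen_iff.1 isOpen_stableSet w hw
  have hevent := DiscCover.eventually_image_ball_subset antitone_iterDomain hπ hr
    (fun n ↦ hball.trans (hf.stableSet_subset_iterDomain n)) hR0 hR
  filter_upwards [hevent] with n hn
  have hBR : ball (0 : ℂ) R ⊆ ball 0 1 := ball_subset_ball hR.le
  have hstable := subset_stableSet ((hπ n).lifts.isOpen_image isOpen_ball hBR) hn
  rw [← ((hfπ n).mono hBR).image_eq, image_comp]
  exact ((hf.mapsTo_iterate_stableSet n).mono_left hstable).image_subset

theorem tendsto_hypDistToSet {ρ : ℂ → ℝ} (hρ : IsHypDensity U ρ) {w : ℂ}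
    (hw : w ∈ stableSet f U') :
    Tendsto (fun m : ℕ ↦ hypDistToSet U ρ (f^[m] w) (U \ stableSet f U')) atTop (𝓝 ⊤) := by
  choose ψ hψ hdens using fun n ↦ exists_discCover hf.lifts.isOpen_target hρ
    (hf.stableSet_subset (hf.mapsTo_iterate_stableSet n hw))
  refine ENNReal.tendsto_nhds_top_iff_nnreal.2 fun M ↦ ?_
  -- The disc of radius `R` contains the hyperbolic disc of radius `M + 1`.
  set R : ℝ := √(1 - Real.exp (-(M + 1)) / 2)
  have hexp_pos := Real.exp_pos (-((M : ℝ) + 1))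
  have hexp_le : Real.exp (-((M : ℝ) + 1)) ≤ 1 :=
    Real.exp_le_one_iff.2 (by linarith [NNReal.coe_nonneg M])
  have hR0 : 0 < R := Real.sqrt_pos.2 (by linarith)
  have hR1 : R < 1 := (Real.sqrt_lt' one_pos).2 (by linarith)
  filter_upwards [hf.eventually_image_ball_subset hw hR0 hR1 hψ] with n hn
  have hM : (M : ℝ≥0∞) < ENNReal.ofReal (M + 1) :=
    ENNReal.coe_lt_coe.2 (Real.lt_toNNReal_iff_coe_lt.2 (lt_add_one _))
  refine hM.trans_le (le_iInf₂ fun e he ↦ le_iInf₂ fun γ hγ ↦ ENNReal.ofReal_le_ofReal ?_)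
  by_contra! hlen
  obtain ⟨hγ, hγU, hγ0, rfl⟩ := hγ
  obtain ⟨ζ, hζ, hψζ, hlog⟩ := (hψ n).exists_neg_log_le_hypLength (hdens n) hγ hγU hγ0
  have hlt : Real.exp (-((M : ℝ) + 1)) < 1 - ‖ζ‖ ^ 2 :=
    (Real.lt_log_iff_exp_lt (one_sub_sq_norm_pos hζ)).1 (by linarith)
  refine he.2 (hn ⟨ζ, mem_ball_zero_iff.2 (Real.lt_sqrt_of_sq_lt ?_), hψζ⟩)
  linarith

end ExpandingCovering

theorem DiscCover.norm_deriv_mul_le {F g ψ : ℂ → ℂ} {U X Y : Set ℂ} {c x : ℂ} {r : ℝ}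
    (hψ : DiscCover U x ψ) (hF : HasConvexLifts F X Y) (hXU : X ⊆ U) (hx : x ∈ X) (hr : 0 < r)
    (hg : DifferentiableOn ℂ g (ball c r)) (hgY : MapsTo g (ball c r) Y) (hgc : F x = g c) :
    ‖deriv g c‖ * r ≤ ‖deriv F x‖ * ‖deriv ψ 0‖ := by
  have hmem : c ∈ ball c r := mem_ball_self hr
  obtain ⟨σ, hσ, hσX, hσc, hFσ⟩ := hF.exists_differentiableOn_lift (convex_ball c r)
    isOpen_ball hg hgY hmem hx hgc
  have hmul := deriv_mul_deriv_of_comp_eventuallyEq (hF.differentiableAt (hσX hmem))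
    (hσ.differentiableAt (ball_mem_nhds _ hr)) (hFσ.eventuallyEq_of_mem (ball_mem_nhds _ hr))
  rw [hσc] at hmul
  have hle := hψ.norm_deriv_le hr hσ (hσX.mono_right hXU) hσc
  rw [le_div_iff₀ hr] at hle
  calc ‖deriv g c‖ * r = ‖deriv F x‖ * (‖deriv σ c‖ * r) := by rw [← hmul, norm_mul, mul_assoc]
    _ ≤ ‖deriv F x‖ * ‖deriv ψ 0‖ := by gcongr

theorem ExpandingCovering.notMem_of_tendstoLocallyUniformlyOn {f : ℂ → ℂ} {U' U W : Set ℂ}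
    {w z₀ : ℂ} {ψ : ℂ → ℂ} (hf : ExpandingCovering f U' U) (hψ : DiscCover U w ψ)
    (hW : IsOpen W) (hWsub : W ⊆ stableSet f U') (hw : w ∈ W) {nk : ℕ → ℕ}
    (hconv : TendstoLocallyUniformlyOn (fun k ↦ f^[nk k]) (fun _ ↦ z₀) atTop W) : z₀ ∉ U := by
  intro hz₀
  obtain ⟨δ, hδ, hball⟩ := isOpen_iff.1 hf.lifts.isOpen_target z₀ hz₀
  have hdom (n : ℕ) : W ⊆ iterDomain f U' U n := hWsub.trans (hf.stableSet_subset_iterDomain n)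
  have hderiv : Tendsto (fun k ↦ ‖deriv f^[nk k] w‖ * ‖deriv ψ 0‖) atTop (𝓝 0) := by
    have hdiff (k : ℕ) : DifferentiableOn ℂ f^[nk k] W :=
      (hf.hasConvexLifts_iterate _).differentiableOn.mono (hdom _)
    simpa using ((hconv.deriv (.of_forall hdiff) hW).tendsto_at hw).norm.mul_const ‖deriv ψ 0‖
  obtain ⟨k, hk, hkw⟩ := ((hderiv.eventually_lt_const (half_pos hδ)).and
    ((hconv.tendsto_at hw).eventually (ball_mem_nhds z₀ (half_pos hδ)))).exists
  have hle := hψ.norm_deriv_mul_le (hf.hasConvexLifts_iterate (nk k)) (iterDomain_subset _)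
    (hdom _ hw) (half_pos hδ) differentiableOn_id
    ((ball_subset_ball' (by linarith [mem_ball.1 hkw])).trans hball) rfl
  rw [deriv_id, norm_one, one_mul] at hle
  exact hk.not_ge hle

/-! ### Holomorphic functions on a punctured disc -/

section ExpHalfPlane

open Complex (I)
open scoped Real

theorem sub_eq_sub_of_exp_eqOn {A₁ A₂ : ℂ → ℂ} {S : Set ℂ} (hS : IsPreconnected S)
    (h₁ : ContinuousOn A₁ S) (h₂ : ContinuousOn A₂ S)
    (hexp : EqOn (Complex.exp ∘ A₁) (Complex.exp ∘ A₂) S) {s t : ℂ} (hs : s ∈ S) (ht : t ∈ S) :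
    A₁ t - A₂ t = A₁ s - A₂ s := by
  have heq : EqOn A₁ (fun u ↦ A₂ u + (A₁ s - A₂ s)) S := by
    refine HasConvexLifts.exp.eqOn_of_comp_eqOn hS h₁ (h₂.add continuousOn_const)
      (mapsTo_univ _ _) (mapsTo_univ _ _) (fun u hu ↦ ?_) hs (by ring)
    have hs' : Complex.exp (A₁ s) = Complex.exp (A₂ s) := hexp hs
    simpa [Complex.exp_add, Complex.exp_sub, hs'] using hexp hu
  rw [heq ht, add_sub_cancel_left]

theorem eq_of_exp_eqOn_comp {N S : Set ℂ} {m g A : ℂ → ℂ} (hN : Convex ℝ N)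
    (hm : ContinuousOn m N) (hm₀ : ∀ z ∈ N, m z ≠ 0) (hS : IsPreconnected S)
    (hg : ContinuousOn g S) (hgN : MapsTo g S N) (hA : ContinuousOn A S)
    (hexp : EqOn (Complex.exp ∘ A) (m ∘ g) S) {ζ ζ' : ℂ} (hζ : ζ ∈ S) (hζ' : ζ' ∈ S)
    (hgg : g ζ' = g ζ) : A ζ' = A ζ := by
  obtain ⟨q, hq, -, -, hqm⟩ := HasConvexLifts.exp.exists_continuousOn_lift hN hm hm₀ (hgN hζ)
    (mem_univ _) (Complex.exp_log (hm₀ _ (hgN hζ)))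
  have hsub := sub_eq_sub_of_exp_eqOn hS hA (hq.comp hg hgN)
    (fun t ht ↦ (hexp ht).trans (hqm (hgN ht)).symm) hζ hζ'
  rwa [Function.comp_apply, Function.comp_apply, hgg, sub_left_inj] at hsub

/-- The half-plane mapped by `exp` onto the punctured disc of radius `r` around `0`. -/
def expHalfPlane (r : ℝ) : Set ℂ := {ζ : ℂ | ζ.re < Real.log r}

variable {A g : ℂ → ℂ} {r : ℝ} {z₀ ζ a c : ℂ}

theorem convex_expHalfPlane (r : ℝ) : Convex ℝ (expHalfPlane r) := convex_halfSpace_re_lt _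

theorem isOpen_expHalfPlane (r : ℝ) : IsOpen (expHalfPlane r) :=
  isOpen_lt Complex.continuous_re continuous_const

theorem nonempty_expHalfPlane (r : ℝ) : (expHalfPlane r).Nonempty :=
  ⟨((Real.log r - 1 : ℝ) : ℂ), by
    simp only [expHalfPlane, mem_ofPred_eq, Complex.ofReal_re, sub_one_lt]⟩

theorem mem_expHalfPlane (hr : 0 < r) : ζ ∈ expHalfPlane r ↔ ‖Complex.exp ζ‖ < r := by
  rw [Complex.norm_exp]
  exact Real.lt_log_iff_exp_lt hr

theorem add_mem_expHalfPlane (hζ : ζ ∈ expHalfPlane r) (ha : a.re = 0) :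
    ζ + a ∈ expHalfPlane r := by
  simpa [expHalfPlane, ha] using hζ

theorem image_add_exp_expHalfPlane (z₀ : ℂ) (hr : 0 < r) :
    (fun ζ ↦ z₀ + Complex.exp ζ) '' expHalfPlane r = ball z₀ r \ {z₀} := by
  ext z
  constructor
  · rintro ⟨ζ, hζ, rfl⟩
    simpa [Complex.exp_ne_zero] using (mem_expHalfPlane hr).1 hζ
  · rintro ⟨hz, hz₀⟩
    have hexp := Complex.exp_log (sub_ne_zero.2 hz₀)
    refine ⟨Complex.log (z - z₀), (mem_expHalfPlane hr).2 ?_, by simp [hexp]⟩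
    rwa [hexp, ← dist_eq_norm]

theorem add_exp_mem (hr : 0 < r) (hζ : ζ ∈ expHalfPlane r) :
    z₀ + Complex.exp ζ ∈ ball z₀ r \ {z₀} :=
  image_add_exp_expHalfPlane z₀ hr ▸ mem_image_of_mem _ hζ

theorem exp_mem (hr : 0 < r) (hζ : ζ ∈ expHalfPlane r) : Complex.exp ζ ∈ ball 0 r \ {0} := by
  simpa using add_exp_mem (z₀ := 0) hr hζ

theorem exists_exp_eq (hr : 0 < r) {z : ℂ} (hz : z ∈ ball (0 : ℂ) r \ {0}) :
    ∃ ζ ∈ expHalfPlane r, Complex.exp ζ = z := by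
  rw [← image_add_exp_expHalfPlane 0 hr] at hz
  simpa using hz

theorem isPreconnected_ball_diff_singleton (z₀ : ℂ) (hr : 0 < r) :
    IsPreconnected (ball z₀ r \ {z₀}) := by
  rw [← image_add_exp_expHalfPlane z₀ hr]
  exact (convex_expHalfPlane r).isPreconnected.image _ (by fun_prop)

theorem re_eq_zero_of_exp_eq_one (ha : Complex.exp a = 1) : a.re = 0 := by
  simpa [Complex.norm_exp] using congrArg norm ha

theorem exp_intCast_mul_two_pi_mul_I (j : ℤ) : Complex.exp (j * (2 * π * I)) = 1 :=
  Complex.exp_eq_one_iff.2 ⟨j, rfl⟩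

theorem add_eq_of_exp_comp_add_eq (ha : a.re = 0) (hA : ContinuousOn A (expHalfPlane r))
    (hexp : ∀ ζ ∈ expHalfPlane r, Complex.exp (A (ζ + a)) = Complex.exp (A ζ)) {ζ₀ : ℂ}
    (hζ₀ : ζ₀ ∈ expHalfPlane r) (hc : A (ζ₀ + a) = A ζ₀ + c) (hζ : ζ ∈ expHalfPlane r) :
    A (ζ + a) = A ζ + c := by
  have hsub := sub_eq_sub_of_exp_eqOn (convex_expHalfPlane r).isPreconnected
    (hA.comp (continuous_add_const a).continuousOn fun _ hξ ↦ add_mem_expHalfPlane hξ ha) hA hexp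
    hζ₀ hζ
  simp only [Function.comp_apply, hc] at hsub
  linear_combination hsub

theorem add_intCast_mul_eq (ha : a.re = 0) (h : ∀ ζ ∈ expHalfPlane r, A (ζ + a) = A ζ + c)
    (k : ℤ) (hζ : ζ ∈ expHalfPlane r) : A (ζ + k * a) = A ζ + k * c := by
  have hmem (k : ℤ) : ζ + k * a ∈ expHalfPlane r := add_mem_expHalfPlane hζ (by simp [ha])
  induction k using Int.induction_on with
  | zero => simp
  | succ k ih =>
    have hstep := h _ (hmem k)
    rw [ih] at hstep
    push_cast at hstep ⊢
    rw [show ζ + (k + 1) * a = ζ + k * a + a by ring, hstep]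
    ring
  | pred k ih =>
    have hstep := h _ (hmem (-k - 1))
    push_cast at hstep ih ⊢
    rw [show ζ + (-k - 1) * a + a = ζ + -k * a by ring, ih] at hstep
    linear_combination -hstep

theorem add_natAbs_mul_eq {d : ℤ} (ha : a.re = 0)
    (h : ∀ ζ ∈ expHalfPlane r, A (ζ + d * a) = A ζ + c) (hζ : ζ ∈ expHalfPlane r) :
    A (ζ + d.natAbs * a) = A ζ + d.sign * c := by
  have hd : (d.natAbs : ℂ) = d.sign * d := by
    rw [← Int.cast_natCast, ← Int.sign_mul_self_eq_natAbs, Int.cast_mul]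
  rw [hd, mul_assoc, add_intCast_mul_eq (by simp [ha]) h _ hζ]

theorem natCast_mul_mem_expHalfPlane {D : ℕ} (hD : D ≠ 0) {R : ℝ} :
    (D : ℂ) * ζ ∈ expHalfPlane (R ^ D) ↔ ζ ∈ expHalfPlane R := by
  simp [expHalfPlane, Real.log_pow, hD, Nat.pos_iff_ne_zero]

theorem exists_comp_exp_eqOn (hr : 0 < r) (hg : DifferentiableOn ℂ g (expHalfPlane r))
    (hper : ∀ ζ ∈ expHalfPlane r, g (ζ + 2 * π * I) = g ζ) :
    ∃ h : ℂ → ℂ, DifferentiableOn ℂ h (ball 0 r \ {0}) ∧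
      EqOn (h ∘ Complex.exp) g (expHalfPlane r) := by
  have hlog (ζ : ℂ) (hζ : ζ ∈ expHalfPlane r) : g (Complex.log (Complex.exp ζ)) = g ζ := by
    obtain ⟨k, hk⟩ := Complex.exp_eq_exp_iff_exists_int.1 (Complex.exp_log (Complex.exp_ne_zero ζ))
    simpa [hk] using add_intCast_mul_eq (c := 0) (by simp) (by simpa using hper) k hζ
  refine ⟨g ∘ Complex.log, fun z hz ↦ ?_, hlog⟩
  have hz₀ : 0 < ‖z‖ := norm_pos_iff.2 hz.2
  obtain ⟨L, hL, hexp⟩ := exists_differentiableOn_exp_eqOn (convex_ball z ‖z‖) isOpen_ball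
    differentiableOn_id (by rintro w hw rfl; simp at hw)
  have hzL : z ∈ ball z ‖z‖ := mem_ball_self hz₀
  have hLr (w : ℂ) (hw : w ∈ ball z ‖z‖) (hwr : w ∈ ball (0 : ℂ) r) : L w ∈ expHalfPlane r := by
    rw [mem_expHalfPlane hr, ← Function.comp_apply (f := Complex.exp), hexp hw]
    simpa using hwr
  have hgL : DifferentiableAt ℂ (g ∘ L) z :=
    (hg.differentiableAt ((isOpen_expHalfPlane r).mem_nhds (hLr z hzL hz.1))).comp z
      (hL.differentiableAt (isOpen_ball.mem_nhds hzL))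
  refine (hgL.congr_of_eventuallyEq ?_).differentiableWithinAt
  filter_upwards [isOpen_ball.mem_nhds hzL, isOpen_ball.mem_nhds hz.1] with w hw hwr
  rw [Function.comp_apply, Function.comp_apply, ← hlog _ (hLr w hw hwr)]
  exact congrArg (g ∘ Complex.log) (hexp hw).symm

end ExpHalfPlane

section InjectiveOn

variable {h : ℂ → ℂ}

theorem isOpen_image_of_injOn {N : Set ℂ} (hN : IsOpen N) (hd : DifferentiableOn ℂ h N)
    (hinj : InjOn h N) : IsOpen (h '' N) := by
  refine isOpen_iff_mem_nhds.2 ?_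
  rintro _ ⟨z, hz, rfl⟩
  rcases (hd.analyticAt (hN.mem_nhds hz)).eventually_constant_or_nhds_le_map_nhds with hc | hle
  · have hev : ∀ᶠ x in 𝓝[≠] z, (h x = h z ∧ x ∈ N) ∧ x ≠ z :=
      ((hc.and (hN.eventually_mem hz)).filter_mono nhdsWithin_le_nhds).and self_mem_nhdsWithin
    obtain ⟨x, ⟨hx, hxN⟩, hxz⟩ := hev.exists
    exact absurd (hinj hxN hz hx) hxz
  · exact hle (image_mem_map (hN.mem_nhds hz))

/-- An injective function misses, near the puncture, the image of a disc away from it; hence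
`(h - b)⁻¹` is bounded for a suitable `b`. -/
theorem exists_tendsto_inv_sub_of_injOn {R : ℝ} (hR : 0 < R)
    (hd : DifferentiableOn ℂ h (ball 0 R \ {0})) (hinj : InjOn h (ball 0 R \ {0})) :
    ∃ b c : ℂ, (∀ᶠ z in 𝓝[≠] 0, h z ≠ b) ∧ Tendsto (fun z ↦ (h z - b)⁻¹) (𝓝[≠] 0) (𝓝 c) := by
  have hopen : IsOpen (ball (0 : ℂ) R \ {0}) := isOpen_ball.sdiff isClosed_singleton
  have hball : ball (0 : ℂ) R \ {0} ∈ 𝓝[≠] (0 : ℂ) :=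
    sdiff_mem_nhdsWithin_compl (ball_mem_nhds 0 hR) _
  obtain ⟨x, hx⟩ := Filter.nonempty_of_mem hball
  have hx₀ : 0 < ‖x‖ := norm_pos_iff.2 hx.2
  set N : Set ℂ := (ball 0 R \ {0}) \ closedBall 0 (‖x‖ / 2)
  have hxN : x ∈ N := ⟨hx, by simpa using hx₀⟩
  have hNo : IsOpen N := hopen.sdiff isClosed_closedBall
  obtain ⟨ε, hε, hεN⟩ := isOpen_iff.1 (isOpen_image_of_injOn hNo (hd.mono sdiff_subset)
    (hinj.mono sdiff_subset)) (h x) (mem_image_of_mem h hxN)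
  have hfar : ∀ᶠ z in 𝓝[≠] (0 : ℂ), ε ≤ ‖h z - h x‖ := by
    filter_upwards [hball, nhdsWithin_le_nhds (closedBall_mem_nhds 0 (half_pos hx₀))] with z hz hzx
    by_contra! hlt
    obtain ⟨y, hy, hyz⟩ := hεN (mem_ball_iff_norm.2 hlt)
    exact hy.2 (hinj hy.1 hz hyz ▸ hzx)
  have hne : ∀ᶠ z in 𝓝[≠] (0 : ℂ), h z ≠ h x := hfar.mono fun z hz hzx ↦ by
    simp only [hzx, sub_self, norm_zero] at hz
    exact hz.not_gt hε
  refine ⟨h x, _, hne,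
    Complex.tendsto_limUnder_of_differentiable_on_punctured_nhds_of_bounded_under ?_
      ⟨ε⁻¹ + ‖(h 0 - h x)⁻¹‖, ?_⟩⟩
  · filter_upwards [hball, hne] with z hz hzx
    exact ((hd.differentiableAt (hopen.mem_nhds hz)).sub_const _).inv (sub_ne_zero.2 hzx)
  · rw [eventually_map]
    filter_upwards [hfar] with z hz
    refine (norm_sub_le _ _).trans (add_le_add_left ?_ _)
    rw [norm_inv]
    exact inv_anti₀ hε hz

theorem tendsto_nhds_or_cobounded_of_injOn {R : ℝ} (hR : 0 < R)
    (hd : DifferentiableOn ℂ h (ball 0 R \ {0})) (hinj : InjOn h (ball 0 R \ {0})) :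
    (∃ w, Tendsto h (𝓝[≠] 0) (𝓝 w)) ∨ Tendsto h (𝓝[≠] 0) (Bornology.cobounded ℂ) := by
  obtain ⟨b, c, hne, hlim⟩ := exists_tendsto_inv_sub_of_injOn hR hd hinj
  rcases eq_or_ne c 0 with rfl | hc
  · have hlim' : Tendsto (fun z ↦ (h z - b)⁻¹) (𝓝[≠] 0) (𝓝[≠] 0) := tendsto_nhdsWithin_iff.2
      ⟨hlim, hne.mono fun z hz ↦ inv_ne_zero (sub_ne_zero.2 hz)⟩
    refine .inr <| ((tendsto_add_const_cobounded b).comp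
      (tendsto_inv₀_nhdsNE_zero.comp hlim')).congr fun z ↦ ?_
    simp only [Function.comp_apply, inv_inv, sub_add_cancel]
  · refine .inl ⟨b + c⁻¹, ((hlim.inv₀ hc).const_add b).congr fun z ↦ ?_⟩
    rw [inv_inv, add_sub_cancel]

end InjectiveOn

theorem exists_continuousOn_eq_sub_div_sub_of_tendsto_cobounded {h : ℂ → ℂ} {N : Set ℂ} {z a b : ℂ}
    (hh : ContinuousOn h (N \ {z})) (ha : ∀ x ∈ N \ {z}, h x ≠ a) (hb : ∀ x ∈ N \ {z}, h x ≠ b)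
    (hpole : Tendsto h (𝓝[≠] z) (Bornology.cobounded ℂ)) :
    ∃ m : ℂ → ℂ, ContinuousOn m N ∧ (∀ x ∈ N, m x ≠ 0) ∧
      ∀ x ∈ N \ {z}, m x = (h x - a) / (h x - b) := by
  have hb' (x : ℂ) (hx : x ∈ N \ {z}) : h x - b ≠ 0 := sub_ne_zero.2 (hb x hx)
  have hm (x : ℂ) (hx : x ∈ N \ {z}) :
      Function.update (fun x ↦ (h x - a) / (h x - b)) z 1 x = (h x - a) / (h x - b) :=
    Function.update_of_ne hx.2 _ _
  refine ⟨Function.update (fun x ↦ (h x - a) / (h x - b)) z 1,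
    continuousOn_update_iff.2 ⟨(hh.sub continuousOn_const).div
      (hh.sub continuousOn_const) hb', fun _ ↦ ?_⟩, fun x hx ↦ ?_, hm⟩
  · have hinv : Tendsto (fun x ↦ (h x - b)⁻¹) (𝓝[≠] z) (𝓝 0) :=
      tendsto_inv₀_cobounded.comp ((tendsto_sub_const_cobounded b).comp hpole)
    have hlim := ((hinv.const_mul (b - a)).const_add 1).mono_left
      (nhdsWithin_mono z (sdiff_subset_compl N {z}))
    rw [mul_zero, add_zero] at hlim
    refine hlim.congr' ?_
    filter_upwards [self_mem_nhdsWithin] with x hx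
    field_simp [hb' x hx]
    ring
  · rcases eq_or_ne x z with rfl | hxz
    · simp
    · exact hm x ⟨hx, hxz⟩ ▸ div_ne_zero (sub_ne_zero.2 (ha x ⟨hx, hxz⟩)) (hb' x ⟨hx, hxz⟩)

/-! ### Coverings around a puncture -/

section CircleLift

open Complex (I)
open scoped Real

/-- `E` is a lift through `F` of the exponential parametrization of the punctured disc of radius `r`
around `z₀`, and its image contains the circle of radius `s` around `z₀`: on the line over that
circle, `z₀ + exp` is `E ∘ lam`. The curve traced by `F` on the circle winds `d` times around
`z₀`. -/
structure CircleLift (F : ℂ → ℂ) (X Y : Set ℂ) (z₀ : ℂ) (s r : ℝ) (d : ℤ) (lam E : ℂ → ℂ) :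
    Prop where
  lifts : HasConvexLifts F X Y
  inner_pos : 0 < s
  radius_lt : s < r
  differentiableOn : DifferentiableOn ℂ E (expHalfPlane r)
  mapsTo : MapsTo E (expHalfPlane r) X
  apply_eq : ∀ ζ ∈ expHalfPlane r, F (E ζ) = z₀ + Complex.exp ζ
  continuousOn_line : ContinuousOn lam {ζ : ℂ | ζ.re = Real.log s}
  mapsTo_line : MapsTo lam {ζ : ℂ | ζ.re = Real.log s} (expHalfPlane r)
  apply_line : ∀ ζ : ℂ, ζ.re = Real.log s → E (lam ζ) = z₀ + Complex.exp ζ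
  line_add : lam (Real.log s + 2 * π * I) = lam (Real.log s) + d * (2 * π * I)

theorem HasConvexLifts.exists_circleLift {F : ℂ → ℂ} {X Y : Set ℂ} {z₀ : ℂ} {s r : ℝ}
    (hF : HasConvexLifts F X Y) (hz₀ : z₀ ∉ Y) (hs : 0 < s) (hsr : s < r)
    (hrY : ball z₀ r \ {z₀} ⊆ Y) (hsX : sphere z₀ s ⊆ X)
    (hFs : MapsTo F (sphere z₀ s) (ball z₀ r)) :
    ∃ d lam E, CircleLift F X Y z₀ s r d lam E := by
  have hr : 0 < r := hs.trans hsr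
  set line : Set ℂ := {ζ : ℂ | ζ.re = Real.log s}
  have hline : Convex ℝ line := convex_hyperplane Complex.reLm.isLinear _
  have hbase : (Real.log s : ℂ) ∈ line := Complex.ofReal_re _
  have hcircle : MapsTo (fun ζ ↦ z₀ + Complex.exp ζ) line (sphere z₀ s) := fun ζ hζ ↦ by
    rw [mem_sphere, dist_eq_norm, add_sub_cancel_left, Complex.norm_exp, hζ, Real.exp_log hs]
  have hFc : ContinuousOn (fun ζ ↦ F (z₀ + Complex.exp ζ) - z₀) line :=
    (hF.differentiableOn.continuousOn.comp (by fun_prop) (hcircle.mono_right hsX)).sub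
      continuousOn_const
  have hF₀ : ∀ ζ ∈ line, F (z₀ + Complex.exp ζ) - z₀ ≠ 0 := fun ζ hζ h ↦
    hz₀ (sub_eq_zero.1 h ▸ hF.mapsTo (hsX (hcircle hζ)))
  obtain ⟨lam, hlam, -, -, hexp⟩ := HasConvexLifts.exp.exists_continuousOn_lift hline hFc hF₀ hbase
    (mem_univ _) (Complex.exp_log (hF₀ _ hbase))
  have hlamF (ζ : ℂ) (hζ : ζ ∈ line) : F (z₀ + Complex.exp ζ) = z₀ + Complex.exp (lam ζ) :=
    eq_add_of_sub_eq' (hexp hζ).symm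
  have hlamr : MapsTo lam line (expHalfPlane r) := fun ζ hζ ↦ by
    rw [mem_expHalfPlane hr, ← Function.comp_apply (f := Complex.exp), hexp hζ, ← dist_eq_norm]
    exact hFs (hcircle hζ)
  obtain ⟨E, hE, hEX, hEb, hFE⟩ := hF.exists_differentiableOn_lift (convex_expHalfPlane r)
    (isOpen_expHalfPlane r) (g := fun ζ ↦ z₀ + Complex.exp ζ) (by fun_prop)
    (fun ζ hζ ↦ hrY (add_exp_mem hr hζ)) (hlamr hbase) (hsX (hcircle hbase)) (hlamF _ hbase)
  have hElam : EqOn (E ∘ lam) (fun ζ ↦ z₀ + Complex.exp ζ) line :=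
    hF.eqOn_of_comp_eqOn hline.isPreconnected (hE.continuousOn.comp hlam hlamr) (by fun_prop)
      (hEX.comp hlamr) (hcircle.mono_right hsX)
      (fun ζ hζ ↦ (hFE (hlamr hζ)).trans (hlamF ζ hζ).symm) hbase hEb
  have htop : (Real.log s + 2 * π * I : ℂ) ∈ line := by simp [line]
  obtain ⟨d, hd⟩ := Complex.exp_eq_exp_iff_exists_int.1 (add_left_cancel <|
    (hlamF _ htop).symm.trans ((congrArg (F <| z₀ + ·) (Complex.exp_periodic _)).trans
      (hlamF _ hbase)))
  exact ⟨d, lam, E, hF, hs, hsr, hE, hEX, hFE, hlam, hlamr, hElam, hd⟩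

namespace CircleLift

variable {F : ℂ → ℂ} {X Y : Set ℂ} {z₀ : ℂ} {s r : ℝ} {d : ℤ} {lam E : ℂ → ℂ}

section

variable (hE : CircleLift F X Y z₀ s r d lam E)
include hE

theorem outer_pos : 0 < r := hE.inner_pos.trans hE.radius_lt

theorem add_eq_of_exp_eq_one {a ζ ζ' : ℂ} (ha : Complex.exp a = 1) (hζ : ζ ∈ expHalfPlane r)
    (h : E (ζ + a) = E ζ) (hζ' : ζ' ∈ expHalfPlane r) : E (ζ' + a) = E ζ' := by
  have hadd : MapsTo (· + a) (expHalfPlane r) (expHalfPlane r) :=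
    fun ζ hζ ↦ add_mem_expHalfPlane hζ (re_eq_zero_of_exp_eq_one ha)
  refine hE.lifts.eqOn_of_comp_eqOn (convex_expHalfPlane r).isPreconnected
    (hE.differentiableOn.continuousOn.comp (by fun_prop) hadd) hE.differentiableOn.continuousOn
    (hE.mapsTo.comp hadd) hE.mapsTo (fun t ht ↦ ?_) hζ h hζ'
  simp [hE.apply_eq _ (hadd ht), hE.apply_eq _ ht, Complex.exp_add, ha]

theorem add_eq {ζ : ℂ} (hζ : ζ ∈ expHalfPlane r) : E (ζ + d * (2 * π * I)) = E ζ := by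
  have hbase := Complex.ofReal_re (Real.log s)
  refine hE.add_eq_of_exp_eq_one (exp_intCast_mul_two_pi_mul_I d) (hE.mapsTo_line hbase) ?_ hζ
  rw [← hE.line_add, hE.apply_line _ (by simp), hE.apply_line _ hbase, Complex.exp_periodic]

theorem log_add_eq {b : ℂ} {ℓ g : ℂ → ℂ} {N : Set ℂ} (hℓ : ContinuousOn ℓ (expHalfPlane r))
    (hexp : EqOn (Complex.exp ∘ ℓ) (fun ζ ↦ E ζ - b) (expHalfPlane r)) (hN : Convex ℝ N)
    (hN₀ : (0 : ℂ) ∉ N) (hg : Continuous g) (hgN : ∀ ξ : ℂ, ξ.re = Real.log s → g ξ ∈ N)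
    (hper : g.Periodic (2 * π * I)) {k : ℂ}
    (hfactor : ∀ ξ, z₀ + Complex.exp ξ - b = g ξ * Complex.exp (k * ξ)) {ζ : ℂ}
    (hζ : ζ ∈ expHalfPlane r) : ℓ (ζ + d * (2 * π * I)) = ℓ ζ + k * (2 * π * I) := by
  have hre : ((d : ℂ) * (2 * π * I)).re = 0 := by simp
  have hbase : (Real.log s : ℂ) ∈ {ζ : ℂ | ζ.re = Real.log s} := Complex.ofReal_re _
  have hline : lam (Real.log s) ∈ expHalfPlane r := hE.mapsTo_line hbase
  have heq : EqOn (Complex.exp ∘ fun ξ ↦ ℓ (lam ξ) - k * ξ) (id ∘ g) {ζ : ℂ | ζ.re = Real.log s} :=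
    fun ξ hξ ↦ by
      have hξ' : Complex.exp (ℓ (lam ξ)) = E (lam ξ) - b := hexp (hE.mapsTo_line hξ)
      rw [Function.comp_apply, Complex.exp_sub, hξ', hE.apply_line ξ hξ, hfactor,
        mul_div_cancel_right₀ _ (Complex.exp_ne_zero _), Function.comp_apply, id]
  have hlog := eq_of_exp_eqOn_comp hN continuousOn_id (fun z hz h ↦ hN₀ (h ▸ hz))
    (convex_hyperplane Complex.reLm.isLinear (Real.log s)).isPreconnected hg.continuousOn hgN
    ((hℓ.comp hE.continuousOn_line hE.mapsTo_line).sub (by fun_prop)) heq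
    (ζ' := Real.log s + 2 * π * I) hbase (by simp) (hper _)
  refine add_eq_of_exp_comp_add_eq hre hℓ (fun ξ hξ ↦ ?_) hline ?_ hζ
  · simpa [hE.add_eq hξ, ← hexp hξ] using hexp (add_mem_expHalfPlane hξ hre)
  · rw [← hE.line_add]
    simp only [Pi.sub_apply, Function.comp_apply] at hlog
    linear_combination hlog

/-- On the circle, `E - b` is `exp` times a function with values in a disc avoiding `0`. -/
theorem log_add_eq_of_mem_ball {b : ℂ} (hb : b ∈ ball z₀ s) {ℓ : ℂ → ℂ}
    (hℓ : ContinuousOn ℓ (expHalfPlane r))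
    (hexp : EqOn (Complex.exp ∘ ℓ) (fun ζ ↦ E ζ - b) (expHalfPlane r)) {ζ : ℂ}
    (hζ : ζ ∈ expHalfPlane r) : ℓ (ζ + d * (2 * π * I)) = ℓ ζ + 2 * π * I := by
  rw [hE.log_add_eq hℓ hexp (convex_ball 1 1) (by simp)
    (g := fun ξ ↦ 1 + (z₀ - b) * Complex.exp (-ξ)) (by fun_prop) (fun ξ hξ ↦ ?_) (fun ξ ↦ ?_)
    (k := 1) (fun ξ ↦ ?_) hζ, one_mul]
  · rw [mem_ball, dist_comm, dist_eq_norm] at hb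
    rw [mem_ball, dist_eq_norm, add_sub_cancel_left, norm_mul, Complex.norm_exp, Complex.neg_re,
      hξ, Real.exp_neg, Real.exp_log hE.inner_pos, ← div_eq_mul_inv]
    exact (div_lt_one hE.inner_pos).2 hb
  · simp [Complex.exp_add, Complex.exp_neg, Complex.exp_two_pi_mul_I]
  · rw [Complex.exp_neg]
    field_simp [Complex.exp_ne_zero]
    ring

theorem log_add_eq_of_le_dist {b : ℂ} (hb : r ≤ dist b z₀) {ℓ : ℂ → ℂ}
    (hℓ : ContinuousOn ℓ (expHalfPlane r))
    (hexp : EqOn (Complex.exp ∘ ℓ) (fun ζ ↦ E ζ - b) (expHalfPlane r)) {ζ : ℂ}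
    (hζ : ζ ∈ expHalfPlane r) : ℓ (ζ + d * (2 * π * I)) = ℓ ζ := by
  rw [hE.log_add_eq hℓ hexp (convex_ball (z₀ - b) r) ?_ (g := fun ξ ↦ z₀ + Complex.exp ξ - b)
    (by fun_prop) (fun ξ hξ ↦ ?_) (fun ξ ↦ by simp only [Complex.exp_periodic ξ]) (k := 0)
    (by simp) hζ, zero_mul, add_zero]
  · rwa [mem_ball, dist_zero, norm_sub_rev, ← dist_eq_norm, not_lt]
  · rw [mem_ball, dist_eq_norm, sub_sub_sub_cancel_right, add_sub_cancel_left, Complex.norm_exp, hξ,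
      Real.exp_log hE.inner_pos]
    exact hE.radius_lt

theorem exists_log {b : ℂ} (hb : ∀ ζ ∈ expHalfPlane r, E ζ ≠ b) :
    ∃ ℓ : ℂ → ℂ, ContinuousOn ℓ (expHalfPlane r) ∧
      EqOn (Complex.exp ∘ ℓ) (fun ζ ↦ E ζ - b) (expHalfPlane r) := by
  obtain ⟨ℓ, hℓ, hexp⟩ := exists_differentiableOn_exp_eqOn (convex_expHalfPlane r)
    (isOpen_expHalfPlane r) (hE.differentiableOn.sub_const b) fun ζ hζ ↦ sub_ne_zero.2 (hb ζ hζ)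
  exact ⟨ℓ, hℓ.continuousOn, hexp⟩

theorem ne_zero (hz₀ : z₀ ∉ X) : d ≠ 0 := by
  rintro rfl
  obtain ⟨ℓ, hℓ, hexp⟩ := hE.exists_log (b := z₀) fun ζ hζ h ↦ hz₀ (h ▸ hE.mapsTo hζ)
  obtain ⟨ζ, hζ⟩ := nonempty_expHalfPlane r
  simpa [Complex.two_pi_I_ne_zero] using
    hE.log_add_eq_of_mem_ball (mem_ball_self hE.inner_pos) hℓ hexp hζ

theorem dvd_of_add_eq (hz₀ : z₀ ∉ X) {j : ℤ} {ζ : ℂ} (hζ : ζ ∈ expHalfPlane r)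
    (h : E (ζ + j * (2 * π * I)) = E ζ) : d ∣ j := by
  obtain ⟨ℓ, hℓ, hexp⟩ := hE.exists_log (b := z₀) fun ζ hζ h ↦ hz₀ (h ▸ hE.mapsTo hζ)
  have hre (j : ℤ) : ((j : ℂ) * (2 * π * I)).re = 0 := by simp
  have hexp' (ζ : ℂ) (hζ : ζ ∈ expHalfPlane r) :
      Complex.exp (ℓ (ζ + j * (2 * π * I))) = Complex.exp (ℓ ζ) := by
    have hadd := hE.add_eq_of_exp_eq_one (exp_intCast_mul_two_pi_mul_I j) ‹_› h hζ
    simpa [hadd, ← hexp hζ] using hexp (add_mem_expHalfPlane hζ (hre j))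
  obtain ⟨q, hq⟩ := Complex.exp_eq_exp_iff_exists_int.1 (hexp' ζ hζ)
  have hj : ℓ (ζ + d * (j * (2 * π * I))) = ℓ ζ + d * (q * (2 * π * I)) :=
    add_intCast_mul_eq (hre j)
      (fun _ ↦ add_eq_of_exp_comp_add_eq (hre j) hℓ hexp' hζ hq) d hζ
  have hd : ℓ (ζ + j * (d * (2 * π * I))) = ℓ ζ + j * (2 * π * I) :=
    add_intCast_mul_eq (hre d) (fun _ ↦
      hE.log_add_eq_of_mem_ball (mem_ball_self hE.inner_pos) hℓ hexp) j hζ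
  rw [mul_left_comm, hd, add_right_inj] at hj
  have hjq : (j : ℂ) = d * q :=
    mul_right_cancel₀ Complex.two_pi_I_ne_zero (by linear_combination hj)
  exact ⟨q, by exact_mod_cast hjq⟩

end

variable {R : ℝ} {h : ℂ → ℂ} {b : ℂ}
  (hE : CircleLift F X Y z₀ s (R ^ d.natAbs) d lam E) (hz₀ : z₀ ∉ X) (hR : 0 < R)
  (hhE : ∀ ζ ∈ expHalfPlane R, h (Complex.exp ζ) = E (d.natAbs * ζ))
include hE hz₀

theorem natAbs_mul_mem {ζ : ℂ} : d.natAbs * ζ ∈ expHalfPlane (R ^ d.natAbs) ↔ ζ ∈ expHalfPlane R :=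
  natCast_mul_mem_expHalfPlane (Int.natAbs_ne_zero.2 (hE.ne_zero hz₀))

include hR

theorem exists_comp_exp_eqOn : ∃ h : ℂ → ℂ, DifferentiableOn ℂ h (ball 0 R \ {0}) ∧
    ∀ ζ ∈ expHalfPlane R, h (Complex.exp ζ) = E (d.natAbs * ζ) := by
  refine _root_.exists_comp_exp_eqOn hR (hE.differentiableOn.comp (by fun_prop)
    fun ζ ↦ (hE.natAbs_mul_mem hz₀).2) fun ζ hζ ↦ ?_
  simpa [mul_add] using add_natAbs_mul_eq (A := E) (c := 0) (by simp)
    (fun ζ hζ ↦ by rw [hE.add_eq hζ, add_zero]) ((hE.natAbs_mul_mem hz₀).2 hζ)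

include hhE

theorem mapsTo_of_comp_exp_eqOn : MapsTo h (ball 0 R \ {0}) X := by
  intro z hz
  obtain ⟨ζ, hζ, rfl⟩ := exists_exp_eq hR hz
  exact hhE ζ hζ ▸ hE.mapsTo ((hE.natAbs_mul_mem hz₀).2 hζ)

theorem apply_eq_of_comp_exp_eqOn {z : ℂ} (hz : z ∈ ball 0 R \ {0}) :
    F (h z) = z₀ + z ^ d.natAbs := by
  obtain ⟨ζ, hζ, rfl⟩ := exists_exp_eq hR hz
  rw [hhE ζ hζ, hE.apply_eq _ ((hE.natAbs_mul_mem hz₀).2 hζ),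
    Complex.exp_nat_mul]

theorem injOn_of_comp_exp_eqOn : InjOn h (ball 0 R \ {0}) := by
  intro z hz w hw hzw
  obtain ⟨ζ, hζ, rfl⟩ := exists_exp_eq hR hz
  obtain ⟨ξ, hξ, rfl⟩ := exists_exp_eq hR hw
  have hpow : Complex.exp (d.natAbs * ζ) = Complex.exp (d.natAbs * ξ) := by
    rw [Complex.exp_nat_mul, Complex.exp_nat_mul]
    refine add_left_cancel (a := z₀) ?_
    rw [← hE.apply_eq_of_comp_exp_eqOn hz₀ hR hhE hz, hzw,
      hE.apply_eq_of_comp_exp_eqOn hz₀ hR hhE hw]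
  obtain ⟨j, hj⟩ := Complex.exp_eq_exp_iff_exists_int.1 hpow
  obtain ⟨q, rfl⟩ : d ∣ j := by
    refine hE.dvd_of_add_eq hz₀ ((hE.natAbs_mul_mem hz₀).2 hξ) ?_
    rw [← hj, ← hhE ζ hζ, ← hhE ξ hξ, hzw]
  have hD : (d.natAbs : ℂ) ≠ 0 := Nat.cast_ne_zero.2 (Int.natAbs_ne_zero.2 (hE.ne_zero hz₀))
  have hd : (d : ℂ) = d.sign * d.natAbs := by
    rw [← Int.cast_natCast, ← Int.cast_mul, Int.sign_mul_natAbs]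
  refine Complex.exp_eq_exp_iff_exists_int.2 ⟨d.sign * q, mul_left_cancel₀ hD ?_⟩
  rw [hj]
  push_cast
  linear_combination (q : ℂ) * (2 * π * I) * hd

/-- Otherwise `h - b` has a logarithm on `ball 0 R`, so that a logarithm of `E - b` does not change
along the `d`-fold circle around the puncture; but it changes by `± 2 π I`. -/
theorem mem_image_of_differentiableOn (hh : DifferentiableOn ℂ h (ball 0 R))
    (hb : b ∈ ball z₀ s) : b ∈ h '' ball 0 R := by
  by_contra hbn
  have hexpR : MapsTo Complex.exp (expHalfPlane R) (ball 0 R) := fun ζ hζ ↦ (exp_mem hR hζ).1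
  have hne (z : ℂ) (hz : z ∈ ball 0 R) : h z - b ≠ 0 :=
    fun h₀ ↦ hbn ⟨z, hz, sub_eq_zero.1 h₀⟩
  have hmem {ζ : ℂ} := hE.natAbs_mul_mem (ζ := ζ) hz₀
  obtain ⟨ℓ, hℓ, hexp⟩ := hE.exists_log (b := b) fun ζ hζ h₀ ↦ by
    have hD : (d.natAbs : ℂ) ≠ 0 := Nat.cast_ne_zero.2 (Int.natAbs_ne_zero.2 (hE.ne_zero hz₀))
    rw [← mul_div_cancel₀ ζ hD, hmem] at hζ
    exact hne _ (hexpR hζ) (sub_eq_zero.2 <| by rw [← h₀, hhE _ hζ, mul_div_cancel₀ _ hD])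
  obtain ⟨ζ, hζ⟩ := nonempty_expHalfPlane R
  have hconst : ℓ (d.natAbs * (ζ + 2 * π * I)) = ℓ (d.natAbs * ζ) :=
    eq_of_exp_eqOn_comp (A := fun ζ ↦ ℓ (d.natAbs * ζ)) (convex_ball 0 R)
      (hh.continuousOn.sub continuousOn_const) hne (convex_expHalfPlane R).isPreconnected
      Complex.continuous_exp.continuousOn hexpR (hℓ.comp (by fun_prop) fun ζ ↦ hmem.2)
      (fun ζ hζ ↦ (hexp (hmem.2 hζ)).trans (congrArg (· - b) (hhE ζ hζ).symm)) hζ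
      (add_mem_expHalfPlane hζ (by simp)) (Complex.exp_periodic ζ)
  rw [mul_add, add_natAbs_mul_eq (by simp)
    (fun ζ hζ ↦ hE.log_add_eq_of_mem_ball hb hℓ hexp hζ) (hmem.2 hζ)] at hconst
  simp [hE.ne_zero hz₀] at hconst

/-- If `h` had a pole at `0`, then `(h - z₀) / (h - b)` would extend to a function without zeros,
hence with a logarithm, on `ball 0 R`. But `E - z₀` winds around the puncture and `E - b` does
not. -/
theorem not_tendsto_cobounded (hh : DifferentiableOn ℂ h (ball 0 R \ {0}))
    (hb : R ^ d.natAbs ≤ dist b z₀) (hEb : ∀ ζ ∈ expHalfPlane (R ^ d.natAbs), E ζ ≠ b) :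
    ¬ Tendsto h (𝓝[≠] 0) (Bornology.cobounded ℂ) := by
  intro hpole
  have hmem {ζ : ℂ} := hE.natAbs_mul_mem (ζ := ζ) hz₀
  obtain ⟨m, hmc, hm₀, hm⟩ := exists_continuousOn_eq_sub_div_sub_of_tendsto_cobounded
    (a := z₀) (b := b) hh.continuousOn
    (fun z hz h₀ ↦ hz₀ (h₀ ▸ hE.mapsTo_of_comp_exp_eqOn hz₀ hR hhE hz))
    (fun z hz h₀ ↦ by
      obtain ⟨ζ, hζ, rfl⟩ := exists_exp_eq hR hz
      exact hEb _ (hmem.2 hζ) (hhE ζ hζ ▸ h₀)) hpole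
  obtain ⟨ℓ, hℓ, hexp⟩ := hE.exists_log (b := z₀) fun ζ hζ h ↦ hz₀ (h ▸ hE.mapsTo hζ)
  obtain ⟨ℓb, hℓb, hexpb⟩ := hE.exists_log hEb
  obtain ⟨ζ, hζ⟩ := nonempty_expHalfPlane R
  have hconst := eq_of_exp_eqOn_comp (A := fun ζ ↦ ℓ (d.natAbs * ζ) - ℓb (d.natAbs * ζ))
    (convex_ball 0 R) hmc hm₀ (convex_expHalfPlane R).isPreconnected
    Complex.continuous_exp.continuousOn (fun ζ hζ ↦ (exp_mem hR hζ).1)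
    ((hℓ.comp (by fun_prop) fun ζ ↦ hmem.2).sub (hℓb.comp (by fun_prop) fun ζ ↦ hmem.2))
    (fun ζ hζ ↦ ?_) hζ
    (add_mem_expHalfPlane hζ (by simp)) (Complex.exp_periodic ζ)
  · rw [mul_add, add_natAbs_mul_eq (by simp) (fun ζ hζ ↦ hE.log_add_eq_of_mem_ball
        (mem_ball_self hE.inner_pos) hℓ hexp hζ) (hmem.2 hζ),
      add_natAbs_mul_eq (A := ℓb) (d := d) (a := 2 * π * I) (c := 0) (by simp) (fun ζ hζ ↦ by
        rw [hE.log_add_eq_of_le_dist hb hℓb hexpb hζ, add_zero]) (hmem.2 hζ)] at hconst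
    simp [hE.ne_zero hz₀, add_sub_right_comm] at hconst
  · have hnum : Complex.exp (ℓ (d.natAbs * ζ)) = E (d.natAbs * ζ) - z₀ := hexp (hmem.2 hζ)
    have hden : Complex.exp (ℓb (d.natAbs * ζ)) = E (d.natAbs * ζ) - b := hexpb (hmem.2 hζ)
    rw [Function.comp_apply, Complex.exp_sub, hnum, hden, Function.comp_apply,
      hm _ (exp_mem hR hζ), hhE ζ hζ]

theorem tendsto_of_comp_exp (hh : DifferentiableOn ℂ h (ball 0 R \ {0}))
    (hb : R ^ d.natAbs ≤ dist b z₀) (hEb : ∀ ζ ∈ expHalfPlane (R ^ d.natAbs), E ζ ≠ b) :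
    Tendsto h (𝓝[≠] 0) (𝓝 z₀) := by
  rcases tendsto_nhds_or_cobounded_of_injOn hR hh
    (hE.injOn_of_comp_exp_eqOn hz₀ hR hhE) with ⟨w, hw⟩ | hpole
  swap
  · exact absurd hpole (hE.not_tendsto_cobounded hz₀ hR hhE hh hb hEb)
  suffices w = z₀ from this ▸ hw
  have hupd (z : ℂ) (hz : z ≠ 0) : Function.update h 0 w z = h z := Function.update_of_ne hz _ _
  obtain ⟨z, hz, hzz₀⟩ := hE.mem_image_of_differentiableOn hz₀ hR
    (fun ζ hζ ↦ (hupd _ (Complex.exp_ne_zero ζ)).trans (hhE ζ hζ))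
    ((Complex.differentiableOn_compl_singleton_and_continuousAt_iff (ball_mem_nhds 0 hR)).1
      ⟨hh.congr fun z hz ↦ hupd z hz.2, continuousAt_update_same.2 hw⟩)
    (mem_ball_self hE.inner_pos)
  rcases eq_or_ne z 0 with rfl | hz'
  · rwa [Function.update_self] at hzz₀
  · exact absurd (hE.mapsTo_of_comp_exp_eqOn hz₀ hR hhE ⟨hz, hz'⟩) (hupd z hz' ▸ hzz₀ ▸ hz₀)

end CircleLift

end CircleLift

/-- `h` maps the disc of radius `R` around `0` injectively to `X ∪ {z₀}`, and in this coordinate `F`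
is the power map of exponent `D` onto the disc of radius `r` around `z₀`. -/
structure PowerChart (F : ℂ → ℂ) (X : Set ℂ) (z₀ : ℂ) (r : ℝ) (D : ℕ) (R : ℝ) (h : ℂ → ℂ) :
    Prop where
  ne_zero : D ≠ 0
  radius_pos : 0 < R
  radius_pow : R ^ D = r
  differentiableOn : DifferentiableOn ℂ h (ball 0 R)
  apply_zero : h 0 = z₀
  injOn : InjOn h (ball 0 R)
  mapsTo : MapsTo h (ball 0 R \ {0}) X
  apply_eq : ∀ z ∈ ball (0 : ℂ) R \ {0}, F (h z) = z₀ + z ^ D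

theorem CircleLift.exists_powerChart {F : ℂ → ℂ} {X Y : Set ℂ} {z₀ b : ℂ} {s r : ℝ} {d : ℤ}
    {lam E : ℂ → ℂ} (hE : CircleLift F X Y z₀ s r d lam E) (hz₀ : z₀ ∉ X) (hb : r ≤ dist b z₀)
    (hEb : ∀ ζ ∈ expHalfPlane r, E ζ ≠ b) :
    ∃ D R h, PowerChart F X z₀ r D R h ∧ ball z₀ s ⊆ h '' ball 0 R := by
  have hd : d.natAbs ≠ 0 := Int.natAbs_ne_zero.2 (hE.ne_zero hz₀)
  obtain ⟨R, hR, rfl⟩ : ∃ R : ℝ, 0 < R ∧ R ^ d.natAbs = r :=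
    ⟨_, Real.rpow_pos_of_pos hE.outer_pos _, Real.rpow_inv_natCast_pow hE.outer_pos.le hd⟩
  obtain ⟨h, hh, hhE⟩ := hE.exists_comp_exp_eqOn hz₀ hR
  have hhX := hE.mapsTo_of_comp_exp_eqOn hz₀ hR hhE
  have hinj := hE.injOn_of_comp_exp_eqOn hz₀ hR hhE
  have hupd (z : ℂ) (hz : z ≠ 0) : Function.update h 0 z₀ z = h z := Function.update_of_ne hz _ _
  have hdiff : DifferentiableOn ℂ (Function.update h 0 z₀) (ball 0 R) :=
    (Complex.differentiableOn_compl_singleton_and_continuousAt_iff (ball_mem_nhds 0 hR)).1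
      ⟨hh.congr fun z hz ↦ hupd z hz.2,
        continuousAt_update_same.2 (hE.tendsto_of_comp_exp hz₀ hR hhE hh hb hEb)⟩
  refine ⟨_, R, Function.update h 0 z₀, ⟨hd, hR, rfl, hdiff, Function.update_self .., ?_,
    fun z hz ↦ hupd z hz.2 ▸ hhX hz, fun z hz ↦ hupd z hz.2 ▸
      hE.apply_eq_of_comp_exp_eqOn hz₀ hR hhE hz⟩, fun b hb ↦ hE.mem_image_of_differentiableOn
        hz₀ hR (fun ζ hζ ↦ (hupd _ (Complex.exp_ne_zero ζ)).trans (hhE ζ hζ)) hdiff hb⟩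
  rw [← insert_sdiff_self_of_mem (mem_ball_self hR), injOn_insert (by simp)]
  refine ⟨hinj.congr fun z hz ↦ (hupd z hz.2).symm, ?_⟩
  rintro ⟨z, hz, hzz₀⟩
  rw [Function.update_self, hupd z hz.2] at hzz₀
  exact hz₀ (hzz₀ ▸ hhX hz)

/-- `U` contains the punctured disc of radius `r` around `z₀ ∉ U`, and the component of `U`
containing it omits a further point `b`. -/
structure IsPuncture (U : Set ℂ) (z₀ : ℂ) (r : ℝ) (b : ℂ) : Prop where
  notMem : z₀ ∉ U
  radius_pos : 0 < r
  subset : ball z₀ r \ {z₀} ⊆ U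
  le_dist : r ≤ dist b z₀
  notMem_component : ∀ z ∈ ball z₀ r \ {z₀}, b ∉ connectedComponentIn U z

theorem IsPuncture.of_subset {U V : Set ℂ} {z₀ b : ℂ} {r r' : ℝ} (hU : IsPuncture U z₀ r b)
    (hVU : V ⊆ U) (hr' : 0 < r') (hr : r' ≤ r) (hV : ball z₀ r' \ {z₀} ⊆ V) :
    IsPuncture V z₀ r' b :=
  ⟨fun h ↦ hU.notMem (hVU h), hr', hV, hr.trans hU.le_dist, fun z hz h ↦ hU.notMem_component z
    (sdiff_subset_sdiff_left (ball_subset_ball hr) hz) (connectedComponentIn_mono z hVU h)⟩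

theorem HyperbolicOpen.exists_isPuncture {U : Set ℂ} (hU : HyperbolicOpen U) {z₀ : ℂ}
    (h : ∃ N ∈ 𝓝 z₀, N ∩ Uᶜ = {z₀}) : ∃ r b, IsPuncture U z₀ r b := by
  obtain ⟨N, hN, hNU⟩ := h
  obtain ⟨r, hr, hrN⟩ := Metric.mem_nhds_iff.1 hN
  have hz₀ : z₀ ∉ U := (hNU.symm ▸ mem_singleton z₀ : z₀ ∈ N ∩ Uᶜ).2
  have hsub : ball z₀ r \ {z₀} ⊆ U := fun z hz ↦ by
    by_contra hzU
    exact hz.2 (hNU ▸ ⟨hrN hz.1, hzU⟩ : z ∈ ({z₀} : Set ℂ))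
  have hcomp (z : ℂ) (hz : z ∈ ball z₀ r \ {z₀}) : ball z₀ r \ {z₀} ⊆ connectedComponentIn U z :=
    (isPreconnected_ball_diff_singleton z₀ hr).subset_connectedComponentIn hz hsub
  obtain ⟨z₁, hz₁⟩ : (ball z₀ r \ {z₀}).Nonempty :=
    image_add_exp_expHalfPlane z₀ hr ▸ (nonempty_expHalfPlane r).image _
  obtain ⟨b, hb, hne⟩ := (hU.2 z₁ (hsub hz₁)).exists_ne z₀
  refine ⟨r, b, hz₀, hr, hsub, not_lt.1 fun hlt ↦ hb (hcomp z₁ hz₁ ⟨hlt, hne⟩),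
    fun z hz hbz ↦ hb ?_⟩
  rwa [connectedComponentIn_eq (hcomp z hz hz₁)] at hbz

theorem HasConvexLifts.exists_powerChart {F : ℂ → ℂ} {X Y : Set ℂ} {z₀ b : ℂ} {s r : ℝ}
    (hF : HasConvexLifts F X Y) (hXY : X ⊆ Y) (hY : IsPuncture Y z₀ r b) (hs : 0 < s) (hsr : s < r)
    (hsX : sphere z₀ s ⊆ X) (hFs : MapsTo F (sphere z₀ s) (ball z₀ r)) :
    ∃ D R h, PowerChart F X z₀ r D R h ∧ ball z₀ s ⊆ h '' ball 0 R := by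
  obtain ⟨d, lam, E, hE⟩ := hF.exists_circleLift hY.notMem hs hsr hY.subset hsX hFs
  have hline : E (lam (Real.log s)) = z₀ + s := by
    rw [hE.apply_line _ (Complex.ofReal_re _), ← Complex.ofReal_exp, Real.exp_log hs]
  have hcomp : E '' expHalfPlane r ⊆ connectedComponentIn Y (z₀ + s) :=
    ((convex_expHalfPlane r).isPreconnected.image _
      hE.differentiableOn.continuousOn).subset_connectedComponentIn
        (hline ▸ mem_image_of_mem E (hE.mapsTo_line (Complex.ofReal_re _)))
        (hE.mapsTo.image_subset.trans hXY)
  have hs₀ : z₀ + s ∈ ball z₀ r \ {z₀} := by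
    simpa [hs.ne', abs_of_pos hs] using hsr
  exact hE.exists_powerChart (fun h ↦ hY.notMem (hXY h)) hY.le_dist
    fun ζ hζ h ↦ hY.notMem_component _ hs₀ (h ▸ hcomp (mem_image_of_mem E hζ))

/-! ### Extension of an iterate to a puncture -/

theorem image_add_exp_add_mul_I_Icc (z₀ ζ : ℂ) :
    (fun t : ℝ ↦ z₀ + Complex.exp (ζ + t * Complex.I)) '' Icc (-Real.pi) Real.pi =
      sphere z₀ (Real.exp ζ.re) := by
  ext y
  constructor
  · rintro ⟨t, _, rfl⟩
    simp [Complex.norm_exp]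
  · intro hy
    set q := (y - z₀) / Complex.exp ζ
    have hq : ‖q‖ = 1 := by
      rw [norm_div, mem_sphere_iff_norm.1 hy, Complex.norm_exp, div_self (Real.exp_ne_zero _)]
    have hexp : Complex.exp (q.arg * Complex.I) = q := by
      simpa [hq] using Complex.norm_mul_exp_arg_mul_I q
    refine ⟨q.arg, ⟨(Complex.neg_pi_lt_arg q).le, Complex.arg_le_pi q⟩, ?_⟩
    simp only [Complex.exp_add, hexp, q]
    rw [mul_div_cancel₀ _ (Complex.exp_ne_zero ζ), add_sub_cancel]

theorem ball_subset_expHalfPlane {ζ : ℂ} {r t : ℝ} (hr : 0 < r)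
    (h : ‖Complex.exp ζ‖ ≤ r * Real.exp (-t)) : ball ζ t ⊆ expHalfPlane r := fun ξ hξ ↦ by
  rw [mem_expHalfPlane hr]
  calc ‖Complex.exp ξ‖ = ‖Complex.exp ζ‖ * Real.exp (ξ - ζ).re := by
        rw [← Complex.norm_exp, ← norm_mul, ← Complex.exp_add, add_sub_cancel]
    _ < ‖Complex.exp ζ‖ * Real.exp t := by
        gcongr
        · exact norm_pos_iff.2 (Complex.exp_ne_zero ζ)
        · exact (Complex.re_le_norm _).trans_lt (mem_ball_iff_norm.1 hξ)
    _ ≤ r * Real.exp (-t) * Real.exp t := by gcongr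
    _ = r := by rw [mul_assoc, ← Real.exp_add, neg_add_cancel, Real.exp_zero, mul_one]

/-- In the coordinate `log (z - z₀)` the circle is a segment of length `2π`, which is hyperbolically
short in a half-plane whose boundary is far away. -/
theorem DiscCover.exists_image_eq_sphere {U : Set ℂ} {x z₀ : ℂ} {ψ : ℂ → ℂ} {r : ℝ}
    (hψ : DiscCover U x ψ) (hrU : ball z₀ r \ {z₀} ⊆ U) (hx : x ≠ z₀)
    (hxr : dist x z₀ < r * Real.exp (-8)) :
    ∃ κ ⊆ ball (0 : ℂ) (1 / 2), IsCompact κ ∧ IsPreconnected κ ∧ 0 ∈ κ ∧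
      ψ '' κ = sphere z₀ (dist x z₀) := by
  have hpos : 0 < dist x z₀ := dist_pos.2 hx
  have hr : 0 < r := pos_of_mul_pos_left (hpos.trans hxr) (Real.exp_pos _).le
  set ζ₀ := Complex.log (x - z₀)
  have hexp : Complex.exp ζ₀ = x - z₀ := Complex.exp_log (sub_ne_zero.2 hx)
  have hball : ball ζ₀ 8 ⊆ expHalfPlane r :=
    ball_subset_expHalfPlane hr (by rw [hexp, ← dist_eq_norm]; exact hxr.le)
  obtain ⟨θ, hθ, hθ₁, hθ₀, hψθ⟩ := hψ.lifts.exists_differentiableOn_lift (convex_ball ζ₀ 8)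
    isOpen_ball (g := fun ζ ↦ z₀ + Complex.exp ζ) (by fun_prop)
    (fun ζ hζ ↦ hrU (add_exp_mem hr (hball hζ))) (mem_ball_self (by norm_num))
    (mem_ball_self one_pos) (by simp [hψ.apply_zero, hexp])
  have hdist (t : ℝ) (ht : t ∈ Icc (-Real.pi) Real.pi) : dist (ζ₀ + t * Complex.I) ζ₀ < 4 := by
    simpa using (abs_le.2 ht).trans_lt Real.pi_lt_four
  have hmaps : MapsTo (fun t : ℝ ↦ ζ₀ + t * Complex.I) (Icc (-Real.pi) Real.pi) (ball ζ₀ 8) :=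
    fun t ht ↦ (hdist t ht).trans (by norm_num)
  have hcont : ContinuousOn (fun t : ℝ ↦ θ (ζ₀ + t * Complex.I)) (Icc (-Real.pi) Real.pi) :=
    hθ.continuousOn.comp (by fun_prop) hmaps
  refine ⟨_, ?_, isCompact_Icc.image_of_continuousOn hcont, isPreconnected_Icc.image _ hcont,
    ⟨0, by simp [Real.pi_pos.le], by simpa using hθ₀⟩, ?_⟩
  · rintro _ ⟨t, ht, rfl⟩
    have hle := Complex.dist_le_div_mul_dist_of_mapsTo_ball (R₂ := 1) hθ
      (hθ₀ ▸ hθ₁.mono_right ball_subset_closedBall) (hmaps ht)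
    rw [hθ₀] at hle
    exact mem_ball.2 (by linarith [hdist t ht])
  · rw [image_image, dist_eq_norm, ← hexp, Complex.norm_exp, ← image_add_exp_add_mul_I_Icc z₀ ζ₀]
    exact image_congr fun t ht ↦ hψθ (hmaps ht)

theorem ExpandingCovering.eventually_exists_image_eq_sphere {f : ℂ → ℂ} {U' U : Set ℂ}
    (hf : ExpandingCovering f U' U) {ρ : ℂ → ℝ} (hρ : IsHypDensity U ρ) {w z₀ b : ℂ}
    (hw : w ∈ stableSet f U') {r : ℝ} (hU : IsPuncture U z₀ r b) :
    ∀ᶠ n in atTop, dist (f^[n] w) z₀ < r * Real.exp (-8) →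
      ∃ K ⊆ connectedComponentIn (stableSet f U') w, IsCompact K ∧
        f^[n] '' K = sphere z₀ (dist (f^[n] w) z₀) := by
  have hwU (n : ℕ) : f^[n] w ∈ U := hf.stableSet_subset (hf.mapsTo_iterate_stableSet n hw)
  choose ψ hψ _ using fun n ↦ exists_discCover hf.lifts.isOpen_target hρ (hwU n)
  filter_upwards [hf.eventually_image_ball_subset hw one_half_pos one_half_lt_one hψ] with n hn hd
  obtain ⟨κ, hκ, hκc, hκp, hκ₀, hψκ⟩ := (hψ n).exists_image_eq_sphere hU.subset
    (ne_of_mem_of_not_mem (hwU n) hU.notMem) hd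
  obtain ⟨π, hπ, hfπ⟩ :=
    (hψ n).exists_lift (hf.hasConvexLifts_iterate n) (hf.stableSet_subset_iterDomain n hw)
  have hκ₁ : κ ⊆ ball 0 1 := hκ.trans (ball_subset_ball one_half_lt_one.le)
  have hπκ : ContinuousOn π κ := hπ.lifts.differentiableOn.continuousOn.mono hκ₁
  refine ⟨π '' κ, (hκp.image π hπκ).subset_connectedComponentIn ⟨0, hκ₀, hπ.apply_zero⟩ ?_,
    hκc.image_of_continuousOn hπκ, ?_⟩
  · rintro _ ⟨ζ, hζ, rfl⟩
    exact hf.mem_stableSet_of_iterate (hπ.lifts.mapsTo (hκ₁ hζ))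
      ((hfπ (hκ₁ hζ)).symm ▸ hn (mem_image_of_mem _ (hκ hζ)) :)
  · rw [image_image, ← hψκ]
    exact image_congr fun ζ hζ ↦ hfπ (hκ₁ hζ)

/-- `G` extends `f^[m]` to the puncture `z₀` as a contraction fixing `z₀`. -/
structure ContractingExtension (f : ℂ → ℂ) (U' U : Set ℂ) (z₀ : ℂ) (m : ℕ) (s : ℝ) (G : ℂ → ℂ) :
    Prop where
  ne_zero : m ≠ 0
  radius_pos : 0 < s
  differentiableOn : DifferentiableOn ℂ G (ball z₀ s)
  apply_self : G z₀ = z₀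
  subset : ball z₀ s \ {z₀} ⊆ iterDomain f U' U m
  eqOn : EqOn G f^[m] (ball z₀ s \ {z₀})
  dist_le : ∀ z ∈ ball z₀ s, dist (G z) z₀ ≤ 1 / 2 * dist z z₀

namespace PowerChart

variable {F h : ℂ → ℂ} {X : Set ℂ} {z₀ : ℂ} {r R s : ℝ} {D : ℕ}

theorem isOpen_image (hc : PowerChart F X z₀ r D R h) {N : Set ℂ} (hN : IsOpen N)
    (hNR : N ⊆ ball 0 R) : IsOpen (h '' N) :=
  isOpen_image_of_injOn hN (hc.differentiableOn.mono hNR) (hc.injOn.mono hNR)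

theorem ball_subset (hc : PowerChart F X z₀ r D R h) (hs : ball z₀ s ⊆ h '' ball 0 R) :
    ball z₀ s \ {z₀} ⊆ X := by
  rintro x ⟨hx, hx₀⟩
  obtain ⟨z, hz, rfl⟩ := hs hx
  exact hc.mapsTo ⟨hz, fun hz₀ ↦ hx₀ (hz₀ ▸ hc.apply_zero)⟩

theorem tendsto (hc : PowerChart F X z₀ r D R h) : Tendsto F (𝓝[≠] z₀) (𝓝 z₀) := by
  have hpow : Tendsto (fun z ↦ z₀ + z ^ D) (𝓝 0) (𝓝 z₀) :=
    Continuous.tendsto' (by fun_prop) _ _ (by simp [hc.ne_zero])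
  refine fun N hN ↦ mem_nhdsWithin.2 ?_
  obtain ⟨T, hT, hTo, hT₀⟩ := _root_.mem_nhds_iff.1 (hpow hN)
  refine ⟨h '' (ball 0 R ∩ T), hc.isOpen_image (isOpen_ball.inter hTo) inter_subset_left,
    ⟨0, ⟨mem_ball_self hc.radius_pos, hT₀⟩, hc.apply_zero⟩, ?_⟩
  rintro _ ⟨⟨z, hz, rfl⟩, hz₀⟩
  have hne : z ≠ 0 := fun h₀ ↦ hz₀ (h₀ ▸ hc.apply_zero)
  exact mem_preimage.2 (hc.apply_eq z ⟨hz.1, hne⟩ ▸ hT hz.2)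

end PowerChart

namespace ExpandingCovering

variable {f : ℂ → ℂ} {U' U : Set ℂ} {w z₀ b : ℂ} {r : ℝ}

theorem exists_mapsTo_sphere (hf : ExpandingCovering f U' U) {ρ : ℂ → ℝ} (hρ : IsHypDensity U ρ)
    (hw : w ∈ stableSet f U') {nk : ℕ → ℕ} (hnk : Tendsto nk atTop atTop)
    (hconv : TendstoLocallyUniformlyOn (fun k ↦ f^[nk k]) (fun _ ↦ z₀) atTop
      (connectedComponentIn (stableSet f U') w))
    (hU : IsPuncture U z₀ r b) : ∃ m s, m ≠ 0 ∧ 0 < s ∧ s < r ∧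
      sphere z₀ s ⊆ iterDomain f U' U m ∧
      MapsTo f^[m] (sphere z₀ s) (ball z₀ (s / 2)) := by
  have hr := hU.radius_pos
  have hclose := (hconv.tendsto_at (mem_connectedComponentIn hw)).eventually
    (ball_mem_nhds z₀ (show 0 < r * Real.exp (-8) by positivity))
  obtain ⟨k, hcircle, hk⟩ := ((hnk.eventually
    (hf.eventually_exists_image_eq_sphere hρ hw hU)).and hclose).exists
  obtain ⟨K, hKW, hKc, hK⟩ := hcircle hk
  set s := dist (f^[nk k] w) z₀
  have hs : 0 < s := dist_pos.2 <| ne_of_mem_of_not_mem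
    (hf.stableSet_subset (hf.mapsTo_iterate_stableSet _ hw)) hU.notMem
  have hsr : s < r := (mem_ball.1 hk).trans
    (mul_lt_of_lt_one_right hr (Real.exp_lt_one_iff.2 (by norm_num)))
  have hunif := Metric.tendstoUniformlyOn_iff.1 ((tendstoLocallyUniformlyOn_iff_forall_isCompact
    isOpen_stableSet.connectedComponentIn).1 hconv K hKW hKc) (s / 2) (half_pos hs)
  obtain ⟨l, hl, hlk⟩ := (hunif.and (hnk.eventually_gt_atTop (nk k))).exists
  refine ⟨nk l - nk k, s, Nat.sub_ne_zero_of_lt hlk, hs, hsr, ?_, ?_⟩ <;> rw [← hK]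
  · rintro _ ⟨z, hz, rfl⟩
    exact hf.stableSet_subset_iterDomain _
      (hf.mapsTo_iterate_stableSet _ (connectedComponentIn_subset _ _ (hKW hz)))
  · rintro _ ⟨z, hz, rfl⟩
    rw [← Function.iterate_add_apply, Nat.sub_add_cancel hlk.le, mem_ball']
    exact hl z hz

end ExpandingCovering

theorem contractingExtension_of_mapsTo_sphere {f : ℂ → ℂ} {U' U : Set ℂ} {z₀ b : ℂ} {r s : ℝ}
    {m : ℕ} (hf : ExpandingCovering f U' U) (hU : IsPuncture U z₀ r b) (hm : m ≠ 0) (hs : 0 < s)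
    (hsr : s < r) (hsub : sphere z₀ s ⊆ iterDomain f U' U m)
    (hfs : MapsTo f^[m] (sphere z₀ s) (ball z₀ (s / 2))) :
    ContractingExtension f U' U z₀ m s (Function.update f^[m] z₀ z₀) := by
  set G := Function.update f^[m] z₀ z₀
  have hG₀ : G z₀ = z₀ := Function.update_self ..
  have hG (z : ℂ) (hz : z ≠ z₀) : G z = f^[m] z := Function.update_of_ne hz _ _
  have hF := hf.hasConvexLifts_iterate m
  obtain ⟨D, R, h, hc, hcs⟩ := hF.exists_powerChart (iterDomain_subset m) hU hs hsr hsub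
    (hfs.mono_right (ball_subset_ball (by linarith)))
  have hball := hc.ball_subset hcs
  have hclosed : closedBall z₀ s \ {z₀} ⊆ iterDomain f U' U m := by
    rw [← ball_union_sphere, union_sdiff_distrib]
    exact union_subset hball (sdiff_subset.trans hsub)
  have hGd : DifferentiableOn ℂ G (insert z₀ (iterDomain f U' U m)) := by
    refine (Complex.differentiableOn_compl_singleton_and_continuousAt_iff
      (mem_of_superset (ball_mem_nhds z₀ hs) (sdiff_singleton_subset_iff.1 hball))).1
      ⟨(hF.differentiableOn.mono ?_).congr fun x hx ↦ hG x hx.2,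
        continuousAt_update_same.2 hc.tendsto⟩
    exact sdiff_singleton_subset_iff.2 subset_rfl
  have hGc : DifferentiableOn ℂ G (closedBall z₀ s) :=
    hGd.mono (sdiff_singleton_subset_iff.1 hclosed)
  have hmax : MapsTo G (ball z₀ s) (closedBall (G z₀) (s / 2)) := fun z hz ↦ by
    rw [hG₀, mem_closedBall_iff_norm]
    refine Complex.norm_le_of_forall_mem_frontier_norm_le (U := ball z₀ s)
      (f := fun z ↦ G z - z₀) isBounded_ball
      (DifferentiableOn.diffContOnCl (by rw [closure_ball z₀ hs.ne']; exact hGc.sub_const z₀))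
      (fun x hx ↦ ?_) (subset_closure hz)
    rw [frontier_ball z₀ hs.ne'] at hx
    rw [hG x (ne_of_mem_sphere hx hs.ne'), ← dist_eq_norm]
    exact (hfs hx).le
  refine ⟨hm, hs, hGc.mono ball_subset_closedBall, hG₀, hball, fun x hx ↦ hG x hx.2, fun x hx ↦ ?_⟩
  have hle := Complex.dist_le_div_mul_dist_of_mapsTo_ball (hGc.mono ball_subset_closedBall) hmax hx
  rwa [hG₀, div_right_comm, div_self hs.ne'] at hle

theorem exists_norm_deriv_mul_dist_le {G : ℂ → ℂ} {z₀ : ℂ} {N : Set ℂ} (hN : N ∈ 𝓝 z₀)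
    (hG : DifferentiableOn ℂ G N) (hfix : G z₀ = z₀) (hderiv : deriv G z₀ ≠ 0) :
    ∃ C, 0 ≤ C ∧ ∀ᶠ z in 𝓝 z₀,
      ‖deriv G z‖ * dist z z₀ ≤ Real.exp (C * dist z z₀) * dist (G z) z₀ := by
  have hslope : DifferentiableAt ℂ (dslope G z₀) z₀ :=
    ((Complex.differentiableOn_dslope hN).2 hG).differentiableAt hN
  have hslope₀ : dslope G z₀ z₀ ≠ 0 := by rwa [dslope_same]
  have hquot : DifferentiableAt ℂ (fun z ↦ deriv G z / dslope G z₀ z) z₀ :=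
    (hG.analyticAt hN).deriv.differentiableAt.div hslope hslope₀
  obtain ⟨C, hC, hbound⟩ := hquot.isBigO_sub.exists_nonneg
  refine ⟨C, hC, ?_⟩
  filter_upwards [hbound.bound, hslope.continuousAt.eventually_ne hslope₀] with z hz hne
  have hdist : dist (G z) z₀ = ‖dslope G z₀ z‖ * dist z z₀ := by
    rw [dist_eq_norm, dist_eq_norm, mul_comm, ← norm_mul, ← smul_eq_mul, sub_smul_dslope, hfix]
  rw [dslope_same, div_self hderiv] at hz
  have hle : ‖deriv G z‖ / ‖dslope G z₀ z‖ ≤ Real.exp (C * dist z z₀) := by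
    rw [← norm_div, dist_eq_norm]
    have := norm_le_norm_add_norm_sub' (deriv G z / dslope G z₀ z) 1
    rw [norm_one] at this
    linarith [Real.add_one_le_exp (C * ‖z - z₀‖)]
  rw [div_le_iff₀ (norm_pos_iff.2 hne)] at hle
  rw [hdist, ← mul_assoc]
  gcongr

theorem norm_deriv_iterate_mul_dist_le {G : ℂ → ℂ} {z₀ z : ℂ} {C δ : ℝ}
    (hG : DifferentiableOn ℂ G (ball z₀ δ)) (hC : 0 ≤ C)
    (hcontr : ∀ z ∈ ball z₀ δ, dist (G z) z₀ ≤ 1 / 2 * dist z z₀)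
    (hderiv : ∀ z ∈ ball z₀ δ,
      ‖deriv G z‖ * dist z z₀ ≤ Real.exp (C * dist z z₀) * dist (G z) z₀)
    (hz : z ∈ ball z₀ δ) (j : ℕ) :
    ‖deriv G^[j] z‖ * dist z z₀ ≤
      Real.exp (2 * C * (dist z z₀ - dist (G^[j] z) z₀)) * dist (G^[j] z) z₀ := by
  have hmaps : MapsTo G (ball z₀ δ) (ball z₀ δ) := fun z hz ↦ by
    rw [mem_ball] at *
    linarith [hcontr z hz, dist_nonneg (x := z) (y := z₀)]
  induction j with
  | zero => simp [Function.iterate_zero]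
  | succ j ih =>
    set x := G^[j] z
    have hx : x ∈ ball z₀ δ := hmaps.iterate j hz
    have hchain : deriv G^[j + 1] z = deriv G x * deriv G^[j] z := by
      rw [Function.iterate_succ']
      exact deriv_comp z (hG.differentiableAt (isOpen_ball.mem_nhds hx))
        ((hG.iterate hmaps j).differentiableAt (isOpen_ball.mem_nhds hz))
    rw [Function.iterate_succ_apply', hchain, norm_mul]
    calc ‖deriv G x‖ * ‖deriv G^[j] z‖ * dist z z₀
        ≤ ‖deriv G x‖ * (Real.exp (2 * C * (dist z z₀ - dist x z₀)) * dist x z₀) := by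
          rw [mul_assoc]
          gcongr
      _ = Real.exp (2 * C * (dist z z₀ - dist x z₀)) * (‖deriv G x‖ * dist x z₀) := by ring
      _ ≤ Real.exp (2 * C * (dist z z₀ - dist x z₀)) *
          (Real.exp (2 * C * (dist x z₀ - dist (G x) z₀)) * dist (G x) z₀) := by
          refine mul_le_mul_of_nonneg_left ((hderiv x hx).trans ?_) (Real.exp_pos _).le
          gcongr ?_ * _
          exact Real.exp_le_exp.2 (by nlinarith [hcontr x hx])
      _ = Real.exp (2 * C * (dist z z₀ - dist (G x) z₀)) * dist (G x) z₀ := by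
          rw [← mul_assoc, ← Real.exp_add]
          ring_nf

namespace ContractingExtension

variable {f G : ℂ → ℂ} {U' U : Set ℂ} {z₀ z : ℂ} {m : ℕ} {s : ℝ}
  (hG : ContractingExtension f U' U z₀ m s G)
include hG

theorem mapsTo_ball : MapsTo G (ball z₀ s) (ball z₀ s) := fun z hz ↦ by
  rw [mem_ball] at *
  linarith [hG.dist_le z hz, dist_nonneg (x := z) (y := z₀)]

theorem dist_iterate_le (hz : z ∈ ball z₀ s) (j : ℕ) :
    dist (G^[j] z) z₀ ≤ s * Real.exp (-(j * Real.log 2)) := by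
  induction j with
  | zero => simpa using (mem_ball.1 hz).le
  | succ j ih =>
    rw [Function.iterate_succ_apply']
    calc dist (G (G^[j] z)) z₀ ≤ 1 / 2 * dist (G^[j] z) z₀ :=
          hG.dist_le _ (hG.mapsTo_ball.iterate j hz)
      _ ≤ 1 / 2 * (s * Real.exp (-(j * Real.log 2))) := by gcongr
      _ = s * Real.exp (-((j + 1 : ℕ) * Real.log 2)) := by
        rw [Nat.cast_add_one, add_one_mul, neg_add, Real.exp_add, Real.exp_neg (Real.log 2),
          Real.exp_log two_pos]
        ring

variable (hf : ExpandingCovering f U' U) (hz₀ : z₀ ∉ U)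
include hf hz₀

theorem mapsTo_ball_diff_singleton : MapsTo G (ball z₀ s \ {z₀}) (ball z₀ s \ {z₀}) :=
  fun z hz ↦ ⟨hG.mapsTo_ball hz.1, fun h ↦ hz₀ <| by
    rw [← mem_singleton_iff.1 h, hG.eqOn hz]
    exact (hf.hasConvexLifts_iterate m).mapsTo (hG.subset hz)⟩

theorem eqOn_iterate (j : ℕ) : EqOn G^[j] f^[m * j] (ball z₀ s \ {z₀}) := fun z hz ↦ by
  induction j with
  | zero => rfl
  | succ j ih =>
    rw [Function.iterate_succ_apply',
      hG.eqOn ((hG.mapsTo_ball_diff_singleton hf hz₀).iterate j hz), ih,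
      ← Function.iterate_add_apply, mul_add_one, add_comm]

theorem subset_iterDomain (j : ℕ) : ball z₀ s \ {z₀} ⊆ iterDomain f U' U (m * j) := by
  induction j with
  | zero => exact hG.subset.trans ((iterDomain_subset m).trans (iterDomain_zero).ge)
  | succ j ih =>
    rw [mul_add_one, hf.iterDomain_add]
    refine fun z hz ↦ ⟨ih hz, hG.subset ?_⟩
    exact hG.eqOn_iterate hf hz₀ j hz ▸ (hG.mapsTo_ball_diff_singleton hf hz₀).iterate j hz

theorem subset_stableSet : ball z₀ s \ {z₀} ⊆ stableSet f U' :=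
  _root_.subset_stableSet (isOpen_ball.sdiff isClosed_singleton) (.of_forall fun n ↦
    (hG.subset_iterDomain hf hz₀ n).trans
      (antitone_iterDomain (Nat.le_mul_of_pos_left n (Nat.pos_of_ne_zero hG.ne_zero))))

theorem dist_iterate_mul_le {ψ : ℂ → ℂ} (hψ : DiscCover U z ψ) (hz : z ∈ ball z₀ s \ {z₀}) {j : ℕ}
    (hj : 0 < j) :
    dist (G^[j] z) z₀ * (j * Real.log 2) ≤ ‖deriv G^[j] z‖ * ‖deriv ψ 0‖ := by
  have hzj := (hG.mapsTo_ball_diff_singleton hf hz₀).iterate j hz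
  have heq := hG.eqOn_iterate hf hz₀ j
  set c := Complex.log (G^[j] z - z₀)
  have hc : Complex.exp c = G^[j] z - z₀ := Complex.exp_log (sub_ne_zero.2 hzj.2)
  have hball : ball c (j * Real.log 2) ⊆ expHalfPlane s :=
    ball_subset_expHalfPlane hG.radius_pos <| by
      rw [hc, ← dist_eq_norm]
      exact hG.dist_iterate_le hz.1 j
  have hU : ball z₀ s \ {z₀} ⊆ U := hG.subset.trans (iterDomain_subset m)
  have hle := hψ.norm_deriv_mul_le (hf.hasConvexLifts_iterate (m * j)) (iterDomain_subset _)
    (hG.subset_iterDomain hf hz₀ j hz) (by positivity) (g := fun ζ ↦ z₀ + Complex.exp ζ) (c := c)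
    (r := j * Real.log 2) (by fun_prop) (fun ζ hζ ↦ hU (add_exp_mem hG.radius_pos (hball hζ)))
    (by rw [← heq hz, hc, add_sub_cancel])
  have hopen : IsOpen (ball z₀ s \ {z₀}) := isOpen_ball.sdiff isClosed_singleton
  rw [← (heq.eventuallyEq_of_mem (hopen.mem_nhds hz)).deriv_eq] at hle
  simpa [hc, dist_eq_norm] using hle

theorem natCast_mul_log_two_mul_dist_le {ψ : ℂ → ℂ} (hψ : DiscCover U z ψ)
    (hz : z ∈ ball z₀ s \ {z₀}) {j : ℕ} (hj : 0 < j) {A : ℝ}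
    (hA : ‖deriv G^[j] z‖ * dist z z₀ ≤ A * dist (G^[j] z) z₀) :
    j * (Real.log 2 * dist z z₀) ≤ A * ‖deriv ψ 0‖ := by
  have hdist : 0 < dist (G^[j] z) z₀ :=
    dist_pos.2 ((hG.mapsTo_ball_diff_singleton hf hz₀).iterate j hz).2
  refine le_of_mul_le_mul_left ?_ hdist
  calc dist (G^[j] z) z₀ * (j * (Real.log 2 * dist z z₀))
      = dist (G^[j] z) z₀ * (j * Real.log 2) * dist z z₀ := by ring
    _ ≤ ‖deriv G^[j] z‖ * ‖deriv ψ 0‖ * dist z z₀ :=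
        mul_le_mul_of_nonneg_right (hG.dist_iterate_mul_le hf hz₀ hψ hz hj) dist_nonneg
    _ = ‖deriv G^[j] z‖ * dist z z₀ * ‖deriv ψ 0‖ := by ring
    _ ≤ A * dist (G^[j] z) z₀ * ‖deriv ψ 0‖ := mul_le_mul_of_nonneg_right hA (norm_nonneg _)
    _ = dist (G^[j] z) z₀ * (A * ‖deriv ψ 0‖) := by ring

/-- If `deriv G z₀ ≠ 0`, then `deriv G^[j] z` is comparable to `G^[j] z - z₀`, while the expansion
of the hyperbolic metric forces it to be larger by a factor of order `j`. -/
theorem deriv_eq_zero {ρ : ℂ → ℝ} (hρ : IsHypDensity U ρ) : deriv G z₀ = 0 := by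
  by_contra hderiv
  have hs := ball_mem_nhds z₀ hG.radius_pos
  obtain ⟨C, hC, hbound⟩ :=
    exists_norm_deriv_mul_dist_le hs hG.differentiableOn hG.apply_self hderiv
  obtain ⟨δ, hδ, hδC⟩ := Metric.eventually_nhds_iff_ball.1 (hbound.and hs)
  obtain ⟨z, hz, hne⟩ : (ball z₀ δ \ {z₀}).Nonempty :=
    image_add_exp_expHalfPlane z₀ hδ ▸ (nonempty_expHalfPlane δ).image _
  have hzs : z ∈ ball z₀ s \ {z₀} := ⟨(hδC z hz).2, hne⟩
  have hiter (j : ℕ) :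
      ‖deriv G^[j] z‖ * dist z z₀ ≤ Real.exp (2 * C * dist z z₀) * dist (G^[j] z) z₀ := by
    refine (norm_deriv_iterate_mul_dist_le (hG.differentiableOn.mono fun z hz ↦ (hδC z hz).2) hC
      (fun z hz ↦ hG.dist_le z (hδC z hz).2) (fun z hz ↦ (hδC z hz).1) hz j).trans ?_
    gcongr
    exact sub_le_self _ dist_nonneg
  obtain ⟨ψ, hψ, -⟩ := exists_discCover hf.lifts.isOpen_target hρ
    (iterDomain_subset m (hG.subset hzs))
  have hlarge := (tendsto_natCast_atTop_atTop.atTop_mul_const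
    (mul_pos (Real.log_pos one_lt_two) (dist_pos.2 hne))).eventually_gt_atTop
      (Real.exp (2 * C * dist z z₀) * ‖deriv ψ 0‖)
  obtain ⟨j, hj, hj₀⟩ := (hlarge.and (eventually_gt_atTop 0)).exists
  exact hj.not_ge (hG.natCast_mul_log_two_mul_dist_le hf hz₀ hψ hzs hj₀ (hiter j))

end ContractingExtension

/-! ### Simple connectivity of the filled components -/

namespace HasConvexLifts

variable {F : ℂ → ℂ} {X Y : Set ℂ}

theorem mem_image_of_mem_closure (hF : HasConvexLifts F X Y) {y : ℂ} (hy : y ∈ Y)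
    (hcl : y ∈ closure (F '' X)) : y ∈ F '' X := by
  obtain ⟨ε, hε, hball⟩ := isOpen_iff.1 hF.isOpen_target y hy
  obtain ⟨_, hxy, x, hx, rfl⟩ := mem_closure_iff.1 hcl _ isOpen_ball (mem_ball_self hε)
  obtain ⟨G, -, hGX, -, hFG⟩ := hF.exists_continuousOn_lift (convex_ball y ε) continuousOn_id
    hball hxy hx rfl
  exact ⟨G y, hGX (mem_ball_self hε), hFG (mem_ball_self hε)⟩

theorem image_eq_of_isPreconnected (hF : HasConvexLifts F X Y) (hX : X.Nonempty)
    (hY : IsPreconnected Y) : F '' X = Y := by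
  refine hF.mapsTo.image_subset.antisymm (hY.subset_of_closure_inter_subset
    (hF.isOpen_image hF.isOpen_source subset_rfl) ?_
      fun y hy ↦ hF.mem_image_of_mem_closure hy.2 hy.1)
  obtain ⟨x, hx⟩ := hX
  exact ⟨F x, hF.mapsTo hx, mem_image_of_mem F hx⟩

protected theorem connectedComponentIn (hF : HasConvexLifts F X Y) {x : ℂ} (hx : x ∈ X) :
    HasConvexLifts F (connectedComponentIn X x) (connectedComponentIn Y (F x)) where
  isOpen_source := hF.isOpen_source.connectedComponentIn
  isOpen_target := hF.isOpen_target.connectedComponentIn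
  mapsTo := mapsTo_iff_image_subset.2 <|
    (isPreconnected_connectedComponentIn.image F (hF.differentiableOn.continuousOn.mono
      (connectedComponentIn_subset X x))).subset_connectedComponentIn
        (mem_image_of_mem F (mem_connectedComponentIn hx))
        (image_subset_iff.2 fun _ hz ↦ hF.mapsTo (connectedComponentIn_subset X x hz))
  differentiableOn := hF.differentiableOn.mono (connectedComponentIn_subset X x)
  exists_continuousOn_lift S hS g hg hgY s hs x' hx' hxs := by
    obtain ⟨G, hG, hGX, hGs, hFG⟩ := hF.exists_continuousOn_lift hS hg
      (hgY.mono_right (connectedComponentIn_subset Y (F x))) hs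
      (connectedComponentIn_subset X x hx') hxs
    refine ⟨G, hG, mapsTo_iff_image_subset.2 ?_, hGs, hFG⟩
    rw [connectedComponentIn_eq hx']
    exact (hS.isPreconnected.image G hG).subset_connectedComponentIn
      (hGs ▸ mem_image_of_mem G hs) hGX.image_subset
  eqOn_of_comp_eqOn S hS G₁ G₂ hG₁ hG₂ hX₁ hX₂ := hF.eqOn_of_comp_eqOn hS hG₁ hG₂
    (hX₁.mono_right (connectedComponentIn_subset X x))
    (hX₂.mono_right (connectedComponentIn_subset X x))

protected theorem pow {D : ℕ} (hD : D ≠ 0) : HasConvexLifts (fun z ↦ z ^ D) {0}ᶜ {0}ᶜ :=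
  hasConvexLifts_of_isCoveringMap (h := fun _ hz ↦ pow_ne_zero D hz) isOpen_compl_singleton
    isOpen_compl_singleton (differentiable_pow D).differentiableOn
    (isCoveringMap_npow D (Nat.cast_ne_zero.2 hD))

protected theorem const_add (c : ℂ) : HasConvexLifts (fun z ↦ c + z) {0}ᶜ {c}ᶜ :=
  of_leftInvOn (T := fun z ↦ z - c) isOpen_compl_singleton isOpen_compl_singleton (by fun_prop)
    (by fun_prop) (fun _ hz ↦ by simpa using hz) (fun _ hz ↦ sub_ne_zero.2 hz)
    (fun _ _ ↦ add_sub_cancel_left _ _) fun _ _ ↦ add_sub_cancel _ _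

theorem const_add_pow (z₀ : ℂ) {D : ℕ} (hD : D ≠ 0) {R : ℝ} (hR : 0 ≤ R) :
    HasConvexLifts (fun z ↦ z₀ + z ^ D) (ball 0 R \ {0}) (ball z₀ (R ^ D) \ {z₀}) := by
  have hpre : ball 0 R \ {0} = {0}ᶜ ∩ (fun z ↦ z₀ + z ^ D) ⁻¹' (ball z₀ (R ^ D) \ {z₀}) := by
    ext z
    simp +contextual [hD, pow_lt_pow_iff_left₀ (norm_nonneg z) hR hD]
  rw [hpre]
  exact ((HasConvexLifts.const_add z₀).comp (.pow hD)).restrict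
    (isOpen_ball.sdiff isClosed_singleton) fun _ hz ↦ hz.2

end HasConvexLifts

namespace PowerChart

variable {F h : ℂ → ℂ} {X Y : Set ℂ} {z₀ : ℂ} {r R : ℝ} {D : ℕ}

theorem isSimplyConnected_image (hc : PowerChart F X z₀ r D R h) :
    IsSimplyConnected (h '' ball 0 R) := by
  have : ContractibleSpace (ball (0 : ℂ) R) :=
    (convex_ball _ _).contractibleSpace ⟨0, mem_ball_self hc.radius_pos⟩
  have hemb : IsOpenEmbedding ((ball (0 : ℂ) R).domRestrict h) := by
    refine .of_continuous_injective_isOpenMap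
      (continuousOn_iff_continuous_domRestrict.1 hc.differentiableOn.continuousOn)
      (injOn_iff_injective.1 hc.injOn) fun N hN ↦ ?_
    have hopen := hc.isOpen_image (isOpen_ball.isOpenMap_subtype_val N hN) (by simp)
    rwa [image_image] at hopen
  have hcontr := hemb.isEmbedding.toHomeomorph.symm.contractibleSpace
  rw [range_domRestrict] at hcontr
  exact inferInstanceAs (SimplyConnectedSpace (h '' ball 0 R))

theorem hasConvexLifts (hc : PowerChart F X z₀ r D R h) (hF : HasConvexLifts F X Y)
    (hrY : ball z₀ r \ {z₀} ⊆ Y) :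
    HasConvexLifts h (ball 0 R \ {0}) (X ∩ F ⁻¹' (ball z₀ r \ {z₀})) := by
  have hpow := HasConvexLifts.const_add_pow z₀ hc.ne_zero hc.radius_pos.le
  rw [hc.radius_pow] at hpow
  refine (hF.restrict (isOpen_ball.sdiff isClosed_singleton) hrY).of_comp hpow
    (hc.differentiableOn.mono sdiff_subset) (fun z hz ↦ ⟨hc.mapsTo hz, ?_⟩) hc.apply_eq
  rw [mem_preimage, hc.apply_eq z hz]
  exact hpow.mapsTo hz

theorem image_subset (hc : PowerChart F X z₀ r D R h) : h '' ball 0 R ⊆ insert z₀ X := by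
  rw [← insert_sdiff_self_of_mem (mem_ball_self hc.radius_pos), image_insert_eq, hc.apply_zero]
  exact insert_subset_insert hc.mapsTo.image_subset

theorem mem_image_of_mem_closure (hc : PowerChart F X z₀ r D R h) (hF : HasConvexLifts F X Y)
    (hrY : ball z₀ r \ {z₀} ⊆ Y) (hz₀ : z₀ ∉ X) {y : ℂ} (hy : y ∈ X)
    (hFy : F y ∈ ball z₀ r \ {z₀}) (hcl : y ∈ closure (h '' ball 0 R)) : y ∈ h '' ball 0 R := by
  rw [← insert_sdiff_self_of_mem (mem_ball_self hc.radius_pos), image_insert_eq, hc.apply_zero,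
    insert_eq, closure_union, closure_singleton] at hcl
  rcases hcl with rfl | hcl
  · exact absurd hy hz₀
  · exact image_mono sdiff_subset <|
      (hc.hasConvexLifts hF hrY).mem_image_of_mem_closure ⟨hy, hFy⟩ hcl

end PowerChart

theorem isSimplyConnected_of_forall_isCompact {α : Type*} [TopologicalSpace α] {Ω : Set α} {a : α}
    (hΩ : IsPathConnected Ω) (ha : a ∈ Ω)
    (h : ∀ K ⊆ Ω, IsCompact K → IsPreconnected K → a ∈ K →
      ∃ V, K ⊆ V ∧ V ⊆ Ω ∧ IsSimplyConnected V) : IsSimplyConnected Ω := by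
  refine isSimplyConnected_iff_exists_homotopy_refl_forall_mem.2 ⟨hΩ, fun x p hp ↦ ?_⟩
  obtain ⟨γ, hγ⟩ := hΩ.joinedIn x (p.source ▸ hp 0) a ha
  obtain ⟨V, hKV, hVΩ, hV⟩ := h (range p ∪ range γ)
    (union_subset (range_subset_iff.2 hp) (range_subset_iff.2 hγ))
    ((isCompact_range p.continuous).union (isCompact_range γ.continuous))
    ((isPreconnected_range p.continuous).union x ⟨0, p.source⟩ ⟨0, γ.source⟩
      (isPreconnected_range γ.continuous)) (.inr ⟨1, γ.target⟩)
  obtain ⟨H, hH⟩ := (isSimplyConnected_iff_exists_homotopy_refl_forall_mem.1 hV).2 x p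
    fun t ↦ hKV (.inl ⟨t, rfl⟩)
  exact ⟨H, fun t ↦ hVΩ (hH t)⟩

theorem isPathConnected_insert {W : Set ℂ} {z₀ : ℂ} {s : ℝ} (hW : IsOpen W)
    (hWc : IsPreconnected W) (hs : 0 < s) (hsW : ball z₀ s \ {z₀} ⊆ W) :
    IsPathConnected (insert z₀ W) := by
  have hball : ball z₀ s ∪ W = insert z₀ W := by
    rw [← insert_sdiff_self_of_mem (mem_ball_self hs), insert_union,
      union_eq_self_of_subset_left hsW]
  have hopen : IsOpen (insert z₀ W) := hball ▸ isOpen_ball.union hW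
  refine hopen.isConnected_iff_isPathConnected.1 ⟨⟨z₀, mem_insert z₀ W⟩, ?_⟩
  obtain ⟨a, ha⟩ : (ball z₀ s \ {z₀}).Nonempty :=
    image_add_exp_expHalfPlane z₀ hs ▸ (nonempty_expHalfPlane s).image _
  exact hball ▸ (convex_ball z₀ s).isPreconnected.union a ha.1 (hsW ha) hWc

/-- The part of `W` that `F` maps into a small punctured disc around `z₀`, completed by `z₀`, is a
disc by the power chart. -/
theorem HasConvexLifts.exists_isSimplyConnected {F : ℂ → ℂ} {W K : Set ℂ} {z₀ b : ℂ} {s t : ℝ}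
    (hF : HasConvexLifts F W W) (hW : IsPuncture W z₀ s b) (ht : 0 < t) (hts : t < s)
    (hsphere : MapsTo F (sphere z₀ t) (ball z₀ s)) (hKW : K ⊆ insert z₀ W)
    (hK : IsPreconnected K) (hz₀K : z₀ ∈ K) (hFK : MapsTo F (K \ ball z₀ t) (ball z₀ s)) :
    ∃ V, K ⊆ V ∧ V ⊆ insert z₀ W ∧ IsSimplyConnected V := by
  have hsW : sphere z₀ t ⊆ W := fun z hz ↦
    hW.subset ⟨sphere_subset_ball hts hz, ne_of_mem_sphere hz ht.ne'⟩
  obtain ⟨D, R, h, hc, hth⟩ := hF.exists_powerChart subset_rfl hW ht hts hsW hsphere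
  refine ⟨h '' ball 0 R, hK.subset_of_closure_inter_subset (hc.isOpen_image isOpen_ball subset_rfl)
    ⟨z₀, hz₀K, hth (mem_ball_self ht)⟩ ?_, hc.image_subset, hc.isSimplyConnected_image⟩
  rintro y ⟨hcl, hyK⟩
  by_cases hyt : y ∈ ball z₀ t
  · exact hth hyt
  have hyW : y ∈ W := (hKW hyK).resolve_left fun h ↦ hyt (h ▸ mem_ball_self ht)
  exact hc.mem_image_of_mem_closure hF hW.subset hW.notMem hyW
    ⟨hFK ⟨hyK, hyt⟩, fun h ↦ hW.notMem (h ▸ hF.mapsTo hyW)⟩ hcl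

theorem isSimplyConnected_insert_of_tendstoLocallyUniformlyOn {ι : Type*} {l : Filter ι} [l.NeBot]
    {F : ι → ℂ → ℂ} {W : Set ℂ} {z₀ b : ℂ} {s : ℝ} (hWc : IsPreconnected W)
    (hW : IsPuncture W z₀ s b) (hF : ∀ᶠ i in l, HasConvexLifts (F i) W W)
    (hconv : TendstoLocallyUniformlyOn F (fun _ ↦ z₀) l W) :
    IsSimplyConnected (insert z₀ W) := by
  have hs := hW.radius_pos
  obtain ⟨t, ht, hts⟩ := exists_between hs
  have hWo : IsOpen W := hF.exists.choose_spec.isOpen_source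
  refine isSimplyConnected_of_forall_isCompact (isPathConnected_insert hWo hWc hs hW.subset)
    (mem_insert z₀ W) fun K hKW hK hKc hz₀K ↦ ?_
  have hsub : K \ ball z₀ t ∪ sphere z₀ t ⊆ W := by
    rintro z (⟨hzK, hzt⟩ | hz)
    · exact (hKW hzK).resolve_left fun h ↦ hzt (h ▸ mem_ball_self ht)
    · exact hW.subset ⟨sphere_subset_ball hts hz, ne_of_mem_sphere hz ht.ne'⟩
  have hunif := (tendstoLocallyUniformlyOn_iff_forall_isCompact hWo).1 hconv _ hsub
    ((hK.diff isOpen_ball).union (isCompact_sphere z₀ t))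
  obtain ⟨i, hi, hFi⟩ := ((Metric.tendstoUniformlyOn_iff.1 hunif s hs).and hF).exists
  have hmaps : MapsTo (F i) (K \ ball z₀ t ∪ sphere z₀ t) (ball z₀ s) :=
    fun z hz ↦ mem_ball'.2 (hi z hz)
  exact hFi.exists_isSimplyConnected hW ht hts (hmaps.mono_left subset_union_right) hKW hKc hz₀K
    (hmaps.mono_left subset_union_left)

theorem HasConvexLifts.tendstoLocallyUniformlyOn_image {ι : Type*} {l : Filter ι} {F : ℂ → ℂ}
    {X Y W : Set ℂ} (hF : HasConvexLifts F X Y) (hW : IsOpen W) (hWX : W ⊆ X) {G : ι → ℂ → ℂ}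
    {g : ℂ → ℂ} (hG : TendstoLocallyUniformlyOn (fun i ↦ G i ∘ F) (g ∘ F) l W) :
    TendstoLocallyUniformlyOn G g l (F '' W) := by
  rintro u hu _ ⟨x, hx, rfl⟩
  obtain ⟨t, ht, hut⟩ := hG u hu x hx
  rw [hW.nhdsWithin_eq hx] at ht
  refine ⟨F '' t, mem_nhdsWithin_of_mem_nhds ?_, hut.mono ?_⟩
  · obtain ⟨v, hvt, hv, hxv⟩ := _root_.mem_nhds_iff.1 (inter_mem ht (hW.mem_nhds hx))
    exact mem_of_superset
      ((hF.isOpen_image hv fun z hz ↦ hWX (hvt hz).2).mem_nhds (mem_image_of_mem F hxv))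
      (image_mono fun z hz ↦ (hvt hz).1)
  · rintro i hi _ ⟨y, hy, rfl⟩
    exact hi y hy

namespace ExpandingCovering

variable {f : ℂ → ℂ} {U' U : Set ℂ} {w z₀ b : ℂ} {s : ℝ} (hf : ExpandingCovering f U' U)
include hf

theorem hasConvexLifts_iterate_stableSet (n : ℕ) :
    HasConvexLifts f^[n] (stableSet f U') (stableSet f U') := by
  have hpre : stableSet f U' = iterDomain f U' U n ∩ f^[n] ⁻¹' stableSet f U' :=
    (subset_inter (hf.stableSet_subset_iterDomain n)
      (hf.mapsTo_iterate_stableSet n)).antisymm fun _ hz ↦ hf.mem_stableSet_of_iterate hz.1 hz.2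
  have hrestrict := (hf.hasConvexLifts_iterate n).restrict isOpen_stableSet hf.stableSet_subset
  rwa [← hpre] at hrestrict

theorem image_connectedComponentIn_stableSet (hw : w ∈ stableSet f U') (n : ℕ) :
    f^[n] '' connectedComponentIn (stableSet f U') w =
      connectedComponentIn (stableSet f U') (f^[n] w) :=
  ((hf.hasConvexLifts_iterate_stableSet n).connectedComponentIn hw).image_eq_of_isPreconnected
    ⟨w, mem_connectedComponentIn hw⟩ isPreconnected_connectedComponentIn

theorem tendstoLocallyUniformlyOn_iterate_sub (hw : w ∈ stableSet f U') {nk : ℕ → ℕ}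
    (hnk : Tendsto nk atTop atTop)
    (hconv : TendstoLocallyUniformlyOn (fun k ↦ f^[nk k]) (fun _ ↦ z₀) atTop
      (connectedComponentIn (stableSet f U') w)) (n : ℕ) :
    TendstoLocallyUniformlyOn (fun k ↦ f^[nk k - n]) (fun _ ↦ z₀) atTop
      (connectedComponentIn (stableSet f U') (f^[n] w)) := by
  rw [← hf.image_connectedComponentIn_stableSet hw]
  refine (hf.hasConvexLifts_iterate_stableSet n).tendstoLocallyUniformlyOn_image
    isOpen_stableSet.connectedComponentIn (connectedComponentIn_subset _ _) fun u hu x hx ↦ ?_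
  obtain ⟨t, ht, hut⟩ := hconv u hu x hx
  refine ⟨t, ht, ?_⟩
  filter_upwards [hut, hnk.eventually_ge_atTop n] with k hk hn
  rwa [← Function.iterate_add, Nat.sub_add_cancel hn]

theorem isSimplyConnected_insert_connectedComponentIn (hU : IsPuncture U z₀ s b)
    (hs : ball z₀ s \ {z₀} ⊆ stableSet f U') (hw : w ∈ ball z₀ s \ {z₀}) {nk : ℕ → ℕ}
    (hconv : TendstoLocallyUniformlyOn (fun k ↦ f^[nk k]) (fun _ ↦ z₀) atTop
      (connectedComponentIn (stableSet f U') w)) :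
    IsSimplyConnected (insert z₀ (connectedComponentIn (stableSet f U') w)) := by
  set W := connectedComponentIn (stableSet f U') w
  have hsW : ball z₀ s \ {z₀} ⊆ W :=
    (isPreconnected_ball_diff_singleton z₀ hU.radius_pos).subset_connectedComponentIn hw hs
  have hW : IsPuncture W z₀ s b := hU.of_subset
    ((connectedComponentIn_subset _ _).trans hf.stableSet_subset) hU.radius_pos le_rfl hsW
  refine isSimplyConnected_insert_of_tendstoLocallyUniformlyOn isPreconnected_connectedComponentIn
    hW ?_ hconv
  filter_upwards [(hconv.tendsto_at (mem_connectedComponentIn (hs hw))).eventually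
    (ball_mem_nhds z₀ hU.radius_pos)] with k hk
  have hlifts := hf.hasConvexLifts_iterate_stableSet (nk k)
  have hkW : f^[nk k] w ∈ W := hsW ⟨hk, fun h ↦
    hU.notMem (h ▸ hf.stableSet_subset (hlifts.mapsTo (hs hw)))⟩
  have hcomp := hlifts.connectedComponentIn (hs hw)
  rwa [← connectedComponentIn_eq hkW] at hcomp

theorem eventually_isSimplyConnected_insert_image (hU : IsPuncture U z₀ s b)
    (hs : ball z₀ s \ {z₀} ⊆ stableSet f U') (hw : w ∈ stableSet f U') {nk : ℕ → ℕ}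
    (hnk : Tendsto nk atTop atTop)
    (hconv : TendstoLocallyUniformlyOn (fun k ↦ f^[nk k]) (fun _ ↦ z₀) atTop
      (connectedComponentIn (stableSet f U') w)) :
    ∀ᶠ k in atTop, IsSimplyConnected
      (insert z₀ (f^[nk k] '' connectedComponentIn (stableSet f U') w)) := by
  filter_upwards [(hconv.tendsto_at (mem_connectedComponentIn hw)).eventually
    (ball_mem_nhds z₀ hU.radius_pos)] with k hk
  rw [hf.image_connectedComponentIn_stableSet hw]
  exact hf.isSimplyConnected_insert_connectedComponentIn hU hs
    ⟨hk, fun h ↦ hU.notMem (h ▸ hf.stableSet_subset (hf.mapsTo_iterate_stableSet (nk k) hw))⟩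
    (hf.tendstoLocallyUniformlyOn_iterate_sub hw hnk hconv (nk k))

end ExpandingCovering

theorem tendstoLocallyUniformlyOn_const_of_forall_isCompact {ι : Type*} {F : ι → ℂ → ℂ}
    {l : Filter ι} {W : Set ℂ} {z₀ : ℂ} (hW : IsOpen W)
    (h : ∀ K ⊆ W, IsCompact K → ∀ ε > (0 : ℝ), ∀ᶠ k in l, ∀ z ∈ K, dist (F k z) z₀ < ε) :
    TendstoLocallyUniformlyOn F (fun _ ↦ z₀) l W :=
  (tendstoLocallyUniformlyOn_iff_forall_isCompact hW).2 fun K hKW hK ↦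
    Metric.tendstoUniformlyOn_iff.2 fun ε hε ↦ by
      simpa only [dist_comm z₀] using h K hKW hK ε hε

/-- **Theorem (Statement 16).** Let `U' ⊆ U ⊆ ℂ` be hyperbolic open sets, `f : U' → U` a
holomorphic covering map, and let `𝒲` be the set of points of `U'` having a neighborhood whose
whole forward orbit stays in `U'`. Then (1) `d_U(fⁿ(w), U∖𝒲) → ∞` for every `w ∈ 𝒲`; and
(2) if `W` is the component of `𝒲` containing `w` and `f^{n_k}|_W → z₀` locally uniformly,
then `z₀ ∉ U`, and if moreover `z₀` is an isolated point of `ℂ∖U`, then `f^{n_k}(W) ∪ {z₀}`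
is simply connected for large `k` and some iterate `f^p` extends holomorphically to `z₀` with
a superattracting fixed point there. -/
theorem maximal_expansion_theorem
    (U U' : Set ℂ)
    (hU : HyperbolicOpen U) (hU' : HyperbolicOpen U') (hsub : U' ⊆ U)
    (f : ℂ → ℂ)
    (hfhol : DifferentiableOn ℂ f U')
    (hcov : ∃ h : MapsTo f U' U, IsCoveringMap (MapsTo.restrict f U' U h))
    (hsurj : f '' U' = U)
    (ρ : ℂ → ℝ) (hρ : IsHypDensity U ρ)
    (𝒲 : Set ℂ)
    (h𝒲 : 𝒲 = {z : ℂ | z ∈ U' ∧ ∃ N : Set ℂ, IsOpen N ∧ z ∈ N ∧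
      ∀ n : ℕ, f^[n] '' N ⊆ U'}) :
    (∀ w ∈ 𝒲,
      Tendsto (fun m : ℕ => hypDistToSet U ρ (f^[m] w) (U \ 𝒲)) atTop (𝓝 ⊤)) ∧
    (∀ w ∈ 𝒲, ∀ W : Set ℂ, W = connectedComponentIn 𝒲 w →
      ∀ nk : ℕ → ℕ, Tendsto nk atTop atTop →
      ∀ z₀ : ℂ,
        (∀ K : Set ℂ, K ⊆ W → IsCompact K → ∀ ε > (0 : ℝ), ∃ N : ℕ, ∀ k ≥ N, ∀ z ∈ K,
          dist (f^[nk k] z) z₀ < ε) →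
        z₀ ∉ U ∧
        ((∃ N ∈ 𝓝 z₀, N ∩ Uᶜ = {z₀}) →
          (∃ K₀ : ℕ, ∀ k ≥ K₀, SimplyConnectedSpace ↥(f^[nk k] '' W ∪ {z₀})) ∧
          ∃ p : ℕ, 1 ≤ p ∧ ∃ g : ℂ → ℂ, AnalyticAt ℂ g z₀ ∧ g z₀ = z₀ ∧
            deriv g z₀ = 0 ∧ ∀ᶠ z in 𝓝[≠] z₀, g z = f^[p] z)) := by
  subst h𝒲
  obtain ⟨_, hcov⟩ := hcov
  have hf : ExpandingCovering f U' U :=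
    ⟨hsub, hasConvexLifts_of_isCoveringMap hU'.1 hU.1 hfhol hcov⟩
  refine ⟨fun w hw ↦ hf.tendsto_hypDistToSet hρ hw, ?_⟩
  rintro w hw _ rfl nk hnk z₀ hlim
  have hW : IsOpen (connectedComponentIn (stableSet f U') w) :=
    isOpen_stableSet.connectedComponentIn
  have hconv := tendstoLocallyUniformlyOn_const_of_forall_isCompact hW fun K hKW hK ε hε ↦
    eventually_atTop.2 (hlim K hKW hK ε hε)
  obtain ⟨ψ, hψ, -⟩ := exists_discCover hU.1 hρ (hf.stableSet_subset hw)
  refine ⟨hf.notMem_of_tendstoLocallyUniformlyOn hψ hW (connectedComponentIn_subset _ _)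
    (mem_connectedComponentIn hw) hconv, fun hiso ↦ ?_⟩
  obtain ⟨r, b, hz⟩ := hU.exists_isPuncture hiso
  obtain ⟨m, s, hm, hs, hsr, hsub', hfs⟩ := hf.exists_mapsTo_sphere hρ hw hnk hconv hz
  have hG := contractingExtension_of_mapsTo_sphere hf hz hm hs hsr hsub' hfs
  have hball : ball z₀ s ∈ 𝓝 z₀ := ball_mem_nhds z₀ hs
  have hstable := hG.subset_stableSet hf hz.notMem
  have hzs : IsPuncture U z₀ s b :=
    hz.of_subset subset_rfl hs hsr.le (hstable.trans hf.stableSet_subset)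
  refine ⟨eventually_atTop.1 ?_, m, Nat.one_le_iff_ne_zero.2 hm, _,
    hG.differentiableOn.analyticAt hball, hG.apply_self, hG.deriv_eq_zero hf hz.notMem hρ, ?_⟩
  · filter_upwards [hf.eventually_isSimplyConnected_insert_image hzs hstable hw hnk hconv] with k hk
    exact union_singleton (a := z₀) ▸ hk
  · filter_upwards [mem_nhdsWithin_of_mem_nhds hball, self_mem_nhdsWithin] with z hzs hz0
    exact hG.eqOn ⟨hzs, hz0⟩
end
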